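/- Let G be a group, k a commutative G-ring, and ε ∈ k invertible. The morphism Tor_q^{GR_{n-1}(ε)}(𝟙,𝟙) → Tor_q^{GR_n(ε)}(𝟙,𝟙) induced by the inclusion GR_{n-1}(ε) → GR_n(ε) is an isomorphism for n ≥ 2q+2. -/

import Mathlib

open scoped TensorProduct

noncomputable section

/-! ### Bar-complex homology of an augmented algebra

For a `k`-algebra `A` with augmentation `ε : A →ₐ[k] k` (the algebra map corresponding to
the trivial module `𝟙 = k`), we form the (unnormalized) bar complex `C_q = A^{⊗ q}`
(tensors over `k`), with the usual differential
`d(a₁⊗…⊗a_q) = ε(a₁)(a₂⊗…) + Σ (-1)^i (…a_i a_{i+1}…) + (-1)^q ε(a_q)(a₁⊗…)`,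
whose homology is `Tor_*^A(𝟙,𝟙)`. -/

/-- The modules `A^{⊗ q}` of the bar complex. -/
def barC (k : Type) [CommRing k] (A : Type) [Ring A] [Algebra k A] : ℕ → ModuleCat k
  | 0 => ModuleCat.of k k
  | (q + 1) => ModuleCat.of k (A ⊗[k] (barC k A q))

variable (k : Type) [CommRing k] (A : Type) [Ring A] [Algebra k A] (ε : A →ₐ[k] k)

/-- Left multiplication of `A` on the leftmost bar factor (via `ε` in degree `0`). -/
def barAct : ∀ q : ℕ, A →ₗ[k] ((barC k A q : Type) →ₗ[k] (barC k A q : Type))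
  | 0 => (LinearMap.lsmul k k).comp ε.toLinearMap
  | (q + 1) =>
    show A →ₗ[k] ((A ⊗[k] (barC k A q : Type)) →ₗ[k] (A ⊗[k] (barC k A q : Type))) from
    { toFun := fun a => TensorProduct.map (LinearMap.mulLeft k a) LinearMap.id
      map_add' := by
        intro a b
        refine TensorProduct.ext' fun x y => ?_
        simp [add_mul, TensorProduct.add_tmul]
      map_smul' := by
        intro c a
        refine TensorProduct.ext' fun x y => ?_
        simp [TensorProduct.smul_tmul', smul_mul_assoc] }

/-- All terms of the bar differential except the first face. -/
def barB : ∀ q : ℕ, ((A ⊗[k] (barC k A q : Type)) →ₗ[k] (barC k A q : Type))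
  | 0 => - TensorProduct.lift ((LinearMap.lsmul k (barC k A 0 : Type)).comp ε.toLinearMap)
  | (q + 1) =>
    show (A ⊗[k] (A ⊗[k] (barC k A q : Type))) →ₗ[k] (A ⊗[k] (barC k A q : Type)) from
    TensorProduct.lift (LinearMap.mk₂ k
      (fun (a : A) (x : A ⊗[k] (barC k A q : Type)) =>
        -((show A →ₗ[k] ((A ⊗[k] (barC k A q : Type)) →ₗ[k] (A ⊗[k] (barC k A q : Type))) from
            barAct k A ε (q + 1)) a x) - a ⊗ₜ[k] (barB q x))
      (by intro a b x
          have key : ∀ f : A →ₗ[k] ((A ⊗[k] (barC k A q : Type)) →ₗ[k] (A ⊗[k] (barC k A q : Type))),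
              -(f (a + b) x) - (a + b) ⊗ₜ[k] (barB q x)
                = (-(f a x) - a ⊗ₜ[k] (barB q x)) + (-(f b x) - b ⊗ₜ[k] (barB q x)) := by
            intro f
            simp only [map_add, LinearMap.add_apply, TensorProduct.add_tmul]
            abel
          exact key (barAct k A ε (q + 1)))
      (by intro c a x
          have key : ∀ f : A →ₗ[k] ((A ⊗[k] (barC k A q : Type)) →ₗ[k] (A ⊗[k] (barC k A q : Type))),
              -(f (c • a) x) - (c • a) ⊗ₜ[k] (barB q x)
                = c • (-(f a x) - a ⊗ₜ[k] (barB q x)) := by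
            intro f
            simp only [map_smul, LinearMap.smul_apply, smul_sub, smul_neg,
              TensorProduct.smul_tmul']
          exact key (barAct k A ε (q + 1)))
      (by intro a x y
          simp only [map_add, LinearMap.map_add, TensorProduct.tmul_add]
          try abel)
      (by intro c a x
          simp only [map_smul, LinearMap.map_smul, TensorProduct.tmul_smul, smul_sub, smul_neg]
          try abel))

/-- The bar differential `C_{q+1} = A ⊗ C_q → C_q`. -/
def bard (q : ℕ) : (A ⊗[k] (barC k A q : Type)) →ₗ[k] (barC k A q : Type) :=
  TensorProduct.lift ((LinearMap.lsmul k (barC k A q : Type)).comp ε.toLinearMap)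
  + barB k A ε q

/-- Cycles of the bar complex. -/
def barCycles : ∀ q : ℕ, Submodule k (barC k A q : Type)
  | 0 => ⊤
  | (q + 1) =>
    show Submodule k (barC k A (q + 1) : Type) from LinearMap.ker (bard k A ε q)

/-- `Tor_q^A(𝟙, 𝟙)`, the homology of the algebra `A` with augmentation (trivial module) `ε`,
computed by the bar complex. -/
def barTor (q : ℕ) : Type :=
  (barCycles k A ε q) ⧸
    (Submodule.comap (barCycles k A ε q).subtype (LinearMap.range (bard k A ε q)))

instance (q : ℕ) : AddCommGroup (barTor k A ε q) :=
  inferInstanceAs (AddCommGroup ((barCycles k A ε q) ⧸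
    (Submodule.comap (barCycles k A ε q).subtype (LinearMap.range (bard k A ε q)))))

instance (q : ℕ) : Module k (barTor k A ε q) :=
  inferInstanceAs (Module k ((barCycles k A ε q) ⧸
    (Submodule.comap (barCycles k A ε q).subtype (LinearMap.range (bard k A ε q)))))

/-- The augmentation of a group algebra `k[G]`, corresponding to the trivial action of `G`
on `k`. -/
def groupAug (G : Type) [Group G] : MonoidAlgebra k G →ₐ[k] k :=
  MonoidAlgebra.lift k k G 1

/-- Group homology `H_*(G; k) = Tor_*^{k[G]}(k, k)` (with the trivial action on `k`). -/
abbrev groupTor (G : Type) [Group G] (q : ℕ) : Type :=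
  barTor k (MonoidAlgebra k G) (groupAug k G) q

section TorFunctoriality

variable (k : Type) [CommRing k]

/-- `barAct` in positive degrees, with its domain and codomain presented as tensor
products. -/
noncomputable abbrev barActT (A : Type) [Ring A] [Algebra k A] (ε : A →ₐ[k] k) (q : ℕ) :
    A →ₗ[k] ((A ⊗[k] (barC k A q : Type)) →ₗ[k] (A ⊗[k] (barC k A q : Type))) :=
  barAct k A ε (q + 1)

theorem barActT_tmul (A : Type) [Ring A] [Algebra k A] (ε : A →ₐ[k] k) (q : ℕ)
    (a b : A) (x : (barC k A q : Type)) :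
    barActT k A ε q a (b ⊗ₜ[k] x) = (a * b) ⊗ₜ[k] x := rfl

theorem barB_zero_apply (A : Type) [Ring A] [Algebra k A] (ε : A →ₐ[k] k)
    (a : A) (c : (barC k A 0 : Type)) :
    barB k A ε 0 (a ⊗ₜ[k] c) = -(ε a • c) := rfl

theorem barB_succ_apply (A : Type) [Ring A] [Algebra k A] (ε : A →ₐ[k] k) (q : ℕ)
    (a : A) (x : A ⊗[k] (barC k A q : Type)) :
    barB k A ε (q + 1) (a ⊗ₜ[k] x)
      = -(barActT k A ε q a x) - a ⊗ₜ[k] (barB k A ε q x) := by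
  rfl

variable {A₁ A₂ : Type} [Ring A₁] [Algebra k A₁] [Ring A₂] [Algebra k A₂]

/-- The chain map between bar complexes induced by an algebra map. -/
noncomputable def barMap (φ : A₁ →ₐ[k] A₂) :
    ∀ q : ℕ, (barC k A₁ q : Type) →ₗ[k] (barC k A₂ q : Type)
  | 0 => LinearMap.id
  | (q + 1) =>
    show (A₁ ⊗[k] (barC k A₁ q : Type)) →ₗ[k] (A₂ ⊗[k] (barC k A₂ q : Type)) from
      TensorProduct.map φ.toLinearMap (barMap φ q)

theorem barActT_comm (ε₁ : A₁ →ₐ[k] k) (ε₂ : A₂ →ₐ[k] k) (φ : A₁ →ₐ[k] A₂)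
    (q : ℕ) (a : A₁) :
    (barActT k A₂ ε₂ q (φ a)).comp (TensorProduct.map φ.toLinearMap (barMap k φ q))
      = (TensorProduct.map φ.toLinearMap (barMap k φ q)).comp (barActT k A₁ ε₁ q a) := by
  refine TensorProduct.ext' fun b y => ?_
  simp only [LinearMap.coe_comp, Function.comp_apply, TensorProduct.map_tmul]
  rw [barActT_tmul, barActT_tmul, TensorProduct.map_tmul]
  simp [map_mul]

theorem barB_comm (ε₁ : A₁ →ₐ[k] k) (ε₂ : A₂ →ₐ[k] k) (φ : A₁ →ₐ[k] A₂)
    (hφ : ε₂.comp φ = ε₁) : ∀ q : ℕ,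
    (barB k A₂ ε₂ q).comp (TensorProduct.map φ.toLinearMap (barMap k φ q))
      = (barMap k φ q).comp (barB k A₁ ε₁ q)
  | 0 => by
    have key : ∀ a : A₁, ε₂ (φ a) = ε₁ a := fun a => by
      have := AlgHom.congr_fun hφ a
      simpa using this
    refine TensorProduct.ext' fun a c => ?_
    simp only [LinearMap.coe_comp, Function.comp_apply, TensorProduct.map_tmul]
    rw [barB_zero_apply]
    show -(ε₂ (φ.toLinearMap a) • (barMap k φ 0 c)) = barMap k φ 0 (barB k A₁ ε₁ 0 (a ⊗ₜ[k] c))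
    rw [barB_zero_apply]
    show -(ε₂ (φ a) • c) = -(ε₁ a • c)
    rw [key a]
  | (q + 1) => by
    refine TensorProduct.ext' fun a (x : A₁ ⊗[k] (barC k A₁ q : Type)) => ?_
    have h1 := LinearMap.congr_fun (barActT_comm k ε₁ ε₂ φ q a) x
    simp only [LinearMap.coe_comp, Function.comp_apply] at h1
    have h2 := LinearMap.congr_fun (barB_comm ε₁ ε₂ φ hφ q) x
    simp only [LinearMap.coe_comp, Function.comp_apply] at h2
    refine (barB_succ_apply k A₂ ε₂ q (φ.toLinearMap a)
      (TensorProduct.map φ.toLinearMap (barMap k φ q) x)).trans ?_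
    refine Eq.trans ?_ (congrArg (TensorProduct.map φ.toLinearMap (barMap k φ q))
      (barB_succ_apply k A₁ ε₁ q a x).symm)
    show -(barActT k A₂ ε₂ q (φ.toLinearMap a)
            ((TensorProduct.map φ.toLinearMap (barMap k φ q)) x))
        - (φ.toLinearMap a) ⊗ₜ[k]
            (barB k A₂ ε₂ q ((TensorProduct.map φ.toLinearMap (barMap k φ q)) x))
      = TensorProduct.map φ.toLinearMap (barMap k φ q)
          (-(barActT k A₁ ε₁ q a x) - a ⊗ₜ[k] (barB k A₁ ε₁ q x))
    rw [map_sub, map_neg, TensorProduct.map_tmul]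
    simp only [AlgHom.toLinearMap_apply]
    rw [h1, h2]

/-- The chain map induced by an augmentation-preserving algebra map commutes with the
bar differential. -/
theorem barMap_comm (ε₁ : A₁ →ₐ[k] k) (ε₂ : A₂ →ₐ[k] k) (φ : A₁ →ₐ[k] A₂)
    (hφ : ε₂.comp φ = ε₁) (q : ℕ) :
    (bard k A₂ ε₂ q).comp (TensorProduct.map φ.toLinearMap (barMap k φ q))
      = (barMap k φ q).comp (bard k A₁ ε₁ q) := by
  have key : ∀ a : A₁, ε₂ (φ a) = ε₁ a := fun a => by
    have := AlgHom.congr_fun hφ a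
    simpa using this
  unfold bard
  rw [LinearMap.add_comp, LinearMap.comp_add, barB_comm k ε₁ ε₂ φ hφ q]
  congr 1
  refine TensorProduct.ext' fun a x => ?_
  simp only [LinearMap.coe_comp, Function.comp_apply, TensorProduct.map_tmul,
    TensorProduct.lift.tmul, LinearMap.lsmul_apply, AlgHom.toLinearMap_apply,
    LinearMap.map_smul]
  rw [key a]

theorem barMap_cycles (ε₁ : A₁ →ₐ[k] k) (ε₂ : A₂ →ₐ[k] k) (φ : A₁ →ₐ[k] A₂)
    (hφ : ε₂.comp φ = ε₁) (q : ℕ) :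
    ∀ x ∈ barCycles k A₁ ε₁ q, barMap k φ q x ∈ barCycles k A₂ ε₂ q := by
  intro x hx
  cases q with
  | zero => trivial
  | succ q =>
    show barMap k φ (q+1) x ∈ LinearMap.ker (bard k A₂ ε₂ q)
    have hx' : bard k A₁ ε₁ q x = 0 := hx
    have h := LinearMap.congr_fun (barMap_comm k ε₁ ε₂ φ hφ q) x
    simp only [LinearMap.coe_comp, Function.comp_apply] at h
    show bard k A₂ ε₂ q (TensorProduct.map φ.toLinearMap (barMap k φ q) x) = 0
    exact h.trans ((congrArg (barMap k φ q) hx').trans (map_zero _))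

/-- The map on `Tor_q(𝟙,𝟙)` induced by an augmentation-preserving algebra map. -/
noncomputable def torMap (ε₁ : A₁ →ₐ[k] k) (ε₂ : A₂ →ₐ[k] k) (φ : A₁ →ₐ[k] A₂)
    (hφ : ε₂.comp φ = ε₁) (q : ℕ) :
    barTor k A₁ ε₁ q →ₗ[k] barTor k A₂ ε₂ q := by
  refine Submodule.mapQ _ _
    ((barMap k φ q).restrict (barMap_cycles k ε₁ ε₂ φ hφ q)) ?_
  intro x hx
  simp only [Submodule.mem_comap, LinearMap.mem_range] at hx ⊢
  obtain ⟨y, hy⟩ := hx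
  refine ⟨TensorProduct.map φ.toLinearMap (barMap k φ q) y, ?_⟩
  have h := LinearMap.congr_fun (barMap_comm k ε₁ ε₂ φ hφ q) y
  simp only [LinearMap.coe_comp, Function.comp_apply] at h
  rw [h, hy]
  rfl

end TorFunctoriality

section GRsection

/-! The `G`-equivariant rook algebra `GR_n(ε)`: generators `s i` (transposition of
strands `i, i+1`), `p j` (deleted strand `j`) and `t g j` (identity with strand `j`
labelled `g : G`); a contractible middle component contributes the factor `ε`. -/

inductive GRGen (n : ℕ) (G : Type) : Type
  | s : Fin (n - 1) → GRGen n G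
  | p : Fin n → GRGen n G
  | t : G → Fin n → GRGen n G

variable (k G : Type) [CommRing k] [Group G] (n : ℕ) (ε : k)

abbrev GRs (i : Fin (n - 1)) : FreeAlgebra k (GRGen n G) := FreeAlgebra.ι k (GRGen.s i)
abbrev GRp (j : Fin n) : FreeAlgebra k (GRGen n G) := FreeAlgebra.ι k (GRGen.p j)
abbrev GRt (g : G) (j : Fin n) : FreeAlgebra k (GRGen n G) := FreeAlgebra.ι k (GRGen.t g j)

/-- The diagrammatic relations. -/
inductive GRRel : FreeAlgebra k (GRGen n G) → FreeAlgebra k (GRGen n G) → Prop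
  | s_sq (i : Fin (n - 1)) :
      GRRel (GRs k G n i * GRs k G n i) (1)
  | s_braid (i j : Fin (n - 1)) (h : (j : ℕ) = (i : ℕ) + 1) :
      GRRel (GRs k G n i * GRs k G n j * GRs k G n i) (GRs k G n j * GRs k G n i * GRs k G n j)
  | ss_comm (i j : Fin (n - 1)) (h : (i : ℕ) + 1 < (j : ℕ)) :
      GRRel (GRs k G n i * GRs k G n j) (GRs k G n j * GRs k G n i)
  | p_sq (j : Fin n) :
      GRRel (GRp k G n j * GRp k G n j) (ε • GRp k G n j)
  | pp_comm (j l : Fin n) (h : (j : ℕ) < (l : ℕ)) :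
      GRRel (GRp k G n j * GRp k G n l) (GRp k G n l * GRp k G n j)
  | sp_comm (i : Fin (n - 1)) (l : Fin n) (h : (l : ℕ) ≠ (i : ℕ) ∧ (l : ℕ) ≠ (i : ℕ) + 1) :
      GRRel (GRs k G n i * GRp k G n l) (GRp k G n l * GRs k G n i)
  | sp_slide (i : Fin (n - 1)) (j j' : Fin n) (h : (j : ℕ) = (i : ℕ)) (h' : (j' : ℕ) = (i : ℕ) + 1) :
      GRRel (GRs k G n i * GRp k G n j) (GRp k G n j' * GRs k G n i)
  | sp_slide' (i : Fin (n - 1)) (j j' : Fin n) (h : (j : ℕ) = (i : ℕ)) (h' : (j' : ℕ) = (i : ℕ) + 1) :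
      GRRel (GRs k G n i * GRp k G n j') (GRp k G n j * GRs k G n i)
  | psp (i : Fin (n - 1)) (j j' : Fin n) (h : (j : ℕ) = (i : ℕ)) (h' : (j' : ℕ) = (i : ℕ) + 1) :
      GRRel (GRp k G n j * GRs k G n i * GRp k G n j) (GRp k G n j * GRp k G n j')
  | t_mul (g h' : G) (j : Fin n) :
      GRRel (GRt k G n g j * GRt k G n h' j) (GRt k G n (g * h') j)
  | t_one (j : Fin n) :
      GRRel (GRt k G n 1 j) (1)
  | tt_comm (g h' : G) (j l : Fin n) (h : j ≠ l) :
      GRRel (GRt k G n g j * GRt k G n h' l) (GRt k G n h' l * GRt k G n g j)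
  | st_comm (g : G) (i : Fin (n - 1)) (l : Fin n) (h : (l : ℕ) ≠ (i : ℕ) ∧ (l : ℕ) ≠ (i : ℕ) + 1) :
      GRRel (GRs k G n i * GRt k G n g l) (GRt k G n g l * GRs k G n i)
  | st_slide (g : G) (i : Fin (n - 1)) (j j' : Fin n) (h : (j : ℕ) = (i : ℕ)) (h' : (j' : ℕ) = (i : ℕ) + 1) :
      GRRel (GRs k G n i * GRt k G n g j) (GRt k G n g j' * GRs k G n i)
  | st_slide' (g : G) (i : Fin (n - 1)) (j j' : Fin n) (h : (j : ℕ) = (i : ℕ)) (h' : (j' : ℕ) = (i : ℕ) + 1) :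
      GRRel (GRs k G n i * GRt k G n g j') (GRt k G n g j * GRs k G n i)
  | tp_absorb (g : G) (j : Fin n) :
      GRRel (GRt k G n g j * GRp k G n j) (GRp k G n j)
  | pt_absorb (g : G) (j : Fin n) :
      GRRel (GRp k G n j * GRt k G n g j) (GRp k G n j)
  | tp_comm (g : G) (j l : Fin n) (h : j ≠ l) :
      GRRel (GRt k G n g j * GRp k G n l) (GRp k G n l * GRt k G n g j)

/-- The diagram algebra: the quotient of the free algebra on the diagram generators by
the diagrammatic relations. -/
abbrev GRAlg : Type := RingQuot (GRRel k G n ε)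

/-- The augmentation corresponding to the trivial module `𝟙`: a diagram acts by `1`
if it has `n` left-to-right connections, and by `0` otherwise. -/
noncomputable def GRaug : GRAlg k G n ε →ₐ[k] k :=
  RingQuot.liftAlgHom k ⟨FreeAlgebra.lift k
      (fun x => match x with
        | GRGen.s _ => (1 : k)
        | GRGen.p _ => (0 : k)
        | GRGen.t _ _ => (1 : k)),
    by rintro x y h
       induction h <;>
         simp [GRs, GRp, GRt, FreeAlgebra.lift_ι_apply]⟩

end GRsection

section GRinclsection

variable (k G : Type) [CommRing k] [Group G] (n : ℕ) (ε : k)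

/-- Extending a diagram by an extra horizontal strand at the bottom, on generators. -/
def GRGenMap : GRGen (n - 1) G → GRGen n G
  | .s i => .s (Fin.castLE (by omega) i)
  | .p i => .p (Fin.castLE (by omega) i)
  | .t g j => .t g (Fin.castLE (by omega) j)

/-- The diagrammatic relations are preserved by the extension of diagrams. -/
theorem GRRel_map {x y : FreeAlgebra k (GRGen (n - 1) G)} (h : GRRel k G (n - 1) ε x y) :
    GRRel k G n ε
      ((FreeAlgebra.lift k fun g => FreeAlgebra.ι k (GRGenMap G n g)) x)
      ((FreeAlgebra.lift k fun g => FreeAlgebra.ι k (GRGenMap G n g)) y) := by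
  induction h with
  | s_sq i =>
    simp only [map_mul, map_one, map_smul, FreeAlgebra.lift_ι_apply, GRGenMap]
    exact GRRel.s_sq _
  | s_braid i j h =>
    simp only [map_mul, map_one, map_smul, FreeAlgebra.lift_ι_apply, GRGenMap]
    exact GRRel.s_braid _ _ (by simp_all [Fin.ext_iff, Fin.coe_castLE] <;> omega)
  | ss_comm i j h =>
    simp only [map_mul, map_one, map_smul, FreeAlgebra.lift_ι_apply, GRGenMap]
    exact GRRel.ss_comm _ _ (by simp_all [Fin.ext_iff, Fin.coe_castLE] <;> omega)
  | p_sq j =>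
    simp only [map_mul, map_one, map_smul, FreeAlgebra.lift_ι_apply, GRGenMap]
    exact GRRel.p_sq _
  | pp_comm j l h =>
    simp only [map_mul, map_one, map_smul, FreeAlgebra.lift_ι_apply, GRGenMap]
    exact GRRel.pp_comm _ _ (by simp_all [Fin.ext_iff, Fin.coe_castLE] <;> omega)
  | sp_comm i l h =>
    simp only [map_mul, map_one, map_smul, FreeAlgebra.lift_ι_apply, GRGenMap]
    exact GRRel.sp_comm _ _ (by simp_all [Fin.ext_iff, Fin.coe_castLE] <;> omega)
  | sp_slide i j j' h h' =>
    simp only [map_mul, map_one, map_smul, FreeAlgebra.lift_ι_apply, GRGenMap]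
    exact GRRel.sp_slide _ _ _ (by simp_all [Fin.ext_iff, Fin.coe_castLE] <;> omega) (by simp_all [Fin.ext_iff, Fin.coe_castLE] <;> omega)
  | sp_slide' i j j' h h' =>
    simp only [map_mul, map_one, map_smul, FreeAlgebra.lift_ι_apply, GRGenMap]
    exact GRRel.sp_slide' _ _ _ (by simp_all [Fin.ext_iff, Fin.coe_castLE] <;> omega) (by simp_all [Fin.ext_iff, Fin.coe_castLE] <;> omega)
  | psp i j j' h h' =>
    simp only [map_mul, map_one, map_smul, FreeAlgebra.lift_ι_apply, GRGenMap]
    exact GRRel.psp _ _ _ (by simp_all [Fin.ext_iff, Fin.coe_castLE] <;> omega) (by simp_all [Fin.ext_iff, Fin.coe_castLE] <;> omega)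
  | t_mul g h' j =>
    simp only [map_mul, map_one, map_smul, FreeAlgebra.lift_ι_apply, GRGenMap]
    exact GRRel.t_mul _ _ _
  | t_one j =>
    simp only [map_mul, map_one, map_smul, FreeAlgebra.lift_ι_apply, GRGenMap]
    exact GRRel.t_one _
  | tt_comm g h' j l h =>
    simp only [map_mul, map_one, map_smul, FreeAlgebra.lift_ι_apply, GRGenMap]
    exact GRRel.tt_comm _ _ _ _ (by simp_all [Fin.ext_iff, Fin.coe_castLE] <;> omega)
  | st_comm g i l h =>
    simp only [map_mul, map_one, map_smul, FreeAlgebra.lift_ι_apply, GRGenMap]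
    exact GRRel.st_comm _ _ _ (by simp_all [Fin.ext_iff, Fin.coe_castLE] <;> omega)
  | st_slide g i j j' h h' =>
    simp only [map_mul, map_one, map_smul, FreeAlgebra.lift_ι_apply, GRGenMap]
    exact GRRel.st_slide _ _ _ _ (by simp_all [Fin.ext_iff, Fin.coe_castLE] <;> omega) (by simp_all [Fin.ext_iff, Fin.coe_castLE] <;> omega)
  | st_slide' g i j j' h h' =>
    simp only [map_mul, map_one, map_smul, FreeAlgebra.lift_ι_apply, GRGenMap]
    exact GRRel.st_slide' _ _ _ _ (by simp_all [Fin.ext_iff, Fin.coe_castLE] <;> omega) (by simp_all [Fin.ext_iff, Fin.coe_castLE] <;> omega)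
  | tp_absorb g j =>
    simp only [map_mul, map_one, map_smul, FreeAlgebra.lift_ι_apply, GRGenMap]
    exact GRRel.tp_absorb _ _
  | pt_absorb g j =>
    simp only [map_mul, map_one, map_smul, FreeAlgebra.lift_ι_apply, GRGenMap]
    exact GRRel.pt_absorb _ _
  | tp_comm g j l h =>
    simp only [map_mul, map_one, map_smul, FreeAlgebra.lift_ι_apply, GRGenMap]
    exact GRRel.tp_comm _ _ _ (by simp_all [Fin.ext_iff, Fin.coe_castLE] <;> omega)

/-- The inclusion of diagram algebras given by adding an extra horizontal strand
(labelled by `1 ∈ G` in the equivariant case) at the bottom of a diagram. -/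
noncomputable def GRincl : GRAlg k G (n - 1) ε →ₐ[k] GRAlg k G n ε :=
  RingQuot.liftAlgHom k ⟨(RingQuot.mkAlgHom k (GRRel k G n ε)).comp
      (FreeAlgebra.lift k (fun x => FreeAlgebra.ι k (GRGenMap G n x))),
    by intro x y h
       simp only [AlgHom.coe_comp, Function.comp_apply]
       exact RingQuot.mkAlgHom_rel k (GRRel_map k G n ε h)⟩

/-- The inclusion is compatible with the augmentations (trivial modules). -/
theorem GRaug_incl : (GRaug k G n ε).comp (GRincl k G n ε) = GRaug k G (n - 1) ε := by
  apply RingQuot.ringQuot_ext'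
  apply FreeAlgebra.hom_ext
  funext x
  cases x <;>
    simp [GRincl, GRaug, GRGenMap, Function.comp, RingQuot.liftAlgHom_mkAlgHom_apply,
      FreeAlgebra.lift_ι_apply]

end GRinclsection

noncomputable section
namespace GRP

/-! ### Abstract complexes, elementwise homology predicates -/

/-- A non-negatively graded sequence of modules with differentials. -/
structure Cx (K : Type) [CommRing K] where
  X : ℕ → Type
  [ac : ∀ q, AddCommGroup (X q)]
  [mod : ∀ q, Module K (X q)]
  d : ∀ q, X (q + 1) →ₗ[K] X q

attribute [instance] Cx.ac Cx.mod

section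
variable {K : Type} [CommRing K]

/-- cycles -/
def Cx.cyc (C : Cx K) : ∀ q, Submodule K (C.X q)
  | 0 => ⊤
  | (q + 1) => LinearMap.ker (C.d q)

/-- chain maps -/
structure CxHom (C C' : Cx K) where
  f : ∀ q, C.X q →ₗ[K] C'.X q
  comm : ∀ q x, f q (C.d q x) = C'.d q (f (q + 1) x)

variable {C C' C'' : Cx K}

theorem CxHom.cyc (f : CxHom C C') (q : ℕ) {z : C.X q} (hz : z ∈ C.cyc q) :
    f.f q z ∈ C'.cyc q := by
  cases q with
  | zero => trivial
  | succ q =>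
    have hz' : C.d q z = 0 := hz
    show C'.d q (f.f (q + 1) z) = 0
    rw [← f.comm, hz', map_zero]

def CxHom.comp (g : CxHom C' C'') (f : CxHom C C') : CxHom C C'' where
  f q := (g.f q).comp (f.f q)
  comm q x := by simp [f.comm, g.comm]

def CxHom.id (C : Cx K) : CxHom C C where
  f q := LinearMap.id
  comm q x := rfl

theorem CxHom.ext' {f g : CxHom C C'} (h : ∀ q, f.f q = g.f q) : f = g := by
  cases f; cases g; congr; funext q; exact h q

def HEpi (f : CxHom C C') (q : ℕ) : Prop :=
  ∀ z' ∈ C'.cyc q, ∃ z ∈ C.cyc q, ∃ y, f.f q z = z' + C'.d q y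

def HInj (f : CxHom C C') (q : ℕ) : Prop :=
  ∀ z ∈ C.cyc q, ∀ y, f.f q z = C'.d q y → ∃ y, z = C.d q y

def HZero (f : CxHom C C') (q : ℕ) : Prop :=
  ∀ z ∈ C.cyc q, ∃ y, f.f q z = C'.d q y

/-- equality on homology -/
def HEq (f g : CxHom C C') (q : ℕ) : Prop :=
  ∀ z ∈ C.cyc q, ∃ y, f.f q z = g.f q z + C'.d q y

theorem HEq.symm {f g : CxHom C C'} {q : ℕ} (h : HEq f g q) : HEq g f q := by
  intro z hz
  obtain ⟨y, hy⟩ := h z hz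
  exact ⟨-y, by rw [hy, map_neg]; abel⟩

theorem HEq.trans {f g h : CxHom C C'} {q : ℕ} (h1 : HEq f g q) (h2 : HEq g h q) :
    HEq f h q := by
  intro z hz
  obtain ⟨y, hy⟩ := h1 z hz
  obtain ⟨y', hy'⟩ := h2 z hz
  exact ⟨y' + y, by rw [hy, hy', map_add]; abel⟩

theorem HEpi.congr {f g : CxHom C C'} {q : ℕ} (h : HEq f g q) (hf : HEpi f q) : HEpi g q := by
  intro z' hz'
  obtain ⟨z, hz, y, hy⟩ := hf z' hz'
  obtain ⟨y', hy'⟩ := h z hz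
  refine ⟨z, hz, y - y', ?_⟩
  rw [map_sub, ← sub_eq_iff_eq_add.mpr hy', hy]; abel

theorem HInj.congr {f g : CxHom C C'} {q : ℕ} (h : HEq f g q) (hf : HInj f q) : HInj g q := by
  intro z hz y hy
  obtain ⟨y', hy'⟩ := h z hz
  exact hf z hz (y + y') (by rw [hy', hy, map_add])

theorem HEpi.comp {g : CxHom C' C''} {f : CxHom C C'} {q : ℕ} (hg : HEpi g q) (hf : HEpi f q) :
    HEpi (g.comp f) q := by
  intro z' hz'
  obtain ⟨z, hz, y, hy⟩ := hg z' hz'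
  obtain ⟨x, hx, w, hw⟩ := hf z hz
  refine ⟨x, hx, y + g.f _ w, ?_⟩
  show g.f q (f.f q x) = _
  rw [hw, map_add, hy, g.comm, map_add]; abel

theorem HInj.comp {g : CxHom C' C''} {f : CxHom C C'} {q : ℕ} (hg : HInj g q) (hf : HInj f q) :
    HInj (g.comp f) q := by
  intro z hz y hy
  obtain ⟨y', hy'⟩ := hg _ (f.cyc q hz) y hy
  exact hf z hz y' hy'

theorem HEpi.of_comp {g : CxHom C' C''} {f : CxHom C C'} {q : ℕ} (h : HEpi (g.comp f) q) :
    HEpi g q := by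
  intro z' hz'
  obtain ⟨z, hz, y, hy⟩ := h z' hz'
  exact ⟨f.f q z, f.cyc q hz, y, hy⟩

theorem HInj.of_comp {g : CxHom C' C''} {f : CxHom C C'} {q : ℕ} (h : HInj (g.comp f) q) :
    HInj f q := by
  intro z hz y hy
  refine h z hz (g.f _ y) ?_
  show g.f q (f.f q z) = _
  rw [hy, g.comm]

theorem HEpi.of_comp_inj {g : CxHom C' C''} {f : CxHom C C'} {q : ℕ} (h : HEpi (g.comp f) q)
    (hg : HInj g q) : HEpi f q := by
  intro z' hz'
  obtain ⟨z, hz, y, hy⟩ := h _ (g.cyc q hz')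
  have h1 : f.f q z - z' ∈ C'.cyc q := Submodule.sub_mem _ (f.cyc q hz) hz'
  obtain ⟨w, hw⟩ := hg _ h1 y (by
    rw [map_sub]; change g.f q (f.f q z) = _ at hy; rw [hy]; abel)
  exact ⟨z, hz, w, by rw [← hw]; abel⟩

theorem HInj.of_comp_epi {g : CxHom C' C''} {f : CxHom C C'} {q : ℕ} (h : HInj (g.comp f) q)
    (hf : HEpi f q) : HInj g q := by
  intro z hz y hy
  obtain ⟨x, hx, w, hw⟩ := hf z hz
  obtain ⟨v, hv⟩ := h x hx (y + g.f _ w) (by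
    show g.f q (f.f q x) = _
    rw [hw, map_add, hy, g.comm, map_add])
  refine ⟨f.f _ v - w, ?_⟩
  rw [map_sub, ← f.comm, ← hv, hw]; abel

theorem HEpi.id (q : ℕ) : HEpi (CxHom.id C) q := fun z hz => ⟨z, hz, 0, by simp [CxHom.id]⟩
theorem HInj.id (q : ℕ) : HInj (CxHom.id C) q := fun _ _ y hy => ⟨y, hy⟩

theorem HZero.of_comp_epi {g : CxHom C' C''} {f : CxHom C C'} {q : ℕ} (h : HZero (g.comp f) q)
    (hf : HEpi f q) : HZero g q := by
  intro z hz
  obtain ⟨x, hx, w, hw⟩ := hf z hz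
  obtain ⟨v, hv⟩ := h x hx
  refine ⟨v - g.f _ w, ?_⟩
  have : z = f.f q x - C'.d q w := by rw [hw]; abel
  rw [this, map_sub, g.comm, map_sub]
  change g.f q (f.f q x) = _ at hv
  rw [hv]

/-! ### The double complex argument -/

section DC
variable (D : ℕ → Cx K) (δ : ∀ P, CxHom (D (P + 1)) (D P))

/-- vanishing of the homology of the kernel subcomplex -/
def PE (i P : ℕ) : Prop :=
  ∀ z ∈ (D (P + 1)).cyc i, (δ P).f i z = 0 → ∃ y, (δ P).f (i + 1) y = 0 ∧ z = (D (P + 1)).d i y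

/-- injectivity on homology of the kernel subcomplex -/
def PO (i P : ℕ) : Prop :=
  ∀ z ∈ (D (P + 1)).cyc i, (δ P).f i z = 0 → ∀ u, z = (D (P + 1)).d i u →
    ∃ y, (δ P).f (i + 1) y = 0 ∧ z = (D (P + 1)).d i y

/-- previous degree version of `PE` -/
def PE' (P : ℕ) : ℕ → Prop
  | 0 => True
  | (i + 1) => PE D δ i P
def PO' (P : ℕ) : ℕ → Prop
  | 0 => True
  | (i + 1) => PO D δ i P

variable (dd : ∀ P q x, (D P).d q ((D P).d (q + 1) x) = 0)

theorem dcyc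
    (dd : ∀ P q x, (D P).d q ((D P).d (q + 1) x) = 0) (P q : ℕ) (x : (D P).X (q + 1)) : (D P).d q x ∈ (D P).cyc q := by
  cases q with
  | zero => trivial
  | succ q => exact dd P q x

theorem PE'.toPO' {P i : ℕ} (h : PE' D δ P i) : PO' D δ P i := by
  cases i with
  | zero => trivial
  | succ i => exact fun z hz h0 _ _ => h z hz h0

/-- lifting of cycles -/
theorem lift_cycle
    (dd : ∀ P q x, (D P).d q ((D P).d (q + 1) x) = 0) {P i : ℕ} (h : PO' D δ P i) (z : (D P).X i) (hz : z ∈ (D P).cyc i)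
    (hs : ∃ y, (δ P).f i y = z) : ∃ y ∈ (D (P + 1)).cyc i, (δ P).f i y = z := by
  obtain ⟨y, hy⟩ := hs
  cases i with
  | zero => exact ⟨y, trivial, hy⟩
  | succ i =>
    have hz' : (D P).d i z = 0 := hz
    obtain ⟨y', h1, h2⟩ := h ((D (P + 1)).d i y) (dcyc D dd _ _ _)
      (by rw [(δ P).comm, hy, hz']) y rfl
    refine ⟨y - y', ?_, by rw [map_sub, hy, h1, sub_zero]⟩
    show (D (P + 1)).d i (y - y') = 0
    rw [map_sub, h2, sub_self]

variable (δδ : ∀ P q x, (δ P).f q ((δ (P + 1)).f q x) = 0)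

theorem PE_of
    (dd : ∀ P q x, (D P).d q ((D P).d (q + 1) x) = 0)
    (δδ : ∀ P q x, (δ P).f q ((δ (P + 1)).f q x) = 0) {P i : ℕ} (hex : ∀ z, (δ P).f i z = 0 → ∃ y, (δ (P + 1)).f i y = z)
    (hepi : HEpi (δ (P + 2)) i) (hO : PO' D δ (P + 1) i) : PE D δ i P := by
  intro z hz h0
  obtain ⟨y, hy, hyz⟩ := lift_cycle D δ dd hO z hz (hex z h0)
  obtain ⟨x, hx, v, hv⟩ := hepi y hy
  refine ⟨-(δ (P + 1)).f (i + 1) v, by rw [map_neg, δδ, neg_zero], ?_⟩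
  have h2 := congrArg ((δ (P + 1)).f i) hv
  rw [δδ, map_add, hyz, (δ (P + 1)).comm] at h2
  rw [map_neg]; exact eq_neg_of_add_eq_zero_left h2.symm

theorem PO_of
    (dd : ∀ P q x, (D P).d q ((D P).d (q + 1) x) = 0)
    (δδ : ∀ P q x, (δ P).f q ((δ (P + 1)).f q x) = 0) {P i : ℕ} (hex : ∀ z, (δ P).f i z = 0 → ∃ y, (δ (P + 1)).f i y = z)
    (hinj : HInj (δ (P + 1)) i) (hE : PE' D δ (P + 1) i) : PO D δ i P := by
  intro z hz h0 u hu
  obtain ⟨y, hy, hyz⟩ := lift_cycle D δ dd (PE'.toPO' D δ hE) z hz (hex z h0)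
  obtain ⟨v, hv⟩ := hinj y hy u (by rw [hyz, hu])
  refine ⟨(δ (P + 1)).f (i + 1) v, δδ _ _ _, ?_⟩
  rw [← (δ (P + 1)).comm, ← hv, hyz]

theorem epi_of
    (dd : ∀ P q x, (D P).d q ((D P).d (q + 1) x) = 0) {q : ℕ} (hs : ∀ z, ∃ y, (δ 0).f q y = z) (hE : PE' D δ 0 q) : HEpi (δ 0) q := by
  intro z hz
  obtain ⟨y, hy, hyz⟩ := lift_cycle D δ dd (PE'.toPO' D δ hE) z hz (hs z)
  exact ⟨y, hy, 0, by rw [hyz, map_zero, add_zero]⟩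

theorem inj_of
    (dd : ∀ P q x, (D P).d q ((D P).d (q + 1) x) = 0) {q : ℕ} (hs : ∀ z, ∃ y, (δ 0).f (q + 1) y = z)
    (hex : ∀ z, (δ 0).f q z = 0 → ∃ y, (δ 1).f q y = z)
    (hzero : HZero (δ 1) q)
    (hO : PO' D δ 1 q) : HInj (δ 0) q := by
  intro z hz u hu
  obtain ⟨u', hu'⟩ := hs u
  obtain ⟨x, hx, hxz⟩ := lift_cycle D δ dd hO (z - (D 1).d q u')
    (Submodule.sub_mem _ hz (dcyc D dd _ _ _))
    (hex _ (by rw [map_sub, (δ 0).comm, hu', hu, sub_self]))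
  obtain ⟨v, hv⟩ := hzero x hx
  refine ⟨v + u', ?_⟩
  rw [map_add, ← hv, hxz]; abel

end DC
end
end GRP
end

noncomputable section
namespace GRP

/-! ### Chains of an action groupoid -/

/-- `q`-simplices of the nerve of the action groupoid `W // X`. -/
inductive Tup (W X : Type) : ℕ → Type
  | nil (x : X) : Tup W X 0
  | cons {q : ℕ} (w : W) (t : Tup W X q) : Tup W X (q + 1)

section
variable (K : Type) [CommRing K]
variable {W X : Type} [Group W] [MulAction W X]

def Tup.tgt : ∀ {q : ℕ}, Tup W X q → X
  | _, .nil x => x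
  | _, .cons w t => w • t.tgt

def Tup.act (w : W) : ∀ {q : ℕ}, Tup W X q → Tup W X q
  | _, .nil x => .nil (w • x)
  | _, .cons w' t => .cons (w * w') t

theorem Tup.ind0 {W X : Type} {p : Tup W X 0 → Prop} (h : ∀ x, p (.nil x)) : ∀ t, p t
  | .nil x => h x

theorem Tup.indS {W X : Type} {q : ℕ} {p : Tup W X (q + 1) → Prop} (h : ∀ w t, p (.cons w t)) : ∀ t, p t
  | .cons w t => h w t

def Tup.tail {q : ℕ} : Tup W X (q + 1) → Tup W X q
  | .cons _ t => t

/-- prepend -/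
def consL {q : ℕ} (w : W) : (Tup W X q →₀ K) →ₗ[K] (Tup W X (q + 1) →₀ K) :=
  Finsupp.lmapDomain K K (Tup.cons w)

def actL {q : ℕ} (w : W) : (Tup W X q →₀ K) →ₗ[K] (Tup W X q →₀ K) :=
  Finsupp.lmapDomain K K (Tup.act w)

abbrev sg {B : Type} (b : B) : B →₀ K := Finsupp.single b 1

/-- all faces but the first, on basis elements -/
def bB : ∀ {q : ℕ}, Tup W X (q + 1) → (Tup W X q →₀ K)
  | 0, .cons w (.nil x) => - sg K (.nil (w • x))
  | (_ + 1), .cons w (.cons w' t) =>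
    - sg K (.cons (w * w') t) - consL K w (bB (.cons w' t))

def bL (q : ℕ) : (Tup W X (q + 1) →₀ K) →ₗ[K] (Tup W X q →₀ K) :=
  Finsupp.linearCombination K (bB K)

def eL (q : ℕ) : (Tup W X (q + 1) →₀ K) →ₗ[K] (Tup W X q →₀ K) :=
  Finsupp.lmapDomain K K Tup.tail

variable {K}

@[simp] theorem consL_sg {q : ℕ} (w : W) (t : Tup W X q) :
    consL K w (sg K t) = sg K (.cons w t) := by simp [consL, sg]
@[simp] theorem actL_sg {q : ℕ} (w : W) (t : Tup W X q) :
    actL K w (sg K t) = sg K (t.act w) := by simp [actL, sg]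
@[simp] theorem bL_sg {q : ℕ} (t : Tup W X (q + 1)) : bL K q (sg K t) = bB K t := by
  simp [bL, sg]
@[simp] theorem eL_sg {q : ℕ} (t : Tup W X (q + 1)) : eL K q (sg K t) = sg K t.tail := by
  simp [eL, sg]

theorem bL_consL0 (w : W) (y : Tup W X 0 →₀ K) : bL K 0 (consL K w y) = - actL K w y := by
  have : (bL K 0).comp (consL K w) = - actL (X := X) K w := by
    refine Finsupp.lhom_ext' fun t => LinearMap.ext_ring ?_
    revert t; refine Tup.ind0 fun x => ?_
    show bL K 0 (consL K w (sg K _)) = - actL K w (sg K _)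
    simp [bB, Tup.act]
  exact LinearMap.congr_fun this y

theorem bL_consL {q : ℕ} (w : W) (y : Tup W X (q + 1) →₀ K) :
    bL K (q + 1) (consL K w y) = - actL K w y - consL K w (bL K q y) := by
  have : (bL K (q + 1)).comp (consL K w) = - actL (X := X) K w - (consL K w).comp (bL K q) := by
    refine Finsupp.lhom_ext' fun t => LinearMap.ext_ring ?_
    revert t; refine Tup.indS fun w' t => ?_
    show bL K _ (consL K w (sg K _)) = - actL K w (sg K _) - consL K w (bL K _ (sg K _))
    simp [bB, Tup.act]
  exact LinearMap.congr_fun this y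

theorem actL_consL {q : ℕ} (w w' : W) (y : Tup W X q →₀ K) :
    actL K w (consL K w' y) = consL K (w * w') y := by
  have : (actL K w).comp (consL K w') = consL (X := X) (q := q) K (w * w') := by
    refine Finsupp.lhom_ext' fun t => LinearMap.ext_ring ?_
    show actL K w (consL K w' (sg K _)) = consL K (w * w') (sg K _)
    simp [Tup.act]
  exact LinearMap.congr_fun this y

theorem eL_consL {q : ℕ} (w : W) (y : Tup W X q →₀ K) :
    eL K q (consL K w y) = y := by
  have : (eL K q).comp (consL K w) = LinearMap.id (M := Tup W X q →₀ K) := by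
    refine Finsupp.lhom_ext' fun t => LinearMap.ext_ring ?_
    show eL K q (consL K w (sg K _)) = (sg K _)
    simp [Tup.tail]
  exact LinearMap.congr_fun this y

theorem bB_cons0 (w : W) (t : Tup W X 0) : bB K (.cons w t) = - sg K (t.act w) := by
  rw [← bL_sg, ← consL_sg, bL_consL0, actL_sg]

theorem bB_cons {q : ℕ} (w : W) (t : Tup W X (q + 1)) :
    bB K (.cons w t) = - sg K (t.act w) - consL K w (bB K t) := by
  rw [← bL_sg, ← consL_sg, bL_consL, actL_sg, bL_sg]

/-- linearity of `b` for the action -/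
theorem bB_act {q : ℕ} (w : W) (t : Tup W X (q + 1)) :
    bB K (t.act w) = actL K w (bB K t) := by
  revert t; refine Tup.indS fun w' t => ?_
  cases q with
  | zero =>
    revert t; refine Tup.ind0 fun x => ?_
    simp [Tup.act, bB, mul_smul]
  | succ q =>
    revert t; refine Tup.indS fun w'' t => ?_
    simp [Tup.act, bB, mul_assoc, actL_consL]

theorem bb_zero {q : ℕ} (t : Tup W X (q + 1 + 1)) : bL K q (bB K t) = 0 := by
  induction q with
  | zero =>
    revert t; refine Tup.indS fun w t => ?_
    rw [bB_cons, map_sub, map_neg, bL_sg, bL_consL0, bB_act]; abel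
  | succ q ih =>
    revert t; refine Tup.indS fun w t => ?_
    rw [bB_cons, map_sub, map_neg, bL_sg, bL_consL, bB_act, ih]; simp

def dL (q : ℕ) : (Tup W X (q + 1) →₀ K) →ₗ[K] (Tup W X q →₀ K) := eL K q + bL K q

theorem dL_sg {q : ℕ} (t : Tup W X (q + 1)) : dL q (sg K t) = sg K t.tail + bB K t := by
  simp [dL]

theorem dd_zero {q : ℕ} (x : Tup W X (q + 1 + 1) →₀ K) : dL q (dL (q + 1) x) = 0 := by
  have : (dL q).comp (dL (q + 1)) = (0 : (Tup W X (q + 1 + 1) →₀ K) →ₗ[K] _) := by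
    refine Finsupp.lhom_ext' fun t => LinearMap.ext_ring ?_
    show dL q (dL (q + 1) (sg K t)) = 0
    rw [dL_sg, map_add, dL_sg]
    simp only [dL, LinearMap.add_apply, bb_zero]
    revert t; refine Tup.indS fun w t => ?_
    rw [bB_cons, map_sub, map_neg, eL_sg, eL_consL]
    revert t; refine Tup.indS fun w' t => ?_
    simp [Tup.act, Tup.tail]
  exact LinearMap.congr_fun this x

/-- The chain complex of an action groupoid. -/
def TC (K W X : Type) [CommRing K] [Group W] [MulAction W X] : Cx K where
  X q := Tup W X q →₀ K
  d q := dL q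

theorem supp_congr {B M : Type} [AddCommGroup M] [Module K M] (S : Set B) (f g : (B →₀ K) →ₗ[K] M)
    (h : ∀ b ∈ S, f (sg K b) = g (sg K b)) (y : B →₀ K) (hy : y ∈ Finsupp.supported K K S) :
    f y = g y := by
  rw [Finsupp.supported_eq_span_single] at hy
  have : Submodule.span K ((fun i => Finsupp.single i (1 : K)) '' S) ≤ LinearMap.eqLocus f g := by
    rw [Submodule.span_le]
    rintro _ ⟨b, hb, rfl⟩
    exact h b hb
  exact this hy

theorem sg_supp {B : Type} {S : Set B} {b : B} (h : b ∈ S) :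
    sg K b ∈ Finsupp.supported K K S := Finsupp.single_mem_supported K 1 h

theorem map_supp {B B' : Type} {S : Set B} {S' : Set B'} (φ : B → B') (h : ∀ b ∈ S, φ b ∈ S')
    {y : B →₀ K} (hy : y ∈ Finsupp.supported K K S) :
    Finsupp.lmapDomain K K φ y ∈ Finsupp.supported K K S' := by
  rw [Finsupp.supported_eq_span_single] at hy
  have : Submodule.span K ((fun i => Finsupp.single i (1 : K)) '' S) ≤
      (Finsupp.supported K K S').comap (Finsupp.lmapDomain K K φ) := by
    rw [Submodule.span_le]
    rintro _ ⟨b, hb, rfl⟩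
    simp only [Submodule.comap_coe, Set.mem_preimage, Finsupp.lmapDomain_apply,
      Finsupp.mapDomain_single]
    exact sg_supp (h b hb)
  exact this hy

theorem tgt_act {q : ℕ} (w : W) (t : Tup W X q) : (t.act w).tgt = w • t.tgt := by
  cases t <;> simp [Tup.act, Tup.tgt, mul_smul]

theorem bB_supp {q : ℕ} (t : Tup W X (q + 1)) :
    bB K t ∈ Finsupp.supported K K {s | s.tgt = t.tgt} := by
  induction q with
  | zero =>
    revert t; refine Tup.indS fun w t => ?_
    rw [bB_cons0]
    exact Submodule.neg_mem _ (sg_supp (by simp [tgt_act, Tup.tgt]))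
  | succ q ih =>
    revert t; refine Tup.indS fun w t => ?_
    rw [bB_cons]
    refine Submodule.sub_mem _ (Submodule.neg_mem _ (sg_supp (by simp [tgt_act, Tup.tgt]))) ?_
    exact map_supp _ (fun s hs => by simp_all [Tup.tgt]) (ih t)

end

/-- Functors between action groupoids. -/
structure AF (W X W' X' : Type) [Group W] [MulAction W X] [Group W'] [MulAction W' X'] where
  f : W → X → W'
  φ : X → X'
  hφ : ∀ w x, φ (w • x) = f w x • φ x
  hf : ∀ w w' x, f (w * w') x = f w (w' • x) * f w' x

section
variable {K : Type} [CommRing K]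
variable {W X W' X' W'' X'' : Type} [Group W] [MulAction W X] [Group W'] [MulAction W' X']
  [Group W''] [MulAction W'' X'']

def AF.tup (F : AF W X W' X') : ∀ {q : ℕ}, Tup W X q → Tup W' X' q
  | _, .nil x => .nil (F.φ x)
  | _, .cons w t => .cons (F.f w t.tgt) (F.tup t)

theorem AF.tup_tgt (F : AF W X W' X') {q : ℕ} (t : Tup W X q) : (F.tup t).tgt = F.φ t.tgt := by
  induction t with
  | nil x => rfl
  | cons w t ih => simp [AF.tup, Tup.tgt, ih, F.hφ]

theorem AF.tup_act (F : AF W X W' X') {q : ℕ} (w : W) (t : Tup W X q) :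
    F.tup (t.act w) = (F.tup t).act (F.f w t.tgt) := by
  cases t with
  | nil x => simp [AF.tup, Tup.tgt, Tup.act, F.hφ]
  | cons w t => simp [AF.tup, Tup.tgt, Tup.act, F.hf]

variable (K) in
def AF.mapL (F : AF W X W' X') (q : ℕ) : (Tup W X q →₀ K) →ₗ[K] (Tup W' X' q →₀ K) :=
  Finsupp.lmapDomain K K F.tup

@[simp] theorem AF.mapL_sg (F : AF W X W' X') (q : ℕ) (t : Tup W X q) :
    F.mapL K q (sg K t) = sg K (F.tup t) := by simp [AF.mapL, sg]

theorem AF.mapL_consL (F : AF W X W' X') {q : ℕ} (w : W) (x : X) (y : Tup W X q →₀ K)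
    (hy : y ∈ Finsupp.supported K K {s | s.tgt = x}) :
    F.mapL K (q + 1) (consL K w y) = consL K (F.f w x) (F.mapL K q y) := by
  refine supp_congr _ ((F.mapL K (q + 1)).comp (consL K w))
    ((consL K (F.f w x)).comp (F.mapL K q)) ?_ y hy
  rintro t rfl
  simp only [LinearMap.comp_apply, consL_sg, AF.mapL_sg]
  rfl

theorem AF.mapL_bB (F : AF W X W' X') {q : ℕ} (t : Tup W X (q + 1)) :
    F.mapL K q (bB K t) = bB K (F.tup t) := by
  induction q with
  | zero =>
    revert t; refine Tup.indS fun w t => ?_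
    rw [bB_cons0, map_neg, AF.mapL_sg, AF.tup_act, ← bB_cons0]; rfl
  | succ q ih =>
    revert t; refine Tup.indS fun w t => ?_
    rw [bB_cons, map_sub, map_neg, AF.mapL_sg, AF.tup_act, F.mapL_consL w _ _ (bB_supp t), ih,
      ← bB_cons]; rfl

theorem AF.mapL_dL (F : AF W X W' X') {q : ℕ} (x : Tup W X (q + 1) →₀ K) :
    F.mapL K q (dL q x) = dL q (F.mapL K (q + 1) x) := by
  have : (F.mapL K q).comp (dL q) = (dL q).comp (F.mapL K (q + 1)) := by
    refine Finsupp.lhom_ext' fun t => LinearMap.ext_ring ?_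
    show F.mapL K q (dL q (sg K t)) = dL q (F.mapL K (q + 1) (sg K t))
    rw [dL_sg, map_add, AF.mapL_bB, AF.mapL_sg, AF.mapL_sg, dL_sg]
    revert t; refine Tup.indS fun w t => rfl
  exact LinearMap.congr_fun this x

variable (K) in
def AF.map (F : AF W X W' X') : CxHom (TC K W X) (TC K W' X') where
  f q := F.mapL K q
  comm q x := F.mapL_dL x

def AF.comp (F' : AF W' X' W'' X'') (F : AF W X W' X') : AF W X W'' X'' where
  f w x := F'.f (F.f w x) (F.φ x)
  φ x := F'.φ (F.φ x)
  hφ w x := by rw [F.hφ, F'.hφ]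
  hf w w' x := by rw [F.hf, F'.hf, F.hφ]

theorem AF.comp_tup (F' : AF W' X' W'' X'') (F : AF W X W' X') {q : ℕ} (t : Tup W X q) :
    (F'.comp F).tup t = F'.tup (F.tup t) := by
  induction t with
  | nil x => rfl
  | cons w t ih => simp only [AF.tup, ih, AF.tup_tgt]; rfl

theorem AF.map_comp (F' : AF W' X' W'' X'') (F : AF W X W' X') :
    (F'.comp F).map K = (F'.map K).comp (F.map K) := by
  have : ∀ q, (F'.comp F).mapL K q = (F'.mapL K q).comp (F.mapL K q) := by
    intro q
    refine Finsupp.lhom_ext' fun t => LinearMap.ext_ring ?_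
    show (F'.comp F).mapL K q (sg K t) = F'.mapL K q (F.mapL K q (sg K t))
    simp [AF.comp_tup]
  exact CxHom.ext' this

def AF.id (W X : Type) [Group W] [MulAction W X] : AF W X W X where
  f w _ := w
  φ x := x
  hφ _ _ := rfl
  hf _ _ _ := rfl

theorem AF.id_tup {q : ℕ} (t : Tup W X q) : (AF.id W X).tup t = t := by
  induction t with
  | nil x => rfl
  | cons w t ih => simp only [AF.tup, ih]; rfl

theorem AF.map_id : (AF.id W X).map K = CxHom.id (TC K W X) := by
  have : ∀ q, (AF.id W X).mapL K q = LinearMap.id := by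
    intro q
    refine Finsupp.lhom_ext' fun t => LinearMap.ext_ring ?_
    show (AF.id W X).mapL K q (sg K t) = sg K t
    simp [AF.id_tup]
  exact CxHom.ext' this

/-! homotopies from natural transformations -/

section htpy
variable (K) (F G : AF W X W' X') (η : X → W')

def hB : ∀ {q : ℕ}, Tup W X q → (Tup W' X' (q + 1) →₀ K)
  | _, .nil x => sg K (.cons (η x) (.nil (F.φ x)))
  | _, .cons w t => sg K (.cons (η (w • t.tgt)) (F.tup (.cons w t)))
      - consL K (G.f w t.tgt) (hB t)

def hL (q : ℕ) : (Tup W X q →₀ K) →ₗ[K] (Tup W' X' (q + 1) →₀ K) :=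
  Finsupp.linearCombination K (hB K F G η)

variable {K}

theorem hL_sg {q : ℕ} (t : Tup W X q) : hL K F G η q (sg K t) = hB K F G η t := by
  simp [hL, sg]

theorem hB_cons {q : ℕ} (w : W) (t : Tup W X q) : hB K F G η (.cons w t) =
    sg K (.cons (η (w • t.tgt)) (F.tup (.cons w t))) - consL K (G.f w t.tgt) (hB K F G η t) := rfl

theorem hL_consL {q : ℕ} (w : W) (x : X) (y : Tup W X q →₀ K)
    (hy : y ∈ Finsupp.supported K K {s | s.tgt = x}) :
    hL K F G η (q + 1) (consL K w y) =
      consL K (η (w • x)) (F.mapL K (q + 1) (consL K w y)) - consL K (G.f w x) (hL K F G η q y) := by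
  refine supp_congr _ ((hL K F G η (q + 1)).comp (consL K w))
    ((consL K (η (w • x))).comp ((F.mapL K (q + 1)).comp (consL K w))
      - (consL K (G.f w x)).comp (hL K F G η q)) ?_ y hy
  rintro t rfl
  simp only [LinearMap.comp_apply, consL_sg, AF.mapL_sg, LinearMap.sub_apply, hL_sg]
  rfl

variable (h1 : ∀ x, G.φ x = η x • F.φ x)
  (h2 : ∀ w x, G.f w x * η x = η (w • x) * F.f w x)

theorem bh0
    (h1 : ∀ x, G.φ x = η x • F.φ x) (t : Tup W X 0) : bL K 0 (hB K F G η t) = - sg K (G.tup t) := by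
  revert t; refine Tup.ind0 fun x => ?_
  simp only [hB, bL_sg, bB, AF.tup, h1]

theorem bh
    (h1 : ∀ x, G.φ x = η x • F.φ x)
    (h2 : ∀ w x, G.f w x * η x = η (w • x) * F.f w x) {q : ℕ} (t : Tup W X (q + 1)) :
    bL K (q + 1) (hB K F G η t) + hL K F G η q (bB K t) = - sg K (G.tup t) := by
  induction q with
  | zero =>
    revert t; refine Tup.indS fun w t => ?_
    rw [hB_cons, map_sub, bL_sg, bL_consL, bB_cons, bh0 F G η h1, bB_cons0, map_neg (hL K F G η 0),
      hL_sg, ← AF.mapL_bB, bB_cons0]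
    revert t; refine Tup.ind0 fun x => ?_
    simp only [AF.tup, Tup.act, hB, actL_sg, map_neg, AF.mapL_sg, consL_sg, Tup.tgt, h2]
    abel
  | succ q ih =>
    revert t; refine Tup.indS fun w t => ?_
    have e1 : hL K F G η (q + 1) (bB K (.cons w t)) =
        - hB K F G η (t.act w) - consL K (η (w • t.tgt)) (F.mapL K (q + 1) (consL K w (bB K t)))
        + consL K (G.f w t.tgt) (hL K F G η q (bB K t)) := by
      rw [bB_cons, map_sub, map_neg, hL_sg, hL_consL F G η w _ _ (bB_supp t)]; abel
    have e2 : consL K (η (w • t.tgt)) (F.mapL K (q + 1) (consL K w (bB K t)))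
        = - consL K (η (w • t.tgt)) (bB K (F.tup (.cons w t)))
          - sg K (.cons (η (w • t.tgt)) (F.tup (t.act w))) := by
      rw [← AF.mapL_bB, bB_cons, map_sub, map_neg, AF.mapL_sg, map_sub, map_neg, consL_sg]; abel
    have e3 : bL K (q + 1) (hB K F G η t) = - sg K (G.tup t) - hL K F G η q (bB K t) := by
      rw [← ih t]; abel
    rw [e1, e2, hB_cons, map_sub, bL_sg, bL_consL, bB_cons, e3, map_sub, map_neg]
    revert e1 e2 e3
    revert t; refine Tup.indS fun w' t => ?_
    intro _ _ _
    simp only [Tup.act, hB_cons, map_sub, actL_sg, actL_consL, AF.tup, consL_sg, Tup.tgt, G.hf,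
      h2, mul_smul]
    abel

theorem eh {q : ℕ} (t : Tup W X (q + 1)) :
    eL K (q + 1) (hB K F G η t) + hL K F G η q (eL K q (sg K t)) = sg K (F.tup t) := by
  revert t; refine Tup.indS fun w t => ?_
  rw [hB_cons, map_sub, eL_sg, eL_consL, eL_sg, hL_sg]
  simp [Tup.tail]

theorem AF.htpy
    (h1 : ∀ x, G.φ x = η x • F.φ x)
    (h2 : ∀ w x, G.f w x * η x = η (w • x) * F.f w x) (q : ℕ) : HEq (F.map K) (G.map K) q := by
  intro z hz
  refine ⟨hL K F G η q z, ?_⟩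
  show F.mapL K q z = G.mapL K q z + dL q (hL K F G η q z)
  cases q with
  | zero =>
    have : F.mapL K 0 = G.mapL K 0 + (dL 0).comp (hL K F G η 0) := by
      refine Finsupp.lhom_ext' fun t => LinearMap.ext_ring ?_
      show F.mapL K 0 (sg K t) = G.mapL K 0 (sg K t) + dL 0 (hL K F G η 0 (sg K t))
      simp only [AF.mapL_sg, hL_sg, dL, LinearMap.add_apply, bh0 F G η h1]
      revert t; refine Tup.ind0 fun x => ?_
      simp [hB, AF.tup, Tup.tail]
    exact LinearMap.congr_fun this z
  | succ q =>
    have hz' : dL q z = 0 := hz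
    have : F.mapL K (q + 1) = G.mapL K (q + 1) + (dL (q + 1)).comp (hL K F G η (q + 1))
        + (hL K F G η q).comp (dL q) := by
      refine Finsupp.lhom_ext' fun t => LinearMap.ext_ring ?_
      show F.mapL K _ (sg K t) = G.mapL K _ (sg K t) + dL _ (hL K F G η _ (sg K t))
        + hL K F G η q (dL q (sg K t))
      simp only [AF.mapL_sg, hL_sg, dL, LinearMap.add_apply, map_add, bL_sg]
      have := bh F G η h1 h2 t (K := K)
      have h' := eh F G η t (K := K)
      rw [← h', ← neg_neg (sg K (G.tup t)), ← this]; abel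
    have e := LinearMap.congr_fun this z
    change _ = _ + _ + hL K F G η q (dL q z) at e
    rw [hz', map_zero, add_zero] at e
    exact e

end htpy
end
end GRP
end

noncomputable section
namespace GRP

/-! ### Wreath products as groups of equivariant permutations -/

section
variable (G : Type) [Group G]

/-- the wreath product `G ≀ Σ_n`. -/
def Wr (n : ℕ) : Subgroup (Equiv.Perm (ℕ × G)) where
  carrier := {σ | (∀ i g h, σ (i, g * h) = ((σ (i, g)).1, (σ (i, g)).2 * h)) ∧
    ∀ i g, n ≤ i → σ (i, g) = (i, g)}
  one_mem' := ⟨fun _ _ _ => rfl, fun _ _ _ => rfl⟩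
  mul_mem' := by
    rintro a b ⟨ha, ha'⟩ ⟨hb, hb'⟩
    refine ⟨fun i g h => ?_, fun i g h => ?_⟩
    · simp only [Equiv.Perm.mul_apply, hb]
      rw [ha]
    · simp only [Equiv.Perm.mul_apply, hb' i g h, ha' i g h]
  inv_mem' := by
    rintro a ⟨ha, ha'⟩
    refine ⟨fun i g h => ?_, fun i g h => ?_⟩
    · rw [Equiv.Perm.inv_eq_iff_eq, ha]
      simp
    · rw [Equiv.Perm.inv_eq_iff_eq, ha' i g h]

variable {G}

theorem Wr_mono {m n : ℕ} (h : m ≤ n) : Wr G m ≤ Wr G n := fun _ hσ =>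
  ⟨hσ.1, fun i g hi => hσ.2 i g (h.trans hi)⟩

theorem Wr_lt {n : ℕ} {σ : Equiv.Perm (ℕ × G)} (hσ : σ ∈ Wr G n) {a : ℕ × G} (ha : a.1 < n) :
    (σ a).1 < n := by
  by_contra hc
  have h1 := hσ.2 (σ a).1 (σ a).2 (by omega)
  have h2 : σ a = a := σ.injective h1
  rw [h2] at hc; omega

theorem Wr_fst {n : ℕ} {σ : Equiv.Perm (ℕ × G)} (hσ : σ ∈ Wr G n) {a b : ℕ × G} :
    (σ a).1 = (σ b).1 ↔ a.1 = b.1 := by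
  have key : ∀ {τ : Equiv.Perm (ℕ × G)}, τ ∈ Wr G n → ∀ {a b : ℕ × G},
      a.1 = b.1 → (τ a).1 = (τ b).1 := by
    rintro τ hτ ⟨i, g⟩ ⟨j, h⟩ hij
    obtain rfl : i = j := hij
    have := hτ.1 i g (g⁻¹ * h)
    rw [mul_inv_cancel_left] at this
    rw [this]
  refine ⟨fun h => ?_, key hσ⟩
  have := key ((Wr G n).inv_mem hσ) h
  simpa using this

/-- swapping two indices -/
def sw (i j : ℕ) : Equiv.Perm (ℕ × G) := Equiv.prodCongr (Equiv.swap i j) (Equiv.refl G)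

/-- multiplying a label -/
def tl (g : G) (i : ℕ) : Equiv.Perm (ℕ × G) where
  toFun a := if a.1 = i then (a.1, g * a.2) else a
  invFun a := if a.1 = i then (a.1, g⁻¹ * a.2) else a
  left_inv a := by by_cases h : a.1 = i <;> simp [h]; simp [← h]
  right_inv a := by by_cases h : a.1 = i <;> simp [h]; simp [← h]

@[simp] theorem sw_apply (i j : ℕ) (a : ℕ × G) : sw i j a = (Equiv.swap i j a.1, a.2) := rfl
theorem tl_apply (g : G) (i : ℕ) (a : ℕ × G) :
    tl g i a = if a.1 = i then (a.1, g * a.2) else a := rfl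

theorem sw_mem {n i j : ℕ} (hi : i < n) (hj : j < n) : (sw i j : Equiv.Perm (ℕ × G)) ∈ Wr G n := by
  refine ⟨fun i g h => rfl, fun l g hl => ?_⟩
  simp only [sw_apply]
  rw [Equiv.swap_apply_of_ne_of_ne (by omega) (by omega)]

theorem tl_mem {n i : ℕ} (g : G) (hi : i < n) : tl g i ∈ Wr G n := by
  refine ⟨fun l h h' => ?_, fun l h hl => ?_⟩
  · simp only [tl_apply]; by_cases h : l = i <;> simp [h, mul_assoc]
  · simp only [tl_apply]; rw [if_neg (by show ¬ l = i; omega)]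

theorem exists_move {m : ℕ} {a : ℕ × G} (ha : a.1 < m) : ∃ w ∈ Wr G m, w (m - 1, 1) = a := by
  refine ⟨tl a.2 a.1 * sw a.1 (m - 1), Subgroup.mul_mem _ (tl_mem _ ha) (sw_mem ha (by omega)), ?_⟩
  simp [Equiv.Perm.mul_apply, tl_apply]

/-! ### injective words -/

def Good (n P : ℕ) (l : List (ℕ × G)) : Prop :=
  l.length = P ∧ (∀ a ∈ l, a.1 < n) ∧ (l.map Prod.fst).Nodup

theorem Good.map {n P : ℕ} {l : List (ℕ × G)} (h : Good n P l) {σ : Equiv.Perm (ℕ × G)}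
    (hσ : σ ∈ Wr G n) : Good n P (l.map σ) := by
  refine ⟨by simp [h.1], ?_, ?_⟩
  · intro a ha
    obtain ⟨b, hb, rfl⟩ := List.mem_map.1 ha
    exact Wr_lt hσ (h.2.1 b hb)
  · have h3 := h.2.2
    rw [List.Nodup, List.pairwise_map] at h3 ⊢
    rw [List.pairwise_map]
    exact h3.imp fun hab hc => hab ((Wr_fst hσ).1 hc)

theorem Good.eraseIdx {n P : ℕ} {l : List (ℕ × G)} (h : Good n (P + 1) l) (i : Fin (P + 1)) :
    Good n P (l.eraseIdx i) := by
  refine ⟨?_, fun a ha => h.2.1 a (List.mem_of_mem_eraseIdx ha), ?_⟩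
  · rw [List.length_eraseIdx, h.1, if_pos i.2]; rfl
  · rw [← List.eraseIdx_map]
    exact h.2.2.sublist (List.eraseIdx_sublist _ _)

variable (G) in
def Wd (n P : ℕ) : Type := {l : List (ℕ × G) // Good n P l}

instance (n P : ℕ) : MulAction (Wr G n) (Wd G n P) where
  smul w x := ⟨x.1.map w.1, x.2.map w.2⟩
  one_smul x := Subtype.ext (List.map_id _)
  mul_smul a b x := Subtype.ext (by
    show List.map _ _ = List.map _ (List.map _ _)
    rw [List.map_map]; rfl)

theorem Wd.smul_val {n P : ℕ} (w : Wr G n) (x : Wd G n P) : (w • x).1 = x.1.map w.1 := rfl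

variable (G) in
def std (m : ℕ) : ℕ → List (ℕ × G)
  | 0 => []
  | (P + 1) => std m P ++ [(m - 1 - P, 1)]

theorem std_length (m P : ℕ) : (std G m P).length = P := by
  induction P with
  | zero => rfl
  | succ P ih => simp [std, ih]

theorem std_get (m P j : ℕ) (h : j < (std G m P).length) : (std G m P)[j] = (m - 1 - j, 1) := by
  induction P with
  | zero => simp [std] at h
  | succ P ih =>
    simp only [std, List.getElem_append, std_length]
    split_ifs with h1
    · exact ih _
    · have : j = P := by rw [std_length] at h; omega
      subst this; simp

theorem std_succ (m P : ℕ) : std G m (P + 1) = (m - 1, 1) :: std G (m - 1) P := by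
  apply List.ext_getElem
  · simp [std_length]
  · intro i h1 h2
    rw [std_get]
    cases i with
    | zero => simp
    | succ i => simp only [List.getElem_cons_succ]; rw [std_get]; congr 1; omega

theorem std_mem {m P : ℕ} {a : ℕ × G} (h : a ∈ std G m P) : ∃ j < P, a = (m - 1 - j, 1) := by
  obtain ⟨j, hj, rfl⟩ := List.mem_iff_getElem.1 h
  exact ⟨j, by rw [std_length] at hj; exact hj, std_get _ _ _ _⟩

theorem std_good {m P : ℕ} (h : P ≤ m) : Good m P (std G m P) := by
  refine ⟨std_length _ _, fun a ha => ?_, ?_⟩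
  · obtain ⟨j, hj, rfl⟩ := std_mem ha
    show m - 1 - j < m; omega
  · rw [List.nodup_iff_getElem?_ne_getElem?]
    intro i j hij hj
    simp only [List.length_map, std_length] at hj
    rw [List.getElem?_eq_getElem (by simp [std_length]; omega),
      List.getElem?_eq_getElem (by simp [std_length]; omega)]
    simp only [List.getElem_map, std_get, ne_eq, Option.some.injEq]
    omega

theorem std_trans (P : ℕ) : ∀ (m : ℕ) (l : List (ℕ × G)), Good m P l →
    ∃ w ∈ Wr G m, (std G m P).map w = l := by
  induction P with
  | zero =>
    intro m l h
    exact ⟨1, Subgroup.one_mem _, by rw [List.length_eq_zero_iff.1 h.1]; rfl⟩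
  | succ P ih =>
    intro m l h
    cases l with
    | nil => exact absurd h.1 (by simp)
    | cons a l =>
      obtain ⟨w1, hw1, e1⟩ := exists_move (h.2.1 a (by simp))
      have h' := h.map (Subgroup.inv_mem _ hw1)
      have ea : w1⁻¹ a = (m - 1, 1) := by rw [Equiv.Perm.inv_eq_iff_eq, e1]
      rw [List.map_cons, ea] at h'
      have hl : Good (m - 1) P (l.map (w1⁻¹ : Equiv.Perm (ℕ × G))) := by
        refine ⟨by simpa using h'.1, fun b hb => ?_, ?_⟩
        · have h2 := h'.2.1 b (List.mem_cons_of_mem _ hb)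
          have h3 := h'.2.2
          rw [List.map_cons, List.nodup_cons] at h3
          have : b.1 ≠ m - 1 := fun hc => h3.1 (List.mem_map.2 ⟨b, hb, hc⟩)
          omega
        · have h3 := h'.2.2
          rw [List.map_cons, List.nodup_cons] at h3
          exact h3.2
      obtain ⟨w2, hw2, e2⟩ := ih _ _ hl
      refine ⟨w1 * w2, Subgroup.mul_mem _ hw1 (Wr_mono (by omega) hw2), ?_⟩
      rw [std_succ, List.map_cons, Equiv.Perm.mul_apply, hw2.2 _ _ le_rfl, e1, Equiv.Perm.coe_mul,
        ← List.map_map, e2, List.map_map]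
      congr 1
      rw [← Equiv.Perm.coe_mul, mul_inv_cancel]
      simp

theorem std_stab {m P : ℕ} (h : P ≤ m) {w : Equiv.Perm (ℕ × G)} (hw : w ∈ Wr G m)
    (e : (std G m P).map w = std G m P) : w ∈ Wr G (m - P) := by
  refine ⟨hw.1, fun i g hi => ?_⟩
  by_cases him : m ≤ i
  · exact hw.2 i g him
  · have h1 : (i, (1 : G)) ∈ std G m P := by
      rw [List.mem_iff_getElem]
      refine ⟨m - 1 - i, by rw [std_length]; omega, ?_⟩
      rw [std_get]; congr 1; omega
    have h2 : w (i, 1) = (i, 1) := by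
      obtain ⟨j, hj, ej⟩ := List.mem_iff_getElem.1 h1
      have := List.getElem_map (l := std G m P) (f := w) (i := j) (h := by simpa using hj)
      rw [← ej, ← this]
      simp only [e]
    have h3 := hw.1 i 1 g
    rw [h2, one_mul] at h3
    simpa using h3

theorem std_fix {m P : ℕ} (h : P ≤ m) {w : Equiv.Perm (ℕ × G)} (hw : w ∈ Wr G (m - P)) :
    (std G m P).map w = std G m P := by
  conv_rhs => rw [← List.map_id (std G m P)]
  refine List.map_congr_left fun a ha => ?_
  obtain ⟨j, hj, rfl⟩ := std_mem ha
  exact hw.2 _ _ (by omega)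

theorem sw_comm {m i j : ℕ} (hi : m ≤ i) (hj : m ≤ j) {w : Equiv.Perm (ℕ × G)} (hw : w ∈ Wr G m) :
    w * sw i j = sw i j * w := by
  ext1 a
  simp only [Equiv.Perm.mul_apply, sw_apply]
  by_cases ha : a.1 < m
  · rw [Equiv.swap_apply_of_ne_of_ne (by omega) (by omega),
      Equiv.swap_apply_of_ne_of_ne (by have := Wr_lt hw ha; omega) (by have := Wr_lt hw ha; omega)]
  · rw [hw.2 a.1 a.2 (by omega)]
    apply hw.2
    have h := Equiv.swap_apply_def i j a.1
    rw [h]; split_ifs <;> omega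

theorem std_face {m P i : ℕ} (hP : P + 1 ≤ m) (hi : i < P) :
    ((std G m (P + 1)).eraseIdx (i + 1)).map (sw (m - 1 - i) (m - 2 - i)) =
      (std G m (P + 1)).eraseIdx i := by
  apply List.ext_getElem
  · simp only [List.length_map, List.length_eraseIdx, std_length]
    rw [if_pos (by omega), if_pos (by omega)]
  · intro j h1 h2
    simp only [List.getElem_map, List.getElem_eraseIdx, std_get]
    simp only [List.length_eraseIdx, std_length] at h2
    rw [if_pos (by omega)] at h2
    by_cases hj : j < i
    · rw [dif_pos hj, dif_pos (by omega)]
      simp only [std_get, sw_apply]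
      rw [Equiv.swap_apply_of_ne_of_ne (by omega) (by omega)]
    · rw [dif_neg hj]
      by_cases hj' : j = i
      · subst hj'
        rw [dif_pos (by omega)]
        simp only [std_get, sw_apply, Equiv.swap_apply_left]
        congr 1; omega
      · rw [dif_neg (by omega)]
        simp only [std_get, sw_apply]
        rw [Equiv.swap_apply_of_ne_of_ne (by omega) (by omega)]

theorem std_face_last (m P : ℕ) : (std G m (P + 1)).eraseIdx P = std G m P := by
  conv_lhs => rw [std]
  have := List.eraseIdx_append_of_length_le (l := std G m P) (k := P) (std_length m P).le
    [(m - 1 - P, (1 : G))]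
  rw [this, std_length]; simp

end

/-! ### Shapiro -/
section
variable {K : Type} [CommRing K]

theorem shapiro {H W X : Type} [Group H] [Group W] [MulAction W X] (σ : AF H Unit W X)
    (hinj : ∀ h h', σ.f h () = σ.f h' () → h = h')
    (hst : ∀ w, w • σ.φ () = σ.φ () → ∃ h, σ.f h () = w)
    (htr : ∀ x, ∃ w : W, w • σ.φ () = x) (q : ℕ) : HEpi (σ.map K) q ∧ HInj (σ.map K) q := by
  choose r hr using htr
  have h1 : ∀ (w : W) (x : X), ∃ h, σ.f h () = (r (w • x))⁻¹ * w * r x := by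
    intro w x
    apply hst
    rw [mul_smul, mul_smul, hr, inv_smul_eq_iff, hr]
  choose f hf using h1
  let ρ : AF W X H Unit :=
    { f := f
      φ := fun _ => ()
      hφ := fun _ _ => rfl
      hf := fun w w' x => by
        apply hinj
        have e : σ.f (f w (w' • x) * f w' x) () = σ.f (f w (w' • x)) () * σ.f (f w' x) () :=
          σ.hf _ _ _
        rw [e, hf, hf, hf, mul_smul]; group }
  obtain ⟨c, hc⟩ := hst (r (σ.φ ())) (hr _)
  have e1 : HEq ((ρ.comp σ).map K) ((AF.id H Unit).map K) q := by
    refine AF.htpy _ _ (fun _ => c) (fun _ => rfl) (fun h x => ?_) q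
    apply hinj
    show σ.f (h * c) _ = σ.f (c * f (σ.f h ()) (σ.φ ())) _
    have e : ∀ a b, σ.f (a * b) () = σ.f a () * σ.f b () := fun a b => σ.hf a b ()
    have e' : σ.f h () • σ.φ () = σ.φ () := (σ.hφ h ()).symm
    rw [e, e, hf, hc, e']; group
  have e2 : HEq ((σ.comp ρ).map K) ((AF.id W X).map K) q := by
    refine AF.htpy _ _ r (fun x => (hr x).symm) (fun w x => ?_) q
    show w * r x = r (w • x) * σ.f (f w x) ()
    rw [hf]; group
  rw [AF.map_id, AF.map_comp] at e1 e2
  exact ⟨((HEpi.id q).congr e2.symm).of_comp, ((HInj.id q).congr e1.symm).of_comp⟩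
end
end GRP
end

noncomputable section
namespace GRP

/-! ### Exactness of the complex of injective words -/

section
variable {K : Type} [CommRing K]
variable {B : Type}

variable (K) in
def lc (a : B) : (List B →₀ K) →ₗ[K] (List B →₀ K) := Finsupp.lmapDomain K K (List.cons a)

theorem lc_sg (a : B) (l : List B) : lc K a (sg K l) = sg K (a :: l) := by simp [lc, sg]

variable (K) in
def eB : List B → (List B →₀ K)
  | [] => 0
  | a :: w => sg K w - lc K a (eB w)

variable (K) in
def dT : (List B →₀ K) →ₗ[K] (List B →₀ K) := Finsupp.linearCombination K (eB K)

theorem dT_sg (l : List B) : dT K (sg K l) = eB K l := by simp [dT, sg]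

theorem ext_sg {M : Type} [AddCommGroup M] [Module K M] {C : Type} {f g : (C →₀ K) →ₗ[K] M}
    (h : ∀ c, f (sg K c) = g (sg K c)) : f = g :=
  Finsupp.lhom_ext' fun t => LinearMap.ext_ring (h t)

theorem dT_lc (a : B) (y : List B →₀ K) : dT K (lc K a y) = y - lc K a (dT K y) := by
  have : (dT K).comp (lc K a) = LinearMap.id - (lc K a).comp (dT K) := by
    refine ext_sg fun l => ?_
    show dT K (lc K a (sg K l)) = sg K l - lc K a (dT K (sg K l))
    rw [lc_sg, dT_sg, dT_sg]; rfl
  exact LinearMap.congr_fun this y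

theorem dT_eB (l : List B) : dT K (eB K l) = 0 := by
  induction l with
  | nil => simp [eB]
  | cons a w ih => rw [eB, map_sub, dT_lc, ih, dT_sg]; simp

theorem dT_dT (y : List B →₀ K) : dT K (dT K y) = 0 := by
  have : (dT K).comp (dT K) = (0 : (List B →₀ K) →ₗ[K] (List B →₀ K)) := by
    refine ext_sg fun l => ?_
    show dT K (dT K (sg K l)) = 0
    rw [dT_sg, dT_eB]
  exact LinearMap.congr_fun this y

theorem eB_eq_sum (l : List B) :
    eB K l = ∑ i ∈ Finset.range l.length, (-1 : K) ^ i • sg K (l.eraseIdx i) := by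
  induction l with
  | nil => simp [eB]
  | cons a w ih =>
    rw [eB, List.length_cons, Finset.sum_range_succ', ih, map_sum]
    simp only [map_smul, lc_sg, List.eraseIdx_cons_succ, pow_succ, List.eraseIdx_cons_zero,
      pow_zero, one_smul, mul_neg, mul_one, neg_smul, Finset.sum_neg_distrib]
    abel

/-- strip the first letter -/
def pr (a : B) : (List B →₀ K) →ₗ[K] (List B →₀ K) :=
  Finsupp.lcomapDomain (List.cons a) (List.cons_injective)

theorem pr_apply (a : B) (y : List B →₀ K) (l : List B) : pr a y l = y (a :: l) := rfl

def pj : List B → (List B →₀ K) →ₗ[K] (List B →₀ K)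
  | [] => LinearMap.id
  | a :: π => (pj π).comp (pr a)

theorem pj_apply (π : List B) (y : List B →₀ K) (l : List B) : pj π y l = y (π ++ l) := by
  induction π generalizing y with
  | nil => rfl
  | cons a π ih => simp only [pj, LinearMap.comp_apply, ih, pr_apply]; rfl

def ins : List B → (List B →₀ K) →ₗ[K] (List B →₀ K)
  | [] => LinearMap.id
  | a :: π => (lc K a).comp (ins π)

theorem pr_lc_same (a : B) (y : List B →₀ K) : pr a (lc K a y) = y := by
  ext l; rw [pr_apply]; exact Finsupp.mapDomain_apply List.cons_injective _ _

theorem pr_lc_ne {a b : B} (h : a ≠ b) (y : List B →₀ K) : pr a (lc K b y) = 0 := by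
  ext l; rw [pr_apply]
  refine Finsupp.mapDomain_notin_range _ _ ?_
  rintro ⟨l', h'⟩
  exact h (List.cons.inj h').1.symm

theorem pj_ins_same (π : List B) (y : List B →₀ K) : pj π (ins π y) = y := by
  induction π with
  | nil => rfl
  | cons a π ih => simp only [pj, ins, LinearMap.comp_apply, pr_lc_same, ih]

theorem pj_ins_ne (π : List B) : ∀ (π' : List B) (_ : π.length = π'.length) (_ : π ≠ π')
    (y : List B →₀ K), pj π (ins π' y) = 0 := by
  induction π with
  | nil =>
    intro π' h h'
    exact absurd (List.length_eq_zero_iff.1 h.symm).symm h'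
  | cons a π ih =>
    intro π' h h' y
    cases π' with
    | nil => simp at h
    | cons b π' =>
      simp only [pj, ins, LinearMap.comp_apply]
      by_cases hab : a = b
      · subst hab
        rw [pr_lc_same]
        exact ih π' (by simpa using h) (by simpa using h') y
      · rw [pr_lc_ne hab, map_zero]

theorem ins_supp {S S' : Set (List B)} (π : List B) (h : ∀ l ∈ S, π ++ l ∈ S')
    {y : List B →₀ K} (hy : y ∈ Finsupp.supported K K S) : ins π y ∈ Finsupp.supported K K S' := by
  induction π generalizing S' with
  | nil => exact Finsupp.supported_mono h hy
  | cons a π ih =>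
    refine map_supp _ ?_ (ih (S' := (fun l => π ++ l) '' S) (fun l hl => ⟨l, hl, rfl⟩))
    rintro _ ⟨l, hl, rfl⟩
    exact h l hl

theorem eB_supp (l : List B) :
    eB K l ∈ Finsupp.supported K K {l' | l'.Sublist l ∧ l'.length + 1 = l.length} := by
  induction l with
  | nil => exact Submodule.zero_mem _
  | cons a l ih =>
    refine Submodule.sub_mem _ (sg_supp ⟨List.sublist_cons_self _ _, by simp⟩) (map_supp _ ?_ ih)
    rintro l' ⟨h1, h2⟩
    exact ⟨h1.cons_cons a, by simp [h2]⟩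

theorem dT_supp {S S' : Set (List B)}
    (h : ∀ l ∈ S, ∀ l', l'.Sublist l → l'.length + 1 = l.length → l' ∈ S')
    {y : List B →₀ K} (hy : y ∈ Finsupp.supported K K S) : dT K y ∈ Finsupp.supported K K S' := by
  rw [Finsupp.supported_eq_span_single] at hy
  have : Submodule.span K ((fun i => Finsupp.single i (1 : K)) '' S) ≤
      (Finsupp.supported K K S').comap (dT K) := by
    rw [Submodule.span_le]
    rintro _ ⟨b, hb, rfl⟩
    show dT K (sg K b) ∈ Finsupp.supported K K S'
    rw [dT_sg]
    exact Finsupp.supported_mono (fun l' hl' => h b hb l' hl'.1 hl'.2) (eB_supp b)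
  exact this hy

end

section
variable {K : Type} [CommRing K] {G : Type}

/-- the index `i` only occurs in positions `< s` -/
def Bd (i : ℕ) (s : ℕ) (l : List (ℕ × G)) : Prop :=
  ∀ u g v, l = u ++ (i, g) :: v → u.length < s

theorem Bd.tail {i s : ℕ} {a : ℕ × G} {l : List (ℕ × G)} (h : Bd i (s + 1) (a :: l)) :
    Bd i s l := by
  intro u g v e
  have := h (a :: u) g v (by rw [e]; rfl)
  simpa using this

theorem Bd.sublist {i s : ℕ} {l l' : List (ℕ × G)} (h : Bd i s l) (hl : l'.Sublist l) :
    Bd i s l' := by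
  rintro u g v rfl
  obtain ⟨l1, l2, rfl, h1, h2⟩ := List.append_sublist_iff.1 hl
  obtain ⟨r1, r2, rfl, h3, h4⟩ := List.cons_sublist_iff.1 h2
  obtain ⟨x, y, rfl⟩ := List.append_of_mem h3
  have := h (l1 ++ x) g (y ++ r2) (by simp)
  have := h1.length_le
  simp at *; omega

theorem pj_eB {i : ℕ} {g : G} (u : List (ℕ × G)) : ∀ (l : List (ℕ × G)), Bd i (u.length + 1) l →
    pj (u ++ [(i, g)]) (eB K l) =
      (-1 : K) ^ (u.length + 1) • dT K (pj (u ++ [(i, g)]) (sg K l)) := by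
  have key : ∀ (a : ℕ × G) (π v : List (ℕ × G)), ¬ (a :: π) <+: v → pj (a :: π) (sg K v) = 0 := by
    intro a π v h
    ext l
    rw [pj_apply]
    refine Finsupp.single_eq_of_ne ?_
    rintro rfl
    exact h ⟨l, rfl⟩
  induction u with
  | nil =>
    intro l hl
    cases l with
    | nil =>
      have : pj ([] ++ [(i, g)]) (sg K []) = 0 := key _ _ _ (by simp)
      rw [this]; simp [eB]
    | cons a v =>
      have h0 : pj [(i, g)] (sg K v) = 0 := by
        refine key _ _ _ ?_
        rintro ⟨t, rfl⟩
        have := hl.tail [] g t rfl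
        simp at this
      rw [eB, map_sub, List.nil_append, h0, ← lc_sg]
      simp only [pj, LinearMap.comp_apply, LinearMap.id_apply]
      by_cases ha : (i, g) = a
      · subst ha
        simp [pr_lc_same, dT_sg]
      · simp [pr_lc_ne ha]
  | cons c u ih =>
    intro l hl
    cases l with
    | nil =>
      have : pj (c :: u ++ [(i, g)]) (sg K []) = 0 := key _ _ _ (by simp)
      rw [this]; simp [eB]
    | cons a v =>
      have h0 : pj (c :: u ++ [(i, g)]) (sg K v) = 0 := by
        refine key _ _ _ ?_
        rintro ⟨t, rfl⟩
        have := hl.tail (c :: u) g t (by simp)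
        simp at this
      rw [eB, map_sub, h0, ← lc_sg]
      simp only [List.cons_append, pj, LinearMap.comp_apply]
      by_cases ha : c = a
      · subst ha
        rw [pr_lc_same, pr_lc_same, ih v hl.tail, List.length_cons, pow_succ (-1 : K) (u.length + 1)]
        simp
      · simp [pr_lc_ne ha]

theorem pj_dT {i : ℕ} {g : G} (u : List (ℕ × G)) (y : List (ℕ × G) →₀ K)
    (hy : y ∈ Finsupp.supported K K {l | Bd i (u.length + 1) l}) :
    pj (u ++ [(i, g)]) (dT K y) = (-1 : K) ^ (u.length + 1) • dT K (pj (u ++ [(i, g)]) y) := by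
  refine supp_congr _ ((pj (u ++ [(i, g)])).comp (dT K))
    ((-1 : K) ^ (u.length + 1) • (dT K).comp (pj (u ++ [(i, g)]))) ?_ y hy
  intro l hl
  simp only [LinearMap.comp_apply, dT_sg, LinearMap.smul_apply]
  exact pj_eB u l hl

/-- injective words on the index set `S` -/
def InjW (S : Finset ℕ) (p : ℕ) (l : List (ℕ × G)) : Prop :=
  l.length = p ∧ (∀ a ∈ l, a.1 ∈ S) ∧ (l.map Prod.fst).Nodup

theorem InjW.bd {S : Finset ℕ} {p : ℕ} {l : List (ℕ × G)} (h : InjW S p l) (i : ℕ) :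
    Bd i p l := by
  rintro u g v rfl
  have := h.1
  simp at this; omega

theorem InjW.sub {S : Finset ℕ} {p : ℕ} {l l' : List (ℕ × G)} (h : InjW S (p + 1) l)
    (h1 : l'.Sublist l) (h2 : l'.length + 1 = l.length) : InjW S p l' :=
  ⟨by have := h.1; omega, fun a ha => h.2.1 a (h1.subset ha), h.2.2.sublist (h1.map _)⟩

theorem InjW.bd_of {S : Finset ℕ} {p : ℕ} {u v : List (ℕ × G)} {i : ℕ} {g : G}
    (h : InjW S p (u ++ (i, g) :: v)) : Bd i (u.length + 1) (u ++ (i, g) :: v) := by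
  intro u' g' v' e
  have hn := h.2.2
  have l1 : u.length < (u ++ (i, g) :: v).length := by simp
  have l2 : u'.length < (u ++ (i, g) :: v).length := by rw [e]; simp
  have e1 : ((u ++ (i, g) :: v).map Prod.fst)[u.length]'(by simp) = i := by simp
  have e2 : ((u ++ (i, g) :: v).map Prod.fst)[u'.length]'(by simpa using l2) = i := by
    simp [e]
  have := (hn.getElem_inj_iff).1 (e1.trans e2.symm)
  omega

theorem exact_words [Inhabited G] (p : ℕ) : ∀ (S : Finset ℕ), p + 1 ≤ S.card →
    ∀ z : List (ℕ × G) →₀ K, z ∈ Finsupp.supported K K {l | InjW S p l} → dT K z = 0 →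
    ∃ y ∈ Finsupp.supported K K {l | InjW S (p + 1) l}, dT K y = z := by
  induction p using Nat.strong_induction_on with
  | _ p IH =>
  intro S hS
  obtain ⟨i, hi⟩ : S.Nonempty := Finset.card_pos.1 (by omega)
  have key : ∀ s, ∀ z : List (ℕ × G) →₀ K, z ∈ Finsupp.supported K K {l | InjW S p l} →
      z ∈ Finsupp.supported K K {l | Bd i s l} → dT K z = 0 →
      ∃ y ∈ Finsupp.supported K K {l | InjW S (p + 1) l}, dT K y = z := by
    intro s
    induction s with
    | zero =>
      intro z hz hz' hd
      refine ⟨lc K (i, default) z, ?_, by rw [dT_lc, hd]; simp⟩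
      have hz2 : z ∈ Finsupp.supported K K ({l | InjW S p l} ∩ {l | Bd i 0 l}) := by
        rw [Finsupp.mem_supported] at *
        exact Set.subset_inter hz hz'
      refine map_supp _ ?_ hz2
      rintro l ⟨h1, h2⟩
      refine ⟨by simp [h1.1], ?_, ?_⟩
      · intro a ha
        rcases List.mem_cons.1 ha with rfl | ha
        · exact hi
        · exact h1.2.1 a ha
      · rw [List.map_cons, List.nodup_cons]
        refine ⟨?_, h1.2.2⟩
        intro hc
        obtain ⟨⟨j, g⟩, hb, rfl⟩ := List.mem_map.1 hc
        obtain ⟨x, y, rfl⟩ := List.append_of_mem hb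
        have := h2 x g y rfl
        omega
    | succ s ihs =>
      intro z hz hz' hd
      -- prefixes
      have hw : ∀ π : List (ℕ × G), ∃ w : List (ℕ × G) →₀ K,
          (∀ u g, π = u ++ [(i, g)] → u.length = s →
            dT K w = pj π z ∧ ins π w ∈ Finsupp.supported K K {l | InjW S (p + 1) l} ∧
            ins π w ∈ Finsupp.supported K K {l | Bd i (s + 1) l}) := by
        intro π
        by_cases hπ : ∃ u g, π = u ++ [(i, g)] ∧ u.length = s
        swap
        · exact ⟨0, fun u g h1 h2 => absurd ⟨u, g, h1, h2⟩ hπ⟩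
        obtain ⟨u, g, rfl, hu⟩ := hπ
        by_cases h0 : pj (u ++ [(i, g)]) z = 0
        · exact ⟨0, fun _ _ _ _ => by
            refine ⟨by rw [h0, map_zero], ?_, ?_⟩ <;> rw [map_zero] <;> exact Submodule.zero_mem _⟩
        obtain ⟨v0, hv0⟩ := Finsupp.ne_iff.1 h0
        rw [pj_apply] at hv0
        have hv1 : InjW S p (u ++ [(i, g)] ++ v0) :=
          (Finsupp.mem_supported K z).1 hz (Finsupp.mem_support_iff.2 hv0)
        have hp : p = s + 1 + v0.length := by rw [← hv1.1]; simp [hu]; omega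
        have hcyc : dT K (pj (u ++ [(i, g)]) z) = 0 := by
          have := pj_dT (g := g) u z (by rw [hu]; exact hz')
          rw [hd, map_zero] at this
          have h2 := congrArg (fun t => (-1 : K) ^ (u.length + 1) • t) this
          simpa [smul_smul, ← mul_pow] using h2.symm
        set S' := S.filter (fun j => j ∉ (u ++ [(i, g)]).map Prod.fst) with hS'
        have hcard : v0.length + 1 ≤ S'.card := by
          have h1 : S ⊆ S' ∪ ((u ++ [(i, g)]).map Prod.fst).toFinset := by
            intro j hj
            rw [Finset.mem_union, hS', Finset.mem_filter, List.mem_toFinset]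
            tauto
          have h2 := Finset.card_le_card h1
          have h3 := Finset.card_union_le S' ((u ++ [(i, g)]).map Prod.fst).toFinset
          have h4 := List.toFinset_card_le ((u ++ [(i, g)]).map Prod.fst)
          simp only [List.length_map, List.length_append, List.length_singleton] at h4
          omega
        have hsup : pj (u ++ [(i, g)]) z ∈ Finsupp.supported K K {l | InjW S' v0.length l} := by
          rw [Finsupp.mem_supported]
          intro v hv
          have hv' : z (u ++ [(i, g)] ++ v) ≠ 0 := by
            rw [← pj_apply]; exact Finsupp.mem_support_iff.1 hv
          have hv2 : InjW S p (u ++ [(i, g)] ++ v) :=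
            (Finsupp.mem_supported K z).1 hz (Finsupp.mem_support_iff.2 hv')
          have hn := hv2.2.2
          rw [List.map_append, List.nodup_append] at hn
          refine ⟨?_, ?_, hn.2.1⟩
          · have := hv2.1; simp [hu] at this; omega
          · intro a ha
            rw [hS', Finset.mem_filter]
            refine ⟨hv2.2.1 a (by simp [ha]), fun hc => ?_⟩
            exact hn.2.2 _ hc _ (List.mem_map_of_mem ha) rfl
        obtain ⟨w, hw1, hw2⟩ := IH v0.length (by omega) S' hcard _ hsup hcyc
        refine ⟨w, fun _ _ _ _ => ⟨hw2, ?_, ?_⟩⟩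
        all_goals
          have hall : ∀ l ∈ {l : List (ℕ × G) | InjW S' (v0.length + 1) l},
              InjW S (p + 1) (u ++ [(i, g)] ++ l) := by
            intro l hl
            have hn := hv1.2.2
            rw [List.map_append, List.nodup_append] at hn
            refine ⟨?_, ?_, ?_⟩
            · have := hl.1; simp [hu]; omega
            · intro a ha
              rcases List.mem_append.1 ha with ha | ha
              · exact hv1.2.1 a (List.mem_append.2 (Or.inl ha))
              · exact (Finset.mem_filter.1 (hl.2.1 a ha)).1
            · rw [List.map_append, List.nodup_append]
              refine ⟨hn.1, hl.2.2, ?_⟩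
              rintro a ha b hb rfl
              obtain ⟨c, hc, rfl⟩ := List.mem_map.1 hb
              exact (Finset.mem_filter.1 (hl.2.1 c hc)).2 ha
        · exact ins_supp _ hall hw1
        · refine ins_supp _ (fun l hl => ?_) hw1
          have h5 := hall l hl
          rw [List.append_assoc] at h5 ⊢
          have := h5.bd_of
          rw [hu] at this
          exact this
      choose w hw using hw
      classical
      let A : Finset (List (ℕ × G)) := (z.support.image (List.take (s + 1))).filter
        (fun π => ∃ u g, π = u ++ [(i, g)] ∧ u.length = s)
      have hA : ∀ π ∈ A, ∃ u g, π = u ++ [(i, g)] ∧ u.length = s := fun π hπ =>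
        (Finset.mem_filter.1 hπ).2
      let y := (-1 : K) ^ (s + 1) • ∑ π ∈ A, ins π (w π)
      have hy1 : y ∈ Finsupp.supported K K {l | InjW S (p + 1) l} := by
        refine Submodule.smul_mem _ _ (Submodule.sum_mem _ fun π hπ => ?_)
        obtain ⟨u, g, h1, h2⟩ := hA π hπ
        exact (hw π u g h1 h2).2.1
      have hy2 : y ∈ Finsupp.supported K K {l | Bd i (s + 1) l} := by
        refine Submodule.smul_mem _ _ (Submodule.sum_mem _ fun π hπ => ?_)
        obtain ⟨u, g, h1, h2⟩ := hA π hπ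
        exact (hw π u g h1 h2).2.2
      have hdy1 : dT K y ∈ Finsupp.supported K K {l | InjW S p l} :=
        dT_supp (fun l hl l' h1 h2 => hl.sub h1 h2) hy1
      have hdy2 : dT K y ∈ Finsupp.supported K K {l | Bd i (s + 1) l} :=
        dT_supp (fun l hl l' h1 h2 => Bd.sublist hl h1) hy2
      have hpj : ∀ u g, u.length = s → pj (u ++ [(i, g)]) (z - dT K y) = 0 := by
        intro u g hu
        rw [map_sub, pj_dT u y (by rw [hu]; exact hy2), hu]
        simp only [y]
        rw [map_smul, map_smul, smul_smul, ← mul_pow]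
        simp only [mul_neg, mul_one, neg_neg, one_pow, one_smul, map_sum]
        by_cases hmem : u ++ [(i, g)] ∈ A
        · rw [Finset.sum_eq_single_of_mem _ hmem]
          · rw [pj_ins_same, (hw _ u g rfl hu).1, sub_self]
          · intro π hπ hne
            obtain ⟨u', g', h1, h2⟩ := hA π hπ
            rw [pj_ins_ne _ _ (by rw [h1]; simp [hu, h2]) hne.symm, map_zero]
        · rw [Finset.sum_eq_zero]
          · rw [sub_zero]
            ext v
            rw [pj_apply]
            by_contra hc
            apply hmem
            refine Finset.mem_filter.2 ⟨Finset.mem_image.2 ⟨_, Finsupp.mem_support_iff.2 hc, ?_⟩,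
              u, g, rfl, hu⟩
            rw [List.take_append_of_le_length (by simp [hu]), List.take_of_length_le (by simp [hu])]
          · intro π hπ
            obtain ⟨u', g', h1, h2⟩ := hA π hπ
            rw [pj_ins_ne (u ++ [(i, g)]) π (by rw [h1]; simp [hu, h2]) (fun h => hmem (by rw [h]; exact hπ)),
              map_zero]
      obtain ⟨y', hy'1, hy'2⟩ := ihs (z - dT K y) (Submodule.sub_mem _ hz hdy1) (by
        have h3 := Submodule.sub_mem _ hz' hdy2
        rw [Finsupp.mem_supported] at h3 ⊢
        intro l hl u g v e
        have h4 : u.length < s + 1 := h3 hl u g v e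
        by_contra hc
        have h5 : u.length = s := by omega
        have h6 := DFunLike.congr_fun (hpj u g h5) v
        rw [pj_apply, List.append_assoc] at h6
        rw [Finset.mem_coe, Finsupp.mem_support_iff, e] at hl
        exact hl h6) (by rw [map_sub, hd, dT_dT, sub_zero])
      refine ⟨y' + y, Submodule.add_mem _ hy'1 hy1, ?_⟩
      rw [map_add, hy'2]; abel
  intro z hz hd
  exact key p z hz (Finsupp.supported_mono (fun l hl => InjW.bd hl i) hz) hd
end
end GRP
end

noncomputable section
namespace GRP

/-! ### Homological stability for wreath products -/

section
variable (K : Type) [CommRing K] (G : Type) [Group G]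

def fcm {n P : ℕ} (i : Fin (P + 1)) (x : Wd G n (P + 1)) : Wd G n P :=
  ⟨x.1.eraseIdx i, x.2.eraseIdx i⟩

def δX (n P : ℕ) : (Wd G n (P + 1) →₀ K) →ₗ[K] (Wd G n P →₀ K) :=
  ∑ i : Fin (P + 1), (-1 : K) ^ (i : ℕ) • Finsupp.lmapDomain K K (fcm G i)

def wv {n P : ℕ} (x : Wd G n P) : List (ℕ × G) := x.1

def vL (n P : ℕ) : (Wd G n P →₀ K) →ₗ[K] (List (ℕ × G) →₀ K) :=
  Finsupp.lmapDomain K K (wv G)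

variable {K G}

theorem vL_sg {n P : ℕ} (x : Wd G n P) : vL K G n P (sg K x) = sg K x.1 :=
  Finsupp.mapDomain_single

theorem vL_inj (n P : ℕ) : Function.Injective (vL K G n P) :=
  Finsupp.mapDomain_injective (fun _ _ h => Subtype.ext h)

theorem vL_mem {n P : ℕ} (x : Wd G n P →₀ K) :
    vL K G n P x ∈ Finsupp.supported K K {l | InjW (Finset.range n) P l} := by
  refine map_supp (S := Set.univ) _ ?_ (by rw [Finsupp.supported_univ]; trivial)
  intro x _
  exact ⟨x.2.1, fun a ha => Finset.mem_range.2 (x.2.2.1 a ha), x.2.2.2⟩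

theorem vL_surj {n P : ℕ} (y : List (ℕ × G) →₀ K)
    (hy : y ∈ Finsupp.supported K K {l | InjW (Finset.range n) P l}) :
    ∃ x, vL K G n P x = y := by
  rw [Finsupp.supported_eq_span_single] at hy
  have : Submodule.span K ((fun i => Finsupp.single i (1 : K)) ''
      {l : List (ℕ × G) | InjW (Finset.range n) P l}) ≤ LinearMap.range (vL K G n P) := by
    rw [Submodule.span_le]
    rintro _ ⟨l, hl, rfl⟩
    refine ⟨sg K ⟨l, hl.1, fun a ha => Finset.mem_range.1 (hl.2.1 a ha), hl.2.2⟩, ?_⟩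
    exact vL_sg _
  exact this hy

theorem vL_δX {n P : ℕ} (x : Wd G n (P + 1) →₀ K) :
    vL K G n P (δX K G n P x) = dT K (vL K G n (P + 1) x) := by
  have : (vL K G n P).comp (δX K G n P) = (dT K).comp (vL K G n (P + 1)) := by
    refine ext_sg fun l => ?_
    have h1 : vL K G n (P + 1) (sg K l) = sg K l.1 := vL_sg _
    rw [LinearMap.comp_apply, LinearMap.comp_apply, h1, dT_sg, eB_eq_sum, l.2.1,
      ← Fin.sum_univ_eq_sum_range (fun i => (-1 : K) ^ i • sg K (l.1.eraseIdx i))]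
    simp only [δX, LinearMap.sum_apply, map_sum, LinearMap.smul_apply, map_smul]
    refine Finset.sum_congr rfl fun i _ => ?_
    congr 1
    have : Finsupp.lmapDomain K K (fcm G i) (sg K l) = sg K (fcm G i l) := Finsupp.mapDomain_single
    rw [this, vL_sg]; rfl
  exact LinearMap.congr_fun this x

theorem δXδX {n P : ℕ} (x : Wd G n (P + 1 + 1) →₀ K) : δX K G n P (δX K G n (P + 1) x) = 0 := by
  apply vL_inj
  rw [vL_δX, vL_δX, dT_dT, map_zero]

theorem δX_exact {n P : ℕ} (h : P + 2 ≤ n) (z : Wd G n (P + 1) →₀ K) (hz : δX K G n P z = 0) :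
    ∃ y, δX K G n (P + 1) y = z := by
  have : Inhabited G := ⟨1⟩
  obtain ⟨y, hy, hyz⟩ := exact_words (P + 1) (Finset.range n) (by simp; omega) (vL K G n _ z)
    (vL_mem z) (by rw [← vL_δX, hz, map_zero])
  obtain ⟨x, rfl⟩ := vL_surj y hy
  exact ⟨x, vL_inj _ _ (by rw [vL_δX, hyz])⟩

theorem δX_surj {n : ℕ} (h : 1 ≤ n) (z : Wd G n 0 →₀ K) : ∃ y, δX K G n 0 y = z := by
  have : Inhabited G := ⟨1⟩
  obtain ⟨y, hy, hyz⟩ := exact_words 0 (Finset.range n) (by simp; omega) (vL K G n _ z)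
    (vL_mem z) (by
      have h2 := dT_supp (K := K) (S' := ∅) (fun l hl l' h1 h2 => by have := hl.1; omega) (vL_mem z)
      rw [Finsupp.supported_empty] at h2
      exact h2)
  obtain ⟨x, rfl⟩ := vL_surj y hy
  exact ⟨x, vL_inj _ _ (by rw [vL_δX, hyz])⟩

end

section
variable {K : Type} [CommRing K] {W X X' : Type}

def tb : ∀ {q : ℕ}, Tup W X q → X
  | _, .nil x => x
  | _, .cons _ t => tb t

def tu : ∀ {q : ℕ}, Tup W X q → Tup W Unit q
  | _, .nil _ => .nil ()
  | _, .cons w t => .cons w (tu t)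

def tj (x : X) : ∀ {q : ℕ}, Tup W Unit q → Tup W X q
  | _, .nil _ => .nil x
  | _, .cons w t => .cons w (tj x t)

def te (W X : Type) (q : ℕ) : Tup W X q ≃ Tup W Unit q × X where
  toFun t := (tu t, tb t)
  invFun a := tj a.2 a.1
  left_inv t := by
    induction t with
    | nil x => rfl
    | cons w t ih => simp only [tu, tb, tj] at *; rw [ih]
  right_inv a := by
    obtain ⟨t, x⟩ := a
    induction t with
    | nil x => rfl
    | cons w t ih => simp only [tu, tb, tj, Prod.mk.injEq] at *; rw [ih.1, ih.2]; simp

variable (K W X) in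
def eT (q : ℕ) : (Tup W X q →₀ K) ≃ₗ[K] (Tup W Unit q →₀ (X →₀ K)) :=
  (Finsupp.domLCongr (te W X q)).trans (Finsupp.finsuppProdLEquiv K)

theorem eT_sg {q : ℕ} (t : Tup W X q) : eT K W X q (sg K t) = Finsupp.single (tu t) (sg K (tb t)) := by
  simp only [eT, LinearEquiv.trans_apply, Finsupp.domLCongr_single]
  ext a b
  have : Finsupp.finsuppProdLEquiv K (Finsupp.single (te W X q t) (1 : K)) a b =
    Finsupp.single (te W X q t) (1 : K) (a, b) := Finsupp.curry_apply _ _ _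
  rw [this]
  classical
  simp only [te, Equiv.coe_fn_mk, Finsupp.single_apply, sg]
  by_cases h1 : tu t = a <;> by_cases h2 : tb t = b <;> simp [h1, h2, Finsupp.single_apply]

theorem exact_mapRange {A M N L : Type} [AddCommGroup M] [Module K M] [AddCommGroup N] [Module K N]
    (f : M →ₗ[K] N) (z : A →₀ N) (h : ∀ a, ∃ y, f y = z a) :
    ∃ y, Finsupp.mapRange.linearMap f y = z := by
  choose r hr using h
  classical
  refine ⟨∑ a ∈ z.support, Finsupp.single a (r a), ?_⟩
  rw [map_sum]
  simp only [Finsupp.mapRange.linearMap_apply, Finsupp.mapRange_single, hr]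
  exact z.sum_single
end

section
variable {K : Type} [CommRing K] {G : Type} [Group G]

variable (G) in
def fc (n P : ℕ) (i : Fin (P + 1)) : AF (Wr G n) (Wd G n (P + 1)) (Wr G n) (Wd G n P) where
  f w _ := w
  φ := fcm G i
  hφ w x := Subtype.ext (by
    show List.eraseIdx (List.map _ _) _ = List.map _ (List.eraseIdx _ _)
    rw [List.eraseIdx_map])
  hf _ _ _ := rfl

theorem fc_tup (n P : ℕ) (i : Fin (P + 1)) {q : ℕ} (t : Tup (Wr G n) (Wd G n (P + 1)) q) :
    tu ((fc G n P i).tup t) = tu t ∧ tb ((fc G n P i).tup t) = fcm G i (tb t) := by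
  induction t with
  | nil x => exact ⟨rfl, rfl⟩
  | cons w t ih => simp only [AF.tup, tu, tb, ih.1, ih.2]; exact ⟨rfl, trivial⟩

variable (K G) in
abbrev DD (n P : ℕ) : Cx K := TC K (Wr G n) (Wd G n P)

variable (K G) in
def dXL (n P q : ℕ) : (Tup (Wr G n) (Wd G n (P + 1)) q →₀ K) →ₗ[K] (Tup (Wr G n) (Wd G n P) q →₀ K) :=
  ∑ i : Fin (P + 1), (-1 : K) ^ (i : ℕ) • (fc G n P i).mapL K q

theorem dXL_apply (n P q : ℕ) (x : Tup (Wr G n) (Wd G n (P + 1)) q →₀ K) :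
    dXL K G n P q x = ∑ i : Fin (P + 1), (-1 : K) ^ (i : ℕ) • (fc G n P i).mapL K q x := by
  simp only [dXL, LinearMap.sum_apply, LinearMap.smul_apply]

theorem dXL_dL (n P q : ℕ) (x : Tup (Wr G n) (Wd G n (P + 1)) (q + 1) →₀ K) :
    dXL K G n P q (dL q x) = dL q (dXL K G n P (q + 1) x) := by
  simp only [dXL_apply, map_sum, map_smul, AF.mapL_dL]

variable (K G) in
def dX (n P : ℕ) : CxHom (DD K G n (P + 1)) (DD K G n P) where
  f q := dXL K G n P q
  comm q x := dXL_dL n P q x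

theorem eT_dX (n P q : ℕ) (x : Tup (Wr G n) (Wd G n (P + 1)) q →₀ K) :
    eT K _ _ q (dXL K G n P q x) = Finsupp.mapRange.linearMap (δX K G n P) (eT K _ _ q x) := by
  have : (eT K (Wr G n) (Wd G n P) q).toLinearMap.comp (dXL K G n P q) =
      (Finsupp.mapRange.linearMap (δX K G n P)).comp (eT K (Wr G n) (Wd G n (P + 1)) q).toLinearMap := by
    refine ext_sg (M := Tup (Wr G n) Unit q →₀ (Wd G n P →₀ K)) (C := Tup (Wr G n) (Wd G n (P+1)) q) fun t => ?_
    show eT K (Wr G n) (Wd G n P) q (dXL K G n P q (sg K t)) =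
      Finsupp.mapRange.linearMap (δX K G n P) (eT K (Wr G n) (Wd G n (P + 1)) q (sg K t))
    rw [eT_sg]
    simp only [dXL_apply, map_sum, map_smul, AF.mapL_sg, eT_sg,
      fc_tup, Finsupp.mapRange.linearMap_apply, Finsupp.mapRange_single, δX]
    rw [← Finsupp.lsingle_apply (R := K) (a := tu t), LinearMap.sum_apply, map_sum]
    refine Finset.sum_congr rfl fun i _ => ?_
    rw [LinearMap.smul_apply, map_smul]
    simp [sg]
  exact LinearMap.congr_fun this x

theorem dXLdXL (n P q : ℕ) (x) : dXL K G n P q (dXL K G n (P + 1) q x) = 0 := by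
  apply (eT K (Wr G n) (Wd G n P) q).injective
  rw [map_zero, eT_dX, eT_dX]
  ext a : 1
  simp only [Finsupp.mapRange.linearMap_apply, Finsupp.mapRange_apply]
  rw [δXδX]; rfl

theorem dXdX (n P q : ℕ) (x) : (dX K G n P).f q ((dX K G n (P + 1)).f q x) = 0 :=
  dXLdXL n P q x

theorem dX_exact {n P : ℕ} (h : P + 2 ≤ n) (q : ℕ) (z) (hz : (dX K G n P).f q z = 0) :
    ∃ y, (dX K G n (P + 1)).f q y = z := by
  have h1 : Finsupp.mapRange.linearMap (δX K G n P) (eT K _ _ q z) = 0 :=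
    (eT_dX n P q z).symm.trans ((congrArg _ hz).trans (map_zero (eT K (Wr G n) (Wd G n P) q)))
  obtain ⟨y, hy⟩ := exact_mapRange (L := K) (δX K G n (P + 1)) (eT K _ _ q z) (fun a => by
    apply δX_exact h
    have := DFunLike.congr_fun h1 a
    simpa using this)
  refine ⟨(eT K _ _ q).symm y, ?_⟩
  apply (eT K (Wr G n) (Wd G n (P + 1)) q).injective
  refine (eT_dX n (P + 1) q _).trans ?_
  rw [LinearEquiv.apply_symm_apply]; exact hy

theorem dX_surj {n : ℕ} (h : 1 ≤ n) (q : ℕ) (z) : ∃ y, (dX K G n 0).f q y = z := by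
  obtain ⟨y, hy⟩ := exact_mapRange (L := K) (δX K G n 0) (eT K _ _ q z) (fun a => δX_surj h _)
  refine ⟨(eT K _ _ q).symm y, ?_⟩
  apply (eT K (Wr G n) (Wd G n 0) q).injective
  refine (eT_dX n 0 q _).trans ?_
  rw [LinearEquiv.apply_symm_apply]; exact hy

variable (G) in
def stab {m n : ℕ} (h : m ≤ n) : AF (Wr G m) Unit (Wr G n) Unit where
  f w _ := ⟨w.1, Wr_mono h w.2⟩
  φ _ := ()
  hφ _ _ := rfl
  hf _ _ _ := rfl

variable (G) in
def sgm {n P : ℕ} (h : P ≤ n) : AF (Wr G (n - P)) Unit (Wr G n) (Wd G n P) where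
  f w _ := ⟨w.1, Wr_mono (Nat.sub_le _ _) w.2⟩
  φ _ := ⟨std G n P, std_good h⟩
  hφ w x := Subtype.ext (std_fix h w.2).symm
  hf _ _ _ := rfl

theorem sgm_iso {n P : ℕ} (h : P ≤ n) (q : ℕ) :
    HEpi ((sgm G h).map K) q ∧ HInj ((sgm G h).map K) q := by
  apply shapiro
  · intro a b hab
    have := congrArg Subtype.val hab
    exact Subtype.ext this
  · intro w hw
    have := congrArg Subtype.val hw
    exact ⟨⟨w.1, std_stab h w.2 this⟩, rfl⟩
  · intro x
    obtain ⟨w, hw, e⟩ := std_trans P n x.1 x.2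
    exact ⟨⟨w, hw⟩, Subtype.ext e⟩

theorem fc_sgm {n P : ℕ} (h : P + 1 ≤ n) (q : ℕ) (i : ℕ) (hi : i ≤ P) :
    HEq (((fc G n P ⟨i, by omega⟩).comp (sgm G h)).map K)
      (((sgm G (P := P) (n := n) (by omega)).comp
        (stab G (m := n - (P + 1)) (n := n - P) (by omega))).map K) q := by
  induction hi using Nat.decreasingInduction with
  | self =>
    refine AF.htpy _ _ (fun _ => 1) (fun x => ?_) (fun w x => ?_) q
    · rw [one_smul]
      exact Subtype.ext (std_face_last n P).symm
    · rw [mul_one, one_mul]; rfl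
  | of_succ j hj ih =>
    refine HEq.trans ?_ ih
    refine HEq.symm (AF.htpy _ _ (fun _ => ⟨sw (n - 1 - j) (n - 2 - j),
      sw_mem (by omega) (by omega)⟩) (fun x => ?_) (fun w x => ?_) q)
    · exact Subtype.ext (std_face h hj).symm
    · exact Subtype.ext (sw_comm (by omega) (by omega) w.2)

theorem dX_sgm {n P : ℕ} (h : P + 1 ≤ n) (q : ℕ) (z) (hz : z ∈ (TC K (Wr G (n - (P + 1))) Unit).cyc q) :
    ∃ y, (dX K G n P).f q (((sgm G h).map K).f q z) =
      (∑ i ∈ Finset.range (P + 1), (-1 : K) ^ i) • (((sgm G (P := P) (n := n) (by omega)).comp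
        (stab G (m := n - (P + 1)) (n := n - P) (by omega))).map K).f q z + (DD K G n P).d q y := by
  have h1 := fun i : Fin (P + 1) => fc_sgm (K := K) (G := G) h q i (by omega) z hz
  choose y hy using h1
  refine ⟨∑ i : Fin (P + 1), (-1 : K) ^ (i : ℕ) • y i, ?_⟩
  rw [map_sum, Finset.sum_smul, ← Fin.sum_univ_eq_sum_range
    (fun i => (-1 : K) ^ i • (((sgm G (P := P) (n := n) (by omega)).comp
        (stab G (m := n - (P + 1)) (n := n - P) (by omega))).map K).f q z), ← Finset.sum_add_distrib]
  refine (dXL_apply _ _ _ _).trans ?_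
  refine Finset.sum_congr rfl fun i _ => ?_
  rw [map_smul, ← smul_add]
  refine congrArg _ ?_
  refine Eq.trans ?_ (hy i)
  rw [AF.map_comp]; rfl

theorem dX_sgm_even {n P : ℕ} (h : P + 1 ≤ n) (hP : Even P) (q : ℕ) :
    HEq ((dX K G n P).comp ((sgm G h).map K)) (((sgm G (P := P) (n := n) (by omega)).map K).comp
        ((stab G (m := n - (P + 1)) (n := n - P) (by omega)).map K)) q := by
  intro z hz
  obtain ⟨y, hy⟩ := dX_sgm h q z hz
  rw [neg_one_geom_sum, if_neg (by rw [Nat.not_even_iff_odd]; exact hP.add_one), one_smul,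
    AF.map_comp] at hy
  exact ⟨y, hy⟩

theorem dX_zero {n P : ℕ} (h : P + 1 ≤ n) (hP : Odd P) (q : ℕ) : HZero (dX K G n P) q := by
  refine HZero.of_comp_epi (f := (sgm G h).map K) ?_ (sgm_iso h q).1
  intro z hz
  obtain ⟨y, hy⟩ := dX_sgm h q z hz
  rw [neg_one_geom_sum, if_pos hP.add_one, zero_smul, zero_add] at hy
  exact ⟨y, hy⟩

theorem dX_epi {n P : ℕ} (h : P + 1 ≤ n) (hP : Even P) (q : ℕ)
    (hs : HEpi ((stab G (m := n - (P + 1)) (n := n - P) (by omega)).map K) q) :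
    HEpi (dX K G n P) q :=
  (((sgm_iso _ q).1.comp hs).congr (dX_sgm_even h hP q).symm).of_comp

theorem dX_inj {n P : ℕ} (h : P + 1 ≤ n) (hP : Even P) (q : ℕ)
    (hs : HInj ((stab G (m := n - (P + 1)) (n := n - P) (by omega)).map K) q) :
    HInj (dX K G n P) q :=
  (((sgm_iso _ q).2.comp hs).congr (dX_sgm_even h hP q).symm).of_comp_epi (sgm_iso h q).1

theorem stab_epi {n : ℕ} (h : 1 ≤ n) (q : ℕ) (hs : HEpi (dX K G n 0) q) :
    HEpi ((stab G (m := n - 1) (n := n) (by omega)).map K) q :=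
  (((hs.comp (sgm_iso h q).1)).congr (dX_sgm_even h (by simp) q)).of_comp_inj (sgm_iso _ q).2

theorem stab_inj {n : ℕ} (h : 1 ≤ n) (q : ℕ) (hs : HInj (dX K G n 0) q) :
    HInj ((stab G (m := n - 1) (n := n) (by omega)).map K) q :=
  (((hs.comp (sgm_iso h q).2)).congr (dX_sgm_even h (by simp) q)).of_comp

theorem stab_eq {m n m' n' : ℕ} (hm : m = m') (hn : n = n') (h : m ≤ n) (h' : m' ≤ n') (q : ℕ) :
    (HEpi ((stab G h).map K) q ↔ HEpi ((stab G h').map K) q) ∧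
    (HInj ((stab G h).map K) q ↔ HInj ((stab G h').map K) q) := by
  subst hm hn; exact ⟨Iff.rfl, Iff.rfl⟩

variable (K G) in
/-- Homological stability of wreath products. -/
theorem wreath_stability (q : ℕ) :
    (∀ n (_ : 2 * q + 1 ≤ n), HEpi ((stab G (m := n - 1) (n := n) (by omega)).map K) q) ∧
    (∀ n (_ : 2 * q + 2 ≤ n), HInj ((stab G (m := n - 1) (n := n) (by omega)).map K) q) := by
  induction q using Nat.strong_induction_on with
  | _ q IH =>
  have dd : ∀ n P q x, (DD K G n P).d q ((DD K G n P).d (q + 1) x) = 0 :=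
    fun n P q x => dd_zero x
  have A : ∀ i < q, ∀ n P, P + 2 * i + 3 ≤ n →
      (Even P → PE (DD K G n) (dX K G n) i P) ∧ (Odd P → PO (DD K G n) (dX K G n) i P) := by
    intro i
    induction i with
    | zero =>
      intro hi n P hn
      refine ⟨fun hP => ?_, fun hP => ?_⟩
      · refine PE_of _ _ (dd n) (dXdX n) (dX_exact (by omega) _) ?_ trivial
        refine dX_epi (by omega) (by simpa [Nat.even_add] using hP) _ ?_
        exact (stab_eq (by omega) rfl _ _ _).1.1 ((IH 0 hi).1 (n - (P + 2)) (by omega))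
      · refine PO_of _ _ (dd n) (dXdX n) (dX_exact (by omega) _) ?_ trivial
        refine dX_inj (by omega) hP.add_one _ ?_
        exact (stab_eq (by omega) rfl _ _ _).2.1 ((IH 0 hi).2 (n - (P + 1)) (by omega))
    | succ j ihj =>
      intro hi n P hn
      refine ⟨fun hP => ?_, fun hP => ?_⟩
      · refine PE_of _ _ (dd n) (dXdX n) (dX_exact (by omega) _) ?_
          ((ihj (by omega) n (P + 1) (by omega)).2 hP.add_one)
        refine dX_epi (by omega) (by simpa [Nat.even_add] using hP) _ ?_
        exact (stab_eq (by omega) rfl _ _ _).1.1 ((IH (j + 1) hi).1 (n - (P + 2)) (by omega))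
      · refine PO_of _ _ (dd n) (dXdX n) (dX_exact (by omega) _) ?_
          ((ihj (by omega) n (P + 1) (by omega)).1 hP.add_one)
        refine dX_inj (by omega) hP.add_one _ ?_
        exact (stab_eq (by omega) rfl _ _ _).2.1 ((IH (j + 1) hi).2 (n - (P + 1)) (by omega))
  refine ⟨fun n hn => stab_epi (by omega) q ?_, fun n hn => stab_inj (by omega) q ?_⟩
  · refine epi_of (DD K G n) (dX K G n) (dd n) (dX_surj (by omega) q) ?_
    cases q with
    | zero => trivial
    | succ q => exact (A q (by omega) n 0 (by omega)).1 (by simp)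
  · refine inj_of (DD K G n) (dX K G n) (dd n) (dX_surj (by omega) _) (dX_exact (by omega) _)
      (dX_zero (by omega) (by simp) q) ?_
    cases q with
    | zero => trivial
    | succ q => exact (A q (by omega) n 1 (by omega)).2 (by simp)
end
end GRP
end

noncomputable section
namespace GRP

/-! ### Bar complexes -/

section
variable (K : Type) [CommRing K]

abbrev BC (A : Type) [Ring A] [Algebra K A] (q : ℕ) : Type := (barC K A q : Type)

abbrev BT (A : Type) [Ring A] [Algebra K A] (q : ℕ) : Type := A ⊗[K] BC K A q

def barCx (A : Type) [Ring A] [Algebra K A] (ε : A →ₐ[K] K) : Cx K where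
  X q := BC K A q
  d q := bard K A ε q

variable {K}
variable {A B C : Type} [Ring A] [Algebra K A] [Ring B] [Algebra K B] [Ring C] [Algebra K C]

/-- first face -/
def bfst (ε : A →ₐ[K] K) (q : ℕ) : BT K A q →ₗ[K] BC K A q :=
  TensorProduct.lift ((LinearMap.lsmul K (BC K A q)).comp ε.toLinearMap)

theorem bfst_tmul (ε : A →ₐ[K] K) (q : ℕ) (a : A) (x : BC K A q) :
    bfst ε q (a ⊗ₜ[K] x) = ε a • x := rfl

theorem bard_eq (ε : A →ₐ[K] K) (q : ℕ) (x : BT K A q) :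
    bard K A ε q x = bfst ε q x + barB K A ε q x := rfl

/-- maps on bar modules -/
def bm (f : A →ₗ[K] B) : ∀ q : ℕ, BC K A q →ₗ[K] BC K B q
  | 0 => LinearMap.id
  | (q + 1) => show BT K A q →ₗ[K] BT K B q from TensorProduct.map f (bm f q)

def bmT (f : A →ₗ[K] B) (q : ℕ) : BT K A q →ₗ[K] BT K B q := TensorProduct.map f (bm f q)

theorem bmT_tmul (f : A →ₗ[K] B) (q : ℕ) (a : A) (x : BC K A q) :
    bmT f q (a ⊗ₜ[K] x) = f a ⊗ₜ[K] bm f q x := rfl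

variable {εA : A →ₐ[K] K} {εB : B →ₐ[K] K} {εC : C →ₐ[K] K}

/-- multiplicative, augmentation preserving -/
structure MM (εA : A →ₐ[K] K) (εB : B →ₐ[K] K) where
  f : A →ₗ[K] B
  mul : ∀ a b, f (a * b) = f a * f b
  aug : ∀ a, εB (f a) = εA a

theorem MM.act (F : MM εA εB) (q : ℕ) (a : A) (x : BT K A q) :
    barActT K B εB q (F.f a) (bmT F.f q x) = bmT F.f q (barActT K A εA q a x) := by
  have : (barActT K B εB q (F.f a)).comp (bmT F.f q) = (bmT F.f q).comp (barActT K A εA q a) := by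
    refine TensorProduct.ext' fun b y => ?_
    simp only [LinearMap.coe_comp, Function.comp_apply, bmT_tmul]
    rw [barActT_tmul, barActT_tmul, bmT_tmul, F.mul]
  exact LinearMap.congr_fun this x

theorem MM.barB (F : MM εA εB) : ∀ (q : ℕ) (x : BT K A q),
    _root_.barB K B εB q (bmT F.f q x) = bm F.f q (_root_.barB K A εA q x)
  | 0, x => by
    have : (_root_.barB K B εB 0).comp (bmT F.f 0) = (bm F.f 0).comp (_root_.barB K A εA 0) := by
      refine TensorProduct.ext' fun a c => ?_
      show -(εB (F.f a) • c) = -(εA a • c)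
      rw [F.aug]
    exact LinearMap.congr_fun this x
  | (q + 1), x => by
    have : (_root_.barB K B εB (q + 1)).comp (bmT F.f (q + 1)) =
        (bm F.f (q + 1)).comp (_root_.barB K A εA (q + 1)) := by
      refine TensorProduct.ext' fun a (x : BT K A q) => ?_
      show -(barActT K B εB q (F.f a) (bmT F.f q x)) - F.f a ⊗ₜ[K] (_root_.barB K B εB q (bmT F.f q x))
        = bmT F.f q (-(barActT K A εA q a x) - a ⊗ₜ[K] (_root_.barB K A εA q x))
      rw [F.act, MM.barB F q x, map_sub, map_neg, bmT_tmul]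
    exact LinearMap.congr_fun this x

theorem MM.bfst (F : MM εA εB) (q : ℕ) (x : BT K A q) :
    GRP.bfst εB q (bmT F.f q x) = bm F.f q (GRP.bfst εA q x) := by
  have : (GRP.bfst εB q).comp (bmT F.f q) = (bm F.f q).comp (GRP.bfst εA q) := by
    refine TensorProduct.ext' fun a c => ?_
    simp only [LinearMap.coe_comp, Function.comp_apply, bmT_tmul, bfst_tmul, F.aug, map_smul]
  exact LinearMap.congr_fun this x

theorem MM.bard (F : MM εA εB) (q : ℕ) (x : BT K A q) :
    bm F.f q (_root_.bard K A εA q x) = _root_.bard K B εB q (bmT F.f q x) := by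
  rw [bard_eq, bard_eq, map_add, F.barB, F.bfst]

def MM.hom (F : MM εA εB) : CxHom (barCx K A εA) (barCx K B εB) where
  f q := bm F.f q
  comm q x := F.bard q x

def MM.comp (F : MM εB εC) (F' : MM εA εB) : MM εA εC where
  f := F.f.comp F'.f
  mul a b := by simp [F'.mul, F.mul]
  aug a := by simp [F'.aug, F.aug]

theorem bm_comp (f : B →ₗ[K] C) (g : A →ₗ[K] B) : ∀ q x, bm (f.comp g) q x = bm f q (bm g q x)
  | 0, x => rfl
  | (q + 1), x => by
    have : bmT (f.comp g) q = (bmT f q).comp (bmT g q) := by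
      refine TensorProduct.ext' fun a c => ?_
      simp only [LinearMap.coe_comp, Function.comp_apply, bmT_tmul, bm_comp f g q]
    exact LinearMap.congr_fun this x

theorem MM.hom_comp (F : MM εB εC) (F' : MM εA εB) : (F.comp F').hom = F.hom.comp F'.hom :=
  CxHom.ext' fun q => LinearMap.ext fun x => bm_comp _ _ q x

theorem bm_id : ∀ q x, bm (LinearMap.id : A →ₗ[K] A) q x = x
  | 0, x => rfl
  | (q + 1), x => by
    have : bmT (LinearMap.id : A →ₗ[K] A) q = LinearMap.id := by
      refine TensorProduct.ext' fun a c => ?_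
      simp only [bmT_tmul, bm_id q, LinearMap.id_apply]
    exact LinearMap.congr_fun this x

def MM.ofAlg (φ : A →ₐ[K] B) (h : εB.comp φ = εA) : MM εA εB where
  f := φ.toLinearMap
  mul a b := map_mul φ a b
  aug a := AlgHom.congr_fun h a

def MM.id (εA : A →ₐ[K] K) : MM εA εA := MM.ofAlg (AlgHom.id K A) rfl

theorem MM.hom_id : (MM.id εA).hom = CxHom.id _ :=
  CxHom.ext' fun q => LinearMap.ext fun x => bm_id q x

/-! homotopy -/
section step
variable {X Y : Type} [AddCommGroup X] [Module K X] [AddCommGroup Y] [Module K Y]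

def lact (X : Type) [AddCommGroup X] [Module K X] (a : A) : A ⊗[K] X →ₗ[K] A ⊗[K] X :=
  TensorProduct.map (LinearMap.mulLeft K a) LinearMap.id

theorem lact_tmul (a b : A) (x : X) : lact X a (b ⊗ₜ[K] x) = (a * b) ⊗ₜ x := rfl

def hS (F G : A →ₗ[K] B) (u : B) (Fx : X →ₗ[K] Y) (hx : X →ₗ[K] B ⊗[K] Y) :
    A ⊗[K] X →ₗ[K] B ⊗[K] (B ⊗[K] Y) :=
  (TensorProduct.mk K B (B ⊗[K] Y) u).comp (TensorProduct.map F Fx) - TensorProduct.map G hx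

theorem hS_tmul (F G : A →ₗ[K] B) (u : B) (Fx : X →ₗ[K] Y) (hx : X →ₗ[K] B ⊗[K] Y) (a : A) (x : X) :
    hS F G u Fx hx (a ⊗ₜ x) = u ⊗ₜ[K] (F a ⊗ₜ[K] Fx x) - G a ⊗ₜ[K] hx x := rfl

theorem hS_fst (F G : A →ₗ[K] B) (u : B) (Fx : X →ₗ[K] Y) (hx : X →ₗ[K] B ⊗[K] Y)
    (hu : εB u = 1) (hG : ∀ a, εB (G a) = εA a)
    (eX : A ⊗[K] X →ₗ[K] X) (heX : ∀ a x, eX (a ⊗ₜ x) = εA a • x)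
    (eY : B ⊗[K] (B ⊗[K] Y) →ₗ[K] B ⊗[K] Y) (heY : ∀ a x, eY (a ⊗ₜ x) = εB a • x)
    (x : A ⊗[K] X) : eY (hS F G u Fx hx x) + hx (eX x) = TensorProduct.map F Fx x := by
  induction x with
  | zero => simp only [map_zero]; exact add_zero _
  | add x y hx hy => simp only [map_add, ← hx, ← hy]; abel
  | tmul b y =>
    simp only [hS_tmul, map_sub, heY, heX, hu, hG, one_smul, map_smul, TensorProduct.map_tmul]; abel

theorem hS_act (F G : A →ₗ[K] B) (u : B) (Fx : X →ₗ[K] Y) (hx : X →ₗ[K] B ⊗[K] Y)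
    (hG : ∀ a b, G (a * b) = G a * G b) (a : A) (x : A ⊗[K] X) :
    hS F G u Fx hx (lact X a x) = lact _ (G a) (hS F G u Fx hx x)
      - (G a * u) ⊗ₜ[K] TensorProduct.map F Fx x + u ⊗ₜ[K] TensorProduct.map F Fx (lact X a x) := by
  induction x with
  | zero => simp only [map_zero, TensorProduct.tmul_zero]; abel
  | add x y hx hy => simp only [map_add, TensorProduct.tmul_add, hx, hy]; abel
  | tmul b y =>
    simp only [lact_tmul, hS_tmul, map_sub, hG, TensorProduct.map_tmul]; abel

theorem hS_b (F G : A →ₗ[K] B) (u : B) (Fx Gx : X →ₗ[K] Y) (hx : X →ₗ[K] B ⊗[K] Y)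
    (hG : ∀ a b, G (a * b) = G a * G b) (hc : ∀ a, G a * u = u * F a)
    (bX : A ⊗[K] X →ₗ[K] X) (bX' : A ⊗[K] (A ⊗[K] X) →ₗ[K] A ⊗[K] X)
    (hbX : ∀ a x, bX' (a ⊗ₜ x) = - lact X a x - a ⊗ₜ bX x)
    (bY : B ⊗[K] (B ⊗[K] Y) →ₗ[K] B ⊗[K] Y)
    (bY' : B ⊗[K] (B ⊗[K] (B ⊗[K] Y)) →ₗ[K] B ⊗[K] (B ⊗[K] Y))
    (hbY : ∀ a x, bY' (a ⊗ₜ x) = - lact (B ⊗[K] Y) a x - a ⊗ₜ bY x)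
    (ih : ∀ x, bY (hS F G u Fx hx x) + hx (bX x) = - TensorProduct.map G Gx x)
    (hF : ∀ x, bY (TensorProduct.map F (TensorProduct.map F Fx) x) = TensorProduct.map F Fx (bX' x))
    (x : A ⊗[K] (A ⊗[K] X)) :
    bY' (hS F G u (TensorProduct.map F Fx) (hS F G u Fx hx) x) + hS F G u Fx hx (bX' x) =
      - TensorProduct.map G (TensorProduct.map G Gx) x := by
  induction x with
  | zero => simp only [map_zero, neg_zero]; exact add_zero _
  | add x y hx hy =>
    simp only [map_add, neg_add, ← hx, ← hy]; abel
  | tmul a y =>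
    have h1 := hF (a ⊗ₜ y)
    rw [TensorProduct.map_tmul, hbX, map_sub, map_neg, TensorProduct.map_tmul] at h1
    rw [hS_tmul, map_sub, hbY, hbY, h1, hbX, map_sub, hS_tmul, map_neg, hS_act F G u Fx hx hG,
      TensorProduct.map_tmul, lact_tmul, hc, eq_sub_of_add_eq (ih y)]
    simp only [TensorProduct.tmul_sub, TensorProduct.tmul_neg]
    abel

theorem hS_b0 (F G : A →ₗ[K] B) (u : B) (Gx : X →ₗ[K] X)
    (hc : ∀ a, G a * u = u * F a)
    (bX : A ⊗[K] X →ₗ[K] X)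
    (bY : B ⊗[K] X →ₗ[K] X) (bY' : B ⊗[K] (B ⊗[K] X) →ₗ[K] B ⊗[K] X)
    (hbY : ∀ a x, bY' (a ⊗ₜ x) = - lact X a x - a ⊗ₜ bY x)
    (ih : ∀ x, bY (u ⊗ₜ x) = - Gx x)
    (hF : ∀ x, bY (TensorProduct.map F LinearMap.id x) = bX x)
    (x : A ⊗[K] X) :
    bY' (hS F G u LinearMap.id (TensorProduct.mk K B X u) x) + u ⊗ₜ (bX x) =
      - TensorProduct.map G Gx x := by
  induction x with
  | zero => simp only [map_zero, neg_zero, TensorProduct.tmul_zero]; exact add_zero _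
  | add x y hx hy =>
    simp only [map_add, neg_add, ← hx, ← hy, TensorProduct.tmul_add]; abel
  | tmul a y =>
    have h1 := hF (a ⊗ₜ y)
    rw [TensorProduct.map_tmul, LinearMap.id_apply] at h1
    rw [hS_tmul, map_sub, hbY, hbY, LinearMap.id_apply, h1, TensorProduct.mk_apply, ih, lact_tmul,
      lact_tmul, hc, TensorProduct.map_tmul]
    simp only [TensorProduct.tmul_sub, TensorProduct.tmul_neg]
    abel
end step

section
variable (F G : MM εA εB) (u : B)
def kh : ∀ q : ℕ, BC K A q →ₗ[K] BT K B q
  | 0 => TensorProduct.mk K B (BC K B 0) u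
  | (q + 1) =>
    show BT K A q →ₗ[K] B ⊗[K] BT K B q from hS F.f G.f u (bm F.f q) (kh q)

def khT (q : ℕ) : BT K A q →ₗ[K] BT K B (q + 1) :=
  show BT K A q →ₗ[K] B ⊗[K] BT K B q from hS F.f G.f u (bm F.f q) (kh F G u q)

def bfstT (εB : B →ₐ[K] K) (q : ℕ) : BT K B (q + 1) →ₗ[K] BT K B q := bfst εB (q + 1)
def barBT (εB : B →ₐ[K] K) (q : ℕ) : BT K B (q + 1) →ₗ[K] BT K B q := barB K B εB (q + 1)

theorem kh_fst (hu : εB u = 1) (q : ℕ) (x : BT K A q) :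
    bfstT εB q (khT F G u q x) + kh F G u q (bfst εA q x) = bmT F.f q x :=
  hS_fst (εA := εA) (εB := εB) F.f G.f u (bm F.f q) (kh F G u q) hu G.aug (bfst εA q) (fun _ _ => rfl)
    (bfst εB (q + 1)) (fun _ _ => rfl) x

theorem kh_b (hu : εB u = 1) (hc : ∀ a, G.f a * u = u * F.f a) : ∀ (q : ℕ) (x : BT K A q),
    barBT εB q (khT F G u q x) + kh F G u q (barB K A εA q x) = - bmT G.f q x
  | 0, x => hS_b0 F.f G.f u LinearMap.id hc (barB K A εA 0) (barB K B εB 0) (barB K B εB 1)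
      (fun _ _ => rfl) (fun x => by
        show -(εB u • x) = - x
        rw [hu, one_smul]) (F.barB 0) x
  | (q + 1), x => hS_b F.f G.f u (bm F.f q) (bm G.f q) (kh F G u q) G.mul hc (barB K A εA q)
      (barB K A εA (q + 1)) (fun _ _ => rfl) (barB K B εB (q + 1)) (barB K B εB (q + 2))
      (fun _ _ => rfl) (kh_b hu hc q) (F.barB (q + 1)) x

theorem MM.htpy (hu : εB u = 1) (hc : ∀ a, G.f a * u = u * F.f a) (q : ℕ) :
    HEq F.hom G.hom q := by
  cases q with
  | zero =>
    intro z _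
    exact ⟨0, by rw [map_zero, add_zero]; rfl⟩
  | succ q =>
    intro (z : BT K A q) (hz : _root_.bard K A εA q z = 0)
    refine ⟨khT F G u q z, ?_⟩
    show bmT F.f q z = bmT G.f q z + (bfstT εB q (khT F G u q z) + barBT εB q (khT F G u q z))
    have h1 := kh_fst F G u hu q z
    have h2 := kh_b F G u hu hc q z
    have h3 : kh F G u q (GRP.bfst εA q z) + kh F G u q (_root_.barB K A εA q z) = 0 := by
      rw [← map_add, ← bard_eq, hz, map_zero]
    have key : ∀ a b c d e f : BT K B q, a + b = e → c + d = -f → b + d = 0 → e = f + (a + c) := by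
      intro a b c d e f h1 h2 h3
      rw [← h1, eq_neg_of_add_eq_zero_left h3, ← neg_eq_iff_eq_neg.mpr h2]; abel
    exact key _ _ _ _ _ _ h1 h2 h3
end

/-! comparison with torMap -/
theorem bm_eq (φ : A →ₐ[K] B) : ∀ q, bm φ.toLinearMap q = barMap K φ q
  | 0 => rfl
  | (q + 1) => by
    show TensorProduct.map φ.toLinearMap (bm φ.toLinearMap q) =
      TensorProduct.map φ.toLinearMap (barMap K φ q)
    rw [bm_eq φ q]

theorem cyc_eq (q : ℕ) : (barCx K A εA).cyc q = barCycles K A εA q := by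
  cases q <;> rfl

theorem torMap_bij (φ : A →ₐ[K] B) (h : εB.comp φ = εA) (q : ℕ)
    (h1 : HEpi (MM.ofAlg φ h).hom q) (h2 : HInj (MM.ofAlg φ h).hom q) :
    Function.Bijective (torMap K εA εB φ h q) := by
  have e : ∀ z, (MM.ofAlg φ h).hom.f q z = barMap K φ q z := fun z =>
    LinearMap.congr_fun (bm_eq φ q) z
  constructor
  · rw [← LinearMap.ker_eq_bot, LinearMap.ker_eq_bot']
    intro x hx
    obtain ⟨⟨z, hz⟩, rfl⟩ := Submodule.Quotient.mk_surjective _ x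
    have hx' := (Submodule.Quotient.mk_eq_zero _).1 hx
    obtain ⟨y, hy⟩ := hx'
    obtain ⟨w, hw⟩ := h2 z ((cyc_eq (A := A) (εA := εA) q).symm ▸ hz) y ((e z).trans hy.symm)
    exact (Submodule.Quotient.mk_eq_zero _).2 ⟨w, hw.symm⟩
  · intro x
    obtain ⟨⟨z', hz'⟩, rfl⟩ := Submodule.Quotient.mk_surjective _ x
    obtain ⟨z, hz, y, hy⟩ := h1 z' ((cyc_eq (A := B) (εA := εB) q).symm ▸ hz')
    refine ⟨Submodule.Quotient.mk ⟨z, cyc_eq (εA := εA) q ▸ hz⟩, ?_⟩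
    refine (Submodule.Quotient.eq _).2 ⟨y, ?_⟩
    show _root_.bard K B εB q y = barMap K φ q z - z'
    rw [← e]
    exact (sub_eq_of_eq_add' hy).symm
end
end GRP
end

noncomputable section
namespace GRP

/-! ### The bar complex of a group algebra -/

section
variable {K : Type} [CommRing K] {W : Type} [Group W]

variable (K) in
abbrev so (w : W) : MonoidAlgebra K W := MonoidAlgebra.single w 1

theorem aug_so (w : W) : groupAug K W (so K w) = 1 := by simp [groupAug, so]

variable (K W) in
def gb : ∀ q : ℕ, Tup W Unit q → BC K (MonoidAlgebra K W) q
  | _, .nil _ => (1 : K)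
  | (q + 1), .cons w t => show BT K (MonoidAlgebra K W) q from so K w ⊗ₜ[K] gb q t

variable (W) in
def tupE (q : ℕ) : W × Tup W Unit q ≃ Tup W Unit (q + 1) where
  toFun a := .cons a.1 a.2
  invFun t := match t with
    | .cons w t => (w, t)
  left_inv _ := rfl
  right_inv t := match t with
    | .cons _ _ => rfl

variable (W) in
def tup0 : Unit ≃ Tup W Unit 0 where
  toFun a := .nil a
  invFun _ := ()
  left_inv _ := rfl
  right_inv t := match t with
    | .nil _ => rfl

variable (K W) in
theorem gB : ∀ q : ℕ, ∃ b : Module.Basis (Tup W Unit q) K (BC K (MonoidAlgebra K W) q), ⇑b = gb K W q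
  | 0 => by
    refine ⟨(Module.Basis.singleton Unit K).reindex (tup0 W), ?_⟩
    have h : ∀ x, ((Module.Basis.singleton Unit K).reindex (tup0 W)) (Tup.nil x) = 1 := fun x => by
      rw [Module.Basis.reindex_apply]
      exact Module.Basis.singleton_apply _ _ _
    funext t
    revert t; exact Tup.ind0 fun x => h x
  | (q + 1) => by
    obtain ⟨b, hb⟩ := gB q
    refine ⟨show Module.Basis (Tup W Unit (q + 1)) K (BT K (MonoidAlgebra K W) q) from
      ((MonoidAlgebra.basis W K).tensorProduct b).reindex (tupE W q), ?_⟩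
    have h : ∀ w t, (((MonoidAlgebra.basis W K).tensorProduct b).reindex (tupE W q)) (Tup.cons w t) =
        so K w ⊗ₜ[K] gb K W q t := fun w t => by
      rw [Module.Basis.reindex_apply]
      refine (Module.Basis.tensorProduct_apply _ _ _ _).trans ?_
      rw [hb]
      show (MonoidAlgebra.basis W K) w ⊗ₜ[K] gb K W q t = so K w ⊗ₜ[K] gb K W q t
      congr 1
    funext t
    revert t; exact Tup.indS fun w t => h w t

variable (K W) in
def gJ (q : ℕ) : (Tup W Unit q →₀ K) →ₗ[K] BC K (MonoidAlgebra K W) q :=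
  Finsupp.linearCombination K (gb K W q)

theorem gJ_sg {q : ℕ} (t : Tup W Unit q) : gJ K W q (sg K t) = gb K W q t := by simp [gJ, sg]

theorem gJ_bij (q : ℕ) : Function.Bijective (gJ K W q) := by
  obtain ⟨b, hb⟩ := gB K W q
  have : ∀ x, gJ K W q x = b.repr.symm x := fun x => by
    rw [gJ, ← hb, Module.Basis.repr_symm_apply]
  have h2 : ⇑(gJ K W q) = b.repr.symm := funext this
  rw [h2]; exact b.repr.symm.bijective

theorem gJ_cons {q : ℕ} (w : W) (y : Tup W Unit q →₀ K) :
    gJ K W (q + 1) (consL K w y) = so K w ⊗ₜ[K] gJ K W q y := by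
  have : (show _ →ₗ[K] BT K (MonoidAlgebra K W) q from gJ K W (q + 1)).comp (consL K w) =
    (TensorProduct.mk K _ _ (so K w)).comp (gJ K W q) := by
    refine ext_sg fun t => ?_
    show gJ K W (q + 1) (consL K w (sg K t)) = so K w ⊗ₜ[K] gJ K W q (sg K t)
    rw [consL_sg, gJ_sg, gJ_sg]; rfl
  exact LinearMap.congr_fun this y

theorem gb_act0 (w : W) (t : Tup W Unit 0) :
    gb K W 0 (t.act w) = gb K W 0 t := by
  revert t; refine Tup.ind0 fun x => rfl

theorem gb_act {q : ℕ} (w : W) (t : Tup W Unit (q + 1)) :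
    gb K W (q + 1) (t.act w) = barActT K _ (groupAug K W) q (so K w) (gb K W (q + 1) t) := by
  revert t; refine Tup.indS fun w' t => ?_
  show so K (w * w') ⊗ₜ[K] gb K W q t = (so K w * so K w') ⊗ₜ[K] gb K W q t
  rw [MonoidAlgebra.single_mul_single, one_mul]

theorem gJ_bB : ∀ {q : ℕ} (t : Tup W Unit (q + 1)),
    gJ K W q (bB K t) = barB K _ (groupAug K W) q (gb K W (q + 1) t)
  | 0, t => by
    revert t; refine Tup.indS fun w t => ?_
    rw [bB_cons0, map_neg, gJ_sg, gb_act0]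
    show _ = - ((groupAug K W) (so K w) • gb K W 0 t)
    rw [aug_so, one_smul]
  | (q + 1), t => by
    revert t; refine Tup.indS fun w t => ?_
    rw [bB_cons, map_sub, map_neg, gJ_sg, gb_act]
    have h := gJ_bB t
    have h2 := gJ_cons w (bB K t)
    rw [h] at h2
    exact congrArg (fun z => - barActT K _ (groupAug K W) q (so K w) (gb K W (q + 1) t) - z) h2

variable (K W) in
theorem gJ_d (q : ℕ) (x : Tup W Unit (q + 1) →₀ K) :
    gJ K W q (dL q x) = bard K _ (groupAug K W) q (gJ K W (q + 1) x) := by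
  have : (gJ K W q).comp (dL q) = (bard K _ (groupAug K W) q).comp
      (show _ →ₗ[K] BT K (MonoidAlgebra K W) q from gJ K W (q + 1)) := by
    refine ext_sg fun t => ?_
    show gJ K W q (dL q (sg K t)) = bard K _ (groupAug K W) q (gJ K W (q + 1) (sg K t))
    rw [dL_sg, map_add, gJ_bB, gJ_sg, gJ_sg]
    refine Eq.trans ?_ (bard_eq (groupAug K W) q (gb K W (q + 1) t)).symm
    congr 1
    revert t; refine Tup.indS fun w t => ?_
    show gb K W q t = groupAug K W (so K w) • gb K W q t
    rw [aug_so, one_smul]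
  exact LinearMap.congr_fun this x

variable (K W) in
def gJh : CxHom (TC K W Unit) (barCx K (MonoidAlgebra K W) (groupAug K W)) where
  f q := gJ K W q
  comm q x := gJ_d K W q x

theorem bij_iso {C C' : Cx K} (f : CxHom C C') (h : ∀ q, Function.Bijective (f.f q)) (q : ℕ) :
    HEpi f q ∧ HInj f q := by
  constructor
  · intro z' hz'
    obtain ⟨z, rfl⟩ := (h q).2 z'
    refine ⟨z, ?_, 0, by simp⟩
    cases q with
    | zero => trivial
    | succ q =>
      apply (h q).1
      rw [f.comm, map_zero]; exact hz'
  · intro z hz y hy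
    obtain ⟨y, rfl⟩ := (h (q + 1)).2 y
    rw [← f.comm] at hy
    exact ⟨y, (h q).1 hy⟩

theorem gJh_iso (q : ℕ) : HEpi (gJh K W) q ∧ HInj (gJh K W) q := bij_iso _ gJ_bij q
end

section
variable (K : Type) [CommRing K] (G : Type) [Group G]

def wi {m n : ℕ} (h : m ≤ n) : MonoidAlgebra K (Wr G m) →ₐ[K] MonoidAlgebra K (Wr G n) :=
  MonoidAlgebra.mapDomainAlgHom K K (Subgroup.inclusion (Wr_mono h))

theorem wi_so {m n : ℕ} (h : m ≤ n) (w : Wr G m) :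
    wi K G h (so K w) = so K (Subgroup.inclusion (Wr_mono h) w) := by
  simp [wi, so]

theorem wi_aug {m n : ℕ} (h : m ≤ n) : (groupAug K (Wr G n)).comp (wi K G h) = groupAug K (Wr G m) := by
  apply MonoidAlgebra.algHom_ext
  · intro w
    rw [AlgHom.comp_apply]
    exact (congrArg _ (wi_so K G h w)).trans ((aug_so _).trans (aug_so _).symm)
  · exact Subsingleton.elim _ _

theorem gb_stab {m n : ℕ} (h : m ≤ n) {q : ℕ} (t : Tup (Wr G m) Unit q) :
    gb K _ q ((stab G h).tup t) = bm (wi K G h).toLinearMap q (gb K _ q t) := by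
  induction t with
  | nil x => rfl
  | cons w t ih =>
    refine Eq.trans ?_ (bmT_tmul (wi K G h).toLinearMap _ (so K w) (gb K _ _ t)).symm
    rw [← ih]
    exact congrArg (· ⊗ₜ[K] gb K _ _ ((stab G h).tup t)) (wi_so K G h w).symm

theorem stab_sq {m n : ℕ} (h : m ≤ n) :
    (gJh K (Wr G n)).comp ((stab G h).map K) =
      (MM.ofAlg (wi K G h) (wi_aug K G h)).hom.comp (gJh K (Wr G m)) := by
  refine CxHom.ext' fun q => ?_
  refine ext_sg (K := K) (C := Tup (Wr G m) Unit q) (M := BC K (MonoidAlgebra K (Wr G n)) q) fun t => ?_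
  show gJ K (Wr G n) q ((stab G h).mapL K q (sg K t)) = bm (wi K G h).toLinearMap q (gJ K (Wr G m) q (sg K t))
  rw [AF.mapL_sg, gJ_sg, gJ_sg, gb_stab]

theorem wi_stability (q n : ℕ) (hn : 2 * q + 2 ≤ n) :
    HEpi (MM.ofAlg (wi K G (Nat.sub_le n 1)) (wi_aug K G _)).hom q ∧
    HInj (MM.ofAlg (wi K G (Nat.sub_le n 1)) (wi_aug K G _)).hom q := by
  obtain ⟨h1, h2⟩ := wreath_stability K G q
  have e := stab_sq K G (Nat.sub_le n 1)
  have a := ((gJh_iso q).1.comp (h1 n (by omega)))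
  have b := ((gJh_iso q).2.comp (h2 n (by omega)))
  rw [e] at a b
  exact ⟨a.of_comp, b.of_comp_epi (gJh_iso q).1⟩
end
end GRP
end

noncomputable section
namespace GRP

/-! ### Presentation of the wreath product -/

structure Rels {G : Type} [Group G] {Γ : Type} [Monoid Γ] (n : ℕ) (s : ℕ → Γ) (t : G → ℕ → Γ) : Prop where
  ss : ∀ i, i + 1 < n → s i * s i = 1
  br : ∀ i, i + 2 < n → s i * s (i + 1) * s i = s (i + 1) * s i * s (i + 1)
  sc : ∀ i j, i + 1 < j → j + 1 < n → s i * s j = s j * s i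
  tm : ∀ g h j, j < n → t g j * t h j = t (g * h) j
  t1 : ∀ j, j < n → t 1 j = 1
  tt : ∀ g h j l, j < n → l < n → j ≠ l → t g j * t h l = t h l * t g j
  st : ∀ g i l, i + 1 < n → l < n → l ≠ i → l ≠ i + 1 → s i * t g l = t g l * s i
  sl : ∀ g i, i + 1 < n → s i * t g i = t g (i + 1) * s i
  sl' : ∀ g i, i + 1 < n → s i * t g (i + 1) = t g i * s i

section
variable {G : Type} [Group G] {Γ : Type} [Monoid Γ] {n : ℕ} {s : ℕ → Γ} {t : G → ℕ → Γ}

def cyw (s : ℕ → Γ) : ℕ → ℕ → Γ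
  | 0, _ => 1
  | (d + 1), i => s i * cyw s d (i + 1)

theorem cyw_a (R : Rels n s t) : ∀ d i j, i + d < n → j + 1 < i → s j * cyw s d i = cyw s d i * s j
  | 0, i, j, _, _ => by simp [cyw]
  | (d + 1), i, j, h, h' => by
    rw [cyw, ← mul_assoc, R.sc j i h' (by omega), mul_assoc, cyw_a R d (i + 1) j (by omega) (by omega),
      mul_assoc]

theorem cyw_b (R : Rels n s t) : ∀ d i j, i + d < n → i ≤ j → j + 1 < i + d →
    s (j + 1) * cyw s d i = cyw s d i * s j
  | 0, i, j, _, _, _ => by omega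
  | 1, i, j, _, _, _ => by omega
  | (d + 2), i, j, h, h', h2 => by
    rcases Nat.eq_or_lt_of_le h' with rfl | h3
    · have h4 := R.br i (by omega)
      have h5 := cyw_a R d (i + 2) i (by omega) (by omega)
      calc s (i + 1) * (s i * (s (i + 1) * cyw s d (i + 2)))
          = (s (i + 1) * s i * s (i + 1)) * cyw s d (i + 2) := by simp only [mul_assoc]
        _ = s i * s (i + 1) * (s i * cyw s d (i + 2)) := by rw [← h4]; simp only [mul_assoc]
        _ = _ := by rw [h5]; simp only [cyw, mul_assoc]
    · have h4 := R.sc i (j + 1) (by omega) (by omega)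
      rw [cyw, ← mul_assoc, ← h4, mul_assoc, cyw_b R (d + 1) (i + 1) j (by omega) (by omega) (by omega),
        mul_assoc]

theorem cyw_c (R : Rels n s t) (g : G) : ∀ d i j, i + d < n → j < i →
    t g j * cyw s d i = cyw s d i * t g j
  | 0, i, j, _, _ => by simp [cyw]
  | (d + 1), i, j, h, h' => by
    rw [cyw, ← mul_assoc, ← R.st g i j (by omega) (by omega) (by omega) (by omega), mul_assoc,
      cyw_c R g d (i + 1) j (by omega) (by omega), mul_assoc]

theorem cyw_d (R : Rels n s t) (g : G) : ∀ d i j, i + d < n → i ≤ j → j < i + d →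
    t g (j + 1) * cyw s d i = cyw s d i * t g j
  | 0, i, j, _, _, _ => by omega
  | (d + 1), i, j, h, h', h2 => by
    rcases Nat.eq_or_lt_of_le h' with rfl | h3
    · rw [cyw, ← mul_assoc, ← R.sl g i (by omega), mul_assoc, cyw_c R g d (i + 1) i (by omega) (by omega),
        mul_assoc]
    · rw [cyw, ← mul_assoc, ← R.st g i (j + 1) (by omega) (by omega) (by omega) (by omega), mul_assoc,
        cyw_d R g d (i + 1) j (by omega) (by omega) (by omega), mul_assoc]

/-- parabolic submonoids -/
def Gm (s : ℕ → Γ) (t : G → ℕ → Γ) (m : ℕ) : Submonoid Γ :=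
  Submonoid.closure ({x | ∃ i, i + 1 < m ∧ x = s i} ∪ {x | ∃ g j, j < m ∧ x = t g j})

theorem s_mem_Gm {m i : ℕ} (h : i + 1 < m) : s i ∈ Gm s t m :=
  Submonoid.subset_closure (Or.inl ⟨i, h, rfl⟩)

theorem t_mem_Gm {m j : ℕ} (g : G) (h : j < m) : t g j ∈ Gm s t m :=
  Submonoid.subset_closure (Or.inr ⟨g, j, h, rfl⟩)

theorem Gm_nf (R : Rels n s t) {m : ℕ} (hm : m + 1 ≤ n) {x : Γ} (hx : x ∈ Gm s t (m + 1)) :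
    ∃ g i, i ≤ m ∧ ∃ y ∈ Gm s t m, x = t g i * (cyw s (m - i) i * y) := by
  induction hx using Submonoid.closure_induction_left with
  | one => exact ⟨1, m, le_rfl, 1, Submonoid.one_mem _, by simp [cyw, R.t1 m (by omega)]⟩
  | mul_left x hx x' _ ih =>
    obtain ⟨g, i, hi, y, hy, rfl⟩ := ih
    rcases hx with ⟨j, hj, rfl⟩ | ⟨h, j, hj, rfl⟩
    · by_cases h1 : j = i
      · subst h1
        refine ⟨g, j + 1, by omega, y, hy, ?_⟩
        rw [← mul_assoc, R.sl g j (by omega), mul_assoc, show m - j = (m - (j + 1)) + 1 by omega, cyw,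
          ← mul_assoc (s j), ← mul_assoc (s j), R.ss j (by omega), one_mul]
      by_cases h2 : j + 1 = i
      · subst h2
        refine ⟨g, j, by omega, y, hy, ?_⟩
        rw [← mul_assoc, R.sl' g j (by omega), mul_assoc, show m - j = (m - (j + 1)) + 1 by omega, cyw,
          ← mul_assoc (s j)]
      have h3 : ∃ j', j' + 1 < m ∧ s j * cyw s (m - i) i = cyw s (m - i) i * s j' := by
        by_cases h4 : j + 1 < i
        · exact ⟨j, by omega, cyw_a R _ _ _ (by omega) h4⟩
        · obtain ⟨j, rfl⟩ : ∃ l, j = l + 1 := ⟨j - 1, by omega⟩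
          exact ⟨j, by omega, cyw_b R _ _ _ (by omega) (by omega) (by omega)⟩
      obtain ⟨j', hj', h5⟩ := h3
      refine ⟨g, i, hi, s j' * y, Submonoid.mul_mem _ (s_mem_Gm hj') hy, ?_⟩
      rw [← mul_assoc, R.st g j i (by omega) (by omega) (by omega) (by omega), mul_assoc,
        ← mul_assoc (s j), h5, mul_assoc]
    · by_cases h1 : j = i
      · subst h1
        exact ⟨h * g, j, hi, y, hy, by rw [← mul_assoc, R.tm h g j (by omega)]⟩
      have h3 : ∃ j', j' < m ∧ t h j * cyw s (m - i) i = cyw s (m - i) i * t h j' := by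
        by_cases h4 : j < i
        · exact ⟨j, by omega, cyw_c R _ _ _ _ (by omega) h4⟩
        · obtain ⟨j, rfl⟩ : ∃ l, j = l + 1 := ⟨j - 1, by omega⟩
          exact ⟨j, by omega, cyw_d R _ _ _ _ (by omega) (by omega) (by omega)⟩
      obtain ⟨j', hj', h5⟩ := h3
      refine ⟨g, i, hi, t h j' * y, Submonoid.mul_mem _ (t_mem_Gm h hj') hy, ?_⟩
      rw [← mul_assoc, R.tt h g j i (by omega) (by omega) h1, mul_assoc,
        ← mul_assoc (t h j), h5, mul_assoc]

variable {Φ : Γ →* Equiv.Perm (ℕ × G)}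

theorem Gm_Wr (hs : ∀ i, i + 1 < n → Φ (s i) = sw i (i + 1)) (ht : ∀ g j, j < n → Φ (t g j) = tl g j)
    {m : ℕ} (hm : m ≤ n) {x : Γ} (hx : x ∈ Gm s t m) : Φ x ∈ Wr G m := by
  induction hx using Submonoid.closure_induction with
  | mem x hx =>
    rcases hx with ⟨j, hj, rfl⟩ | ⟨h, j, hj, rfl⟩
    · rw [hs j (by omega)]; exact sw_mem (by omega) (by omega)
    · rw [ht _ _ (by omega)]; exact tl_mem _ hj
  | one => rw [map_one]; exact Subgroup.one_mem _
  | mul x y _ _ hx hy => rw [map_mul]; exact Subgroup.mul_mem _ hx hy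

theorem Phi_cyw (hs : ∀ i, i + 1 < n → Φ (s i) = sw i (i + 1)) (g : G) : ∀ d i, i + d < n →
    Φ (cyw s d i) (i + d, g) = (i, g)
  | 0, i, _ => by simp [cyw]
  | (d + 1), i, h => by
    rw [cyw, map_mul, Equiv.Perm.mul_apply, show i + (d + 1) = i + 1 + d by omega,
      Phi_cyw hs g d (i + 1) (by omega), hs i (by omega)]
    simp

theorem Phi_nf (hs : ∀ i, i + 1 < n → Φ (s i) = sw i (i + 1)) (ht : ∀ g j, j < n → Φ (t g j) = tl g j)
    {m : ℕ} (hm : m + 1 ≤ n) (g : G) (i : ℕ) (hi : i ≤ m) (y : Γ) (hy : Φ y ∈ Wr G m) :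
    Φ (t g i * (cyw s (m - i) i * y)) (m, 1) = (i, g) := by
  rw [map_mul, map_mul, Equiv.Perm.mul_apply, Equiv.Perm.mul_apply, hy.2 m 1 le_rfl]
  have := Phi_cyw hs (1 : G) (m - i) i (by omega)
  rw [show i + (m - i) = m by omega] at this
  rw [this, ht _ _ (by omega)]
  simp [tl_apply]

theorem Gm_inj (R : Rels n s t) (hs : ∀ i, i + 1 < n → Φ (s i) = sw i (i + 1))
    (ht : ∀ g j, j < n → Φ (t g j) = tl g j) : ∀ m, m ≤ n → ∀ x ∈ Gm s t m, ∀ x' ∈ Gm s t m,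
    Φ x = Φ x' → x = x'
  | 0, _, x, hx, x', hx', _ => by
    have : Gm s t 0 = ⊥ := by
      rw [Gm, eq_bot_iff, Submonoid.closure_le]
      rintro x (⟨i, hi, _⟩ | ⟨g, j, hj, _⟩)
      · omega
      · omega
    rw [this, Submonoid.mem_bot] at hx hx'
    rw [hx, hx']
  | (m + 1), hm, x, hx, x', hx', e => by
    obtain ⟨g, i, hi, y, hy, rfl⟩ := Gm_nf R hm hx
    obtain ⟨g', i', hi', y', hy', rfl⟩ := Gm_nf R hm hx'
    have h1 := Phi_nf hs ht hm g i hi y (Gm_Wr hs ht (by omega) hy)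
    have h2 := Phi_nf hs ht hm g' i' hi' y' (Gm_Wr hs ht (by omega) hy')
    rw [e, h2] at h1
    obtain ⟨rfl, rfl⟩ := Prod.mk.inj h1
    rw [map_mul, map_mul, map_mul, map_mul] at e
    rw [Gm_inj R hs ht m (by omega) y hy y' hy' (mul_left_cancel (mul_left_cancel e))]

theorem cyw_mem {m : ℕ} : ∀ d i, i + d < m → cyw s d i ∈ Gm s t m
  | 0, i, _ => Submonoid.one_mem _
  | (d + 1), i, h => Submonoid.mul_mem _ (s_mem_Gm (by omega)) (cyw_mem d (i + 1) (by omega))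

theorem Gm_mono {m m' : ℕ} (h : m ≤ m') : Gm s t m ≤ Gm s t m' := by
  apply Submonoid.closure_mono
  rintro x (⟨i, hi, rfl⟩ | ⟨g, j, hj, rfl⟩)
  · exact Or.inl ⟨i, by omega, rfl⟩
  · exact Or.inr ⟨g, j, by omega, rfl⟩

theorem Gm_surj (hs : ∀ i, i + 1 < n → Φ (s i) = sw i (i + 1))
    (ht : ∀ g j, j < n → Φ (t g j) = tl g j) : ∀ m, m ≤ n → ∀ σ ∈ Wr G m, ∃ x ∈ Gm s t m, Φ x = σ
  | 0, _, σ, hσ => ⟨1, Submonoid.one_mem _, by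
      rw [map_one]; ext1 a; exact (hσ.2 a.1 a.2 (Nat.zero_le _)).symm⟩
  | (m + 1), hm, σ, hσ => by
    rcases e : σ (m, 1) with ⟨i, g⟩
    have hi : i < m + 1 := by
      have := Wr_lt hσ (a := (m, 1)) (by simp)
      rw [e] at this; exact this
    have hx : t g i * cyw s (m - i) i ∈ Gm s t (m + 1) :=
      Submonoid.mul_mem _ (t_mem_Gm g hi) (cyw_mem _ _ (by omega))
    have h1 := Phi_nf hs ht hm g i (by omega) 1 (by rw [map_one]; exact Subgroup.one_mem _)
    rw [mul_one] at h1
    have h2 := Subgroup.mul_mem _ (Subgroup.inv_mem _ (Gm_Wr hs ht hm hx)) hσ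
    obtain ⟨y, hy, hy'⟩ := Gm_surj hs ht m (by omega) ((Φ (t g i * cyw s (m - i) i))⁻¹ * σ) ⟨h2.1, by
      intro l h hl
      rcases Nat.eq_or_lt_of_le hl with rfl | hl
      · have h3 := h2.1 m 1 h
        rw [one_mul, Equiv.Perm.mul_apply, Equiv.Perm.mul_apply, e,
          Equiv.Perm.inv_eq_iff_eq.mpr h1.symm, one_mul] at h3
        exact h3
      · exact h2.2 l h hl⟩
    refine ⟨_, Submonoid.mul_mem _ hx (Gm_mono (Nat.le_succ m) hy), ?_⟩
    rw [map_mul, hy', mul_inv_cancel_left]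
end

section
variable {G : Type} [Group G]

theorem Wr_rels (n : ℕ) : Rels n (fun i => (sw i (i + 1) : Equiv.Perm (ℕ × G))) (fun g j => tl g j) where
  ss i _ := by ext1 a; simp
  br i _ := by
    ext1 a
    simp only [Equiv.Perm.mul_apply, sw_apply]
    congr 1
    simp only [Equiv.swap_apply_def]
    grind
  sc i j _ _ := by
    ext1 a
    simp only [Equiv.Perm.mul_apply, sw_apply]
    congr 1
    simp only [Equiv.swap_apply_def]
    grind
  tm g h j _ := by
    ext1 a
    simp only [Equiv.Perm.mul_apply, tl_apply]
    by_cases h : a.1 = j <;> simp [h, mul_assoc]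
  t1 j _ := by
    ext1 a
    simp only [tl_apply]
    by_cases h : a.1 = j <;> simp [h]
    exact Prod.ext h.symm rfl
  tt g h j l _ _ _ := by
    ext1 a
    simp only [Equiv.Perm.mul_apply, tl_apply]
    grind
  st g i l _ _ _ _ := by
    ext1 a
    simp only [Equiv.Perm.mul_apply, tl_apply, sw_apply, Equiv.swap_apply_def]
    grind
  sl g i _ := by
    ext1 a
    simp only [Equiv.Perm.mul_apply, tl_apply, sw_apply, Equiv.swap_apply_def]
    grind
  sl' g i _ := by
    ext1 a
    simp only [Equiv.Perm.mul_apply, tl_apply, sw_apply, Equiv.swap_apply_def]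
    grind

variable {M : Type} [Monoid M] {n : ℕ} {s : ℕ → M} {t : G → ℕ → M}

/-- The universal property of the wreath product. -/
theorem exists_psi (R : Rels n s t) : ∃ ψ : Wr G n →* M,
    (∀ i (h : i + 1 < n), ψ ⟨sw i (i + 1), sw_mem (by omega) h⟩ = s i) ∧
    (∀ g j (h : j < n), ψ ⟨tl g j, tl_mem g h⟩ = t g j) := by
  let s' : ℕ → M × Equiv.Perm (ℕ × G) := fun i => (s i, sw i (i + 1))
  let t' : G → ℕ → M × Equiv.Perm (ℕ × G) := fun g i => (t g i, tl g i)
  have W := Wr_rels (G := G) n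
  have R' : Rels n s' t' :=
    { ss := fun i h => Prod.ext (R.ss i h) (W.ss i h)
      br := fun i h => Prod.ext (R.br i h) (W.br i h)
      sc := fun i j h h' => Prod.ext (R.sc i j h h') (W.sc i j h h')
      tm := fun g h j hj => Prod.ext (R.tm g h j hj) (W.tm g h j hj)
      t1 := fun j hj => Prod.ext (R.t1 j hj) (W.t1 j hj)
      tt := fun g h j l a b c => Prod.ext (R.tt g h j l a b c) (W.tt g h j l a b c)
      st := fun g i l a b c d => Prod.ext (R.st g i l a b c d) (W.st g i l a b c d)
      sl := fun g i h => Prod.ext (R.sl g i h) (W.sl g i h)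
      sl' := fun g i h => Prod.ext (R.sl' g i h) (W.sl' g i h) }
  have hs : ∀ i, i + 1 < n → MonoidHom.snd M (Equiv.Perm (ℕ × G)) (s' i) = sw i (i + 1) := fun _ _ => rfl
  have ht : ∀ g j, j < n → MonoidHom.snd M (Equiv.Perm (ℕ × G)) (t' g j) = tl g j := fun _ _ _ => rfl
  have inj := Gm_inj R' hs ht n le_rfl
  have surj : ∀ σ : Wr G n, ∃ x, (x, σ.1) ∈ Gm s' t' n := fun σ => by
    obtain ⟨⟨x, y⟩, hx, rfl⟩ := Gm_surj (s := s') (t := t') hs ht n le_rfl σ.1 σ.2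
    exact ⟨x, hx⟩
  choose ψ hψ using surj
  have uniq : ∀ (σ : Wr G n) x, (x, σ.1) ∈ Gm s' t' n → ψ σ = x := fun σ x hx =>
    congrArg Prod.fst (inj _ (hψ σ) _ hx rfl)
  refine ⟨⟨⟨ψ, uniq 1 1 (Submonoid.one_mem _)⟩, fun a b => uniq _ _ (Submonoid.mul_mem _ (hψ a) (hψ b))⟩,
    fun i h => uniq _ _ (s_mem_Gm h), fun g j h => uniq _ _ (t_mem_Gm g h)⟩

/-- generation -/
theorem Wr_ind {n : ℕ} {p : Wr G n → Prop} (h1 : p 1) (hm : ∀ a b, p a → p b → p (a * b))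
    (hs : ∀ i (h : i + 1 < n), p ⟨sw i (i + 1), sw_mem (by omega) h⟩)
    (ht : ∀ g j (h : j < n), p ⟨tl g j, tl_mem g h⟩) (w : Wr G n) : p w := by
  obtain ⟨x, hx, e⟩ := Gm_surj (Φ := MonoidHom.id (Equiv.Perm (ℕ × G)))
    (s := fun i => sw i (i + 1)) (t := fun g i => tl g i) (n := n)
    (fun _ _ => rfl) (fun _ _ _ => rfl) n le_rfl w.1 w.2
  have key : ∀ x ∈ Gm (fun i => (sw i (i + 1) : Equiv.Perm (ℕ × G))) (fun g i => tl g i) n,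
      ∃ h : x ∈ Wr G n, p ⟨x, h⟩ := by
    intro x hx
    induction hx using Submonoid.closure_induction with
    | mem x hx =>
      rcases hx with ⟨j, hj, rfl⟩ | ⟨h, j, hj, rfl⟩
      · exact ⟨_, hs j hj⟩
      · exact ⟨_, ht h j hj⟩
    | one => exact ⟨_, h1⟩
    | mul x y _ _ hx hy =>
      obtain ⟨a, ha⟩ := hx
      obtain ⟨b, hb⟩ := hy
      exact ⟨_, hm _ _ ha hb⟩
  obtain ⟨h, hp⟩ := key x hx
  have : w = ⟨x, h⟩ := Subtype.ext e.symm
  rw [this]; exact hp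
end
end GRP
end

noncomputable section
namespace GRP

section
variable (K G : Type) [CommRing K] [Group G] (n : ℕ) (e : K)

def rS (i : ℕ) : GRAlg K G n e :=
  if h : i + 1 < n then RingQuot.mkAlgHom K (GRRel K G n e) (GRs K G n ⟨i, by omega⟩) else 1
def rP (i : ℕ) : GRAlg K G n e :=
  if h : i < n then RingQuot.mkAlgHom K (GRRel K G n e) (GRp K G n ⟨i, h⟩) else 0
def rT (g : G) (i : ℕ) : GRAlg K G n e :=
  if h : i < n then RingQuot.mkAlgHom K (GRRel K G n e) (GRt K G n g ⟨i, h⟩) else 1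

variable {K G n e}

theorem rS_eq {i : ℕ} (h : i + 1 < n) : rS K G n e i =
    RingQuot.mkAlgHom K (GRRel K G n e) (GRs K G n ⟨i, by omega⟩) := dif_pos h
theorem rP_eq {i : ℕ} (h : i < n) : rP K G n e i =
    RingQuot.mkAlgHom K (GRRel K G n e) (GRp K G n ⟨i, h⟩) := dif_pos h
theorem rT_eq (g : G) {i : ℕ} (h : i < n) : rT K G n e g i =
    RingQuot.mkAlgHom K (GRRel K G n e) (GRt K G n g ⟨i, h⟩) := dif_pos h

theorem rook_rels : Rels n (rS K G n e) (rT K G n e) where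
  ss i h := by
    rw [rS_eq h, ← map_mul, ← map_one (RingQuot.mkAlgHom K (GRRel K G n e))]
    exact RingQuot.mkAlgHom_rel K (GRRel.s_sq _)
  br i h := by
    rw [rS_eq (by omega), rS_eq (by omega)]
    simp only [← map_mul]
    exact RingQuot.mkAlgHom_rel K (GRRel.s_braid _ _ rfl)
  sc i j h h' := by
    rw [rS_eq (by omega), rS_eq (by omega)]
    simp only [← map_mul]
    exact RingQuot.mkAlgHom_rel K (GRRel.ss_comm _ _ h)
  tm g h j hj := by
    rw [rT_eq _ hj, rT_eq _ hj, rT_eq _ hj, ← map_mul]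
    exact RingQuot.mkAlgHom_rel K (GRRel.t_mul _ _ _)
  t1 j hj := by
    rw [rT_eq _ hj, ← map_one (RingQuot.mkAlgHom K (GRRel K G n e))]
    exact RingQuot.mkAlgHom_rel K (GRRel.t_one _)
  tt g h j l hj hl hjl := by
    rw [rT_eq _ hj, rT_eq _ hl, ← map_mul, ← map_mul]
    exact RingQuot.mkAlgHom_rel K (GRRel.tt_comm _ _ _ _ (by simpa using hjl))
  st g i l hi hl h h' := by
    rw [rS_eq hi, rT_eq _ hl, ← map_mul, ← map_mul]
    exact RingQuot.mkAlgHom_rel K (GRRel.st_comm _ _ _ ⟨h, h'⟩)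
  sl g i h := by
    rw [rS_eq h, rT_eq g (i := i) (by omega), rT_eq g h, ← map_mul, ← map_mul]
    exact RingQuot.mkAlgHom_rel K (GRRel.st_slide _ _ _ _ rfl rfl)
  sl' g i h := by
    rw [rS_eq h, rT_eq g (i := i) (by omega), rT_eq g h, ← map_mul, ← map_mul]
    exact RingQuot.mkAlgHom_rel K (GRRel.st_slide' _ _ _ _ rfl rfl)

theorem rP_sq {j : ℕ} (h : j < n) : rP K G n e j * rP K G n e j = e • rP K G n e j := by
  rw [rP_eq h, ← map_mul, ← map_smul]
  exact RingQuot.mkAlgHom_rel K (GRRel.p_sq _)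

theorem rP_comm {j l : ℕ} (h : j < n) (hl : l < n) : Commute (rP K G n e j) (rP K G n e l) := by
  have key : ∀ j l : ℕ, j < n → l < n → j < l → Commute (rP K G n e j) (rP K G n e l) := by
    intro j l hj hl h
    rw [Commute, SemiconjBy, rP_eq hj, rP_eq hl, ← map_mul, ← map_mul]
    exact RingQuot.mkAlgHom_rel K (GRRel.pp_comm _ _ h)
  rcases lt_trichotomy j l with a | a | a
  · exact key _ _ h hl a
  · rw [a]
  · exact (key _ _ hl h a).symm

theorem rSP {i l : ℕ} (hi : i + 1 < n) (hl : l < n) (h : l ≠ i) (h' : l ≠ i + 1) :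
    Commute (rS K G n e i) (rP K G n e l) := by
  rw [Commute, SemiconjBy, rS_eq hi, rP_eq hl, ← map_mul, ← map_mul]
  exact RingQuot.mkAlgHom_rel K (GRRel.sp_comm _ _ ⟨h, h'⟩)

theorem rSP1 {i : ℕ} (h : i + 1 < n) :
    rS K G n e i * rP K G n e i = rP K G n e (i + 1) * rS K G n e i := by
  rw [rS_eq h, rP_eq (i := i) (by omega), rP_eq h, ← map_mul, ← map_mul]
  exact RingQuot.mkAlgHom_rel K (GRRel.sp_slide _ _ _ rfl rfl)

theorem rSP2 {i : ℕ} (h : i + 1 < n) :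
    rS K G n e i * rP K G n e (i + 1) = rP K G n e i * rS K G n e i := by
  rw [rS_eq h, rP_eq (i := i) (by omega), rP_eq h, ← map_mul, ← map_mul]
  exact RingQuot.mkAlgHom_rel K (GRRel.sp_slide' _ _ _ rfl rfl)

theorem rTP (g : G) {j l : ℕ} (hj : j < n) (hl : l < n) :
    Commute (rT K G n e g j) (rP K G n e l) := by
  rw [Commute, SemiconjBy]
  by_cases h : j = l
  · subst h
    rw [rT_eq g hj, rP_eq hj, ← map_mul, ← map_mul]
    exact (RingQuot.mkAlgHom_rel K (GRRel.tp_absorb _ _)).trans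
      (RingQuot.mkAlgHom_rel K (GRRel.pt_absorb _ _)).symm
  · rw [rT_eq g hj, rP_eq hl, ← map_mul, ← map_mul]
    exact RingQuot.mkAlgHom_rel K (GRRel.tp_comm _ _ _ (by simpa using h))

theorem GR_ind {p : GRAlg K G n e → Prop} (hc : ∀ c, p (algebraMap K _ c))
    (ha : ∀ a b, p a → p b → p (a + b)) (hm : ∀ a b, p a → p b → p (a * b))
    (hs : ∀ i, i + 1 < n → p (rS K G n e i)) (hp : ∀ j, j < n → p (rP K G n e j))
    (ht : ∀ g j, j < n → p (rT K G n e g j)) (a) : p a := by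
  obtain ⟨x, rfl⟩ := RingQuot.mkAlgHom_surjective K (GRRel K G n e) a
  induction x using FreeAlgebra.induction with
  | grade0 r => rw [AlgHom.commutes]; exact hc r
  | grade1 x =>
    cases x with
    | s i => have := hs i (by omega); rwa [rS_eq (by omega)] at this
    | p i => have := hp i i.2; rwa [rP_eq i.2] at this
    | t g i => have := ht g i i.2; rwa [rT_eq g i.2] at this
  | mul a b ha hb => rw [map_mul]; exact hm _ _ ha hb
  | add a b ha' hb => rw [map_add]; exact ha _ _ ha' hb

/-! the central idempotent -/
variable (K G n e) in
def rz (e' : K) (j : ℕ) : GRAlg K G n e := 1 - e' • rP K G n e j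
variable (K G n e) in
def rZ (e' : K) : ℕ → GRAlg K G n e
  | 0 => 1
  | (m + 1) => rZ e' m * rz K G n e e' m

theorem comm_rz {a : GRAlg K G n e} {e' : K} {j : ℕ} (h : Commute a (rP K G n e j)) :
    Commute a (rz K G n e e' j) := (Commute.one_right a).sub_right (h.smul_right e')

theorem comm_rZ {a : GRAlg K G n e} {e' : K} : ∀ m, (∀ j < m, Commute a (rP K G n e j)) →
    Commute a (rZ K G n e e' m)
  | 0, _ => Commute.one_right a
  | (m + 1), h => (comm_rZ m (fun j hj => h j (by omega))).mul_right (comm_rz (h m (by omega)))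

theorem rS_rZ {i : ℕ} (hi : i + 1 < n) {e' : K} : ∀ d, i + 2 + d ≤ n →
    Commute (rS K G n e i) (rZ K G n e e' (i + 2 + d))
  | 0, _ => by
    show Commute _ (rZ K G n e e' i * rz K G n e e' i * rz K G n e e' (i + 1))
    rw [mul_assoc]
    refine (comm_rZ i (fun j hj => rSP hi (by omega) (by omega) (by omega))).mul_right ?_
    have h1 : rS K G n e i * rz K G n e e' i = rz K G n e e' (i + 1) * rS K G n e i := by
      simp only [rz, mul_sub, sub_mul, mul_one, one_mul, mul_smul_comm, smul_mul_assoc, rSP1 hi]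
    have h2 : rS K G n e i * rz K G n e e' (i + 1) = rz K G n e e' i * rS K G n e i := by
      simp only [rz, mul_sub, sub_mul, mul_one, one_mul, mul_smul_comm, smul_mul_assoc, rSP2 hi]
    have h3 : Commute (rz K G n e e' i) (rz K G n e e' (i + 1)) :=
      comm_rz (comm_rz (rP_comm (j := i + 1) (l := i) (by omega) (by omega))).symm
    rw [Commute, SemiconjBy, ← mul_assoc, h1, mul_assoc, h2, ← mul_assoc, h3.symm.eq]
  | (d + 1), h => (rS_rZ hi d (by omega)).mul_right
      (comm_rz (rSP (l := i + 2 + d) hi (by omega) (by omega) (by omega)))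

theorem rZ_central {e' : K} (a : GRAlg K G n e) : Commute a (rZ K G n e e' n) := by
  induction a using GR_ind with
  | hc c => exact Algebra.commute_algebraMap_left _ _
  | ha a b h h' => exact h.add_left h'
  | hm a b h h' => exact h.mul_left h'
  | hs i h =>
    obtain ⟨d, rfl⟩ := Nat.exists_eq_add_of_le (show i + 2 ≤ n by omega)
    exact rS_rZ h d le_rfl
  | hp j h => exact comm_rZ n (fun l hl => rP_comm h hl)
  | ht g j h => exact comm_rZ n (fun l hl => rTP g h hl)

theorem rZ_rP {e' : K} (he : e' * e = 1) {j : ℕ} : ∀ m, m ≤ n → j < m →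
    rZ K G n e e' m * rP K G n e j = 0
  | (m + 1), hm, h => by
    have h1 : rz K G n e e' m * rP K G n e m = 0 := by
      rw [rz, sub_mul, one_mul, smul_mul_assoc, rP_sq (by omega), smul_smul, he, one_smul, sub_self]
    rcases Nat.eq_or_lt_of_le (Nat.le_of_lt_succ h) with rfl | hj
    · rw [rZ, mul_assoc, h1, mul_zero]
    · have h2 : Commute (rP K G n e j) (rz K G n e e' m) := comm_rz (rP_comm (by omega) (by omega))
      rw [rZ, mul_assoc, ← h2.eq, ← mul_assoc, rZ_rP he m (by omega) hj, zero_mul]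

theorem rZ_rZ {e' : K} (he : e' * e = 1) : ∀ m, m ≤ n →
    rZ K G n e e' n * rZ K G n e e' m = rZ K G n e e' n
  | 0, _ => mul_one _
  | (m + 1), h => by
    rw [rZ, ← mul_assoc, rZ_rZ he m (by omega), rz, mul_sub, mul_one, mul_smul_comm,
      rZ_rP he n le_rfl (by omega), smul_zero, sub_zero]

theorem map_rZ {B : Type} [Ring B] [Algebra K B] (φ : GRAlg K G n e →ₐ[K] B)
    (h : ∀ j, j < n → φ (rP K G n e j) = 0) {e' : K} : ∀ m, m ≤ n → φ (rZ K G n e e' m) = 1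
  | 0, _ => map_one _
  | (m + 1), hm => by
    rw [rZ, map_mul, map_rZ φ h m (by omega), rz, map_sub, map_smul, h m (by omega)]
    simp

theorem aug_rS {i : ℕ} (h : i + 1 < n) : GRaug K G n e (rS K G n e i) = 1 := by
  rw [rS_eq h]; simp [GRaug, RingQuot.liftAlgHom_mkAlgHom_apply]
theorem aug_rP {i : ℕ} (h : i < n) : GRaug K G n e (rP K G n e i) = 0 := by
  rw [rP_eq h]; simp [GRaug, RingQuot.liftAlgHom_mkAlgHom_apply]
theorem aug_rT (g : G) {i : ℕ} (h : i < n) : GRaug K G n e (rT K G n e g i) = 1 := by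
  rw [rT_eq g h]; simp [GRaug, RingQuot.liftAlgHom_mkAlgHom_apply]

end
end GRP
end

noncomputable section
namespace GRP

section
variable (K G : Type) [CommRing K] [Group G] (n : ℕ) (e : K)

abbrev ws (i : Fin (n - 1)) : Wr G n := ⟨sw i (i + 1), sw_mem (by omega) (by omega)⟩
abbrev wt (g : G) (j : Fin n) : Wr G n := ⟨tl g j, tl_mem g j.2⟩

def genMap : GRGen n G → MonoidAlgebra K (Wr G n)
  | .s i => so K (ws G n i)
  | .p _ => 0
  | .t g j => so K (wt G n g j)

theorem so_mul {W : Type} [Group W] (a b : W) : so K a * so K b = so K (a * b) := by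
  simp [so]
theorem so_one {W : Type} [Group W] : so K (1 : W) = 1 := rfl

theorem genMap_rel {x y : FreeAlgebra K (GRGen n G)} (h : GRRel K G n e x y) :
    FreeAlgebra.lift K (genMap K G n) x = FreeAlgebra.lift K (genMap K G n) y := by
  have W := Wr_rels (G := G) n
  have hl : ∀ x, FreeAlgebra.lift K (genMap K G n) (FreeAlgebra.ι K x) = genMap K G n x := fun x =>
    FreeAlgebra.lift_ι_apply _ _
  induction h with
  | s_sq i =>
    simp only [map_mul, map_one, hl, genMap, so_mul]
    rw [← so_one]; congr 1; exact Subtype.ext (W.ss i (by omega))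
  | s_braid i j h =>
    obtain ⟨j, hj⟩ := j
    simp only at h
    subst h
    simp only [map_mul, hl, genMap, so_mul]
    congr 1; exact Subtype.ext (W.br i (by omega))
  | ss_comm i j h =>
    simp only [map_mul, hl, genMap, so_mul]
    congr 1; exact Subtype.ext (W.sc i j h (by omega))
  | t_mul g h' j =>
    simp only [map_mul, hl, genMap, so_mul]
    congr 1; exact Subtype.ext (W.tm g h' j j.2)
  | t_one j =>
    simp only [map_one, hl, genMap]
    rw [← so_one]; congr 1; exact Subtype.ext (W.t1 j j.2)
  | tt_comm g h' j l h =>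
    simp only [map_mul, hl, genMap, so_mul]
    congr 1; exact Subtype.ext (W.tt g h' j l j.2 l.2 (fun a => h (Fin.ext a)))
  | st_comm g i l h =>
    simp only [map_mul, hl, genMap, so_mul]
    congr 1; exact Subtype.ext (W.st g i l (by omega) l.2 h.1 h.2)
  | st_slide g i j j' h h' =>
    obtain ⟨j, hj⟩ := j
    obtain ⟨j', hj'⟩ := j'
    simp only at h h'
    subst h h'
    simp only [map_mul, hl, genMap, so_mul]
    congr 1; exact Subtype.ext (W.sl g i (by omega))
  | st_slide' g i j j' h h' =>
    obtain ⟨j, hj⟩ := j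
    obtain ⟨j', hj'⟩ := j'
    simp only at h h'
    subst h h'
    simp only [map_mul, hl, genMap, so_mul]
    congr 1; exact Subtype.ext (W.sl' g i (by omega))
  | _ => simp [hl, genMap]

def rpi : GRAlg K G n e →ₐ[K] MonoidAlgebra K (Wr G n) :=
  RingQuot.liftAlgHom K ⟨FreeAlgebra.lift K (genMap K G n), fun {_ _} h => genMap_rel K G n e h⟩

theorem rpi_mk (x : GRGen n G) :
    rpi K G n e (RingQuot.mkAlgHom K (GRRel K G n e) (FreeAlgebra.ι K x)) = genMap K G n x := by
  rw [rpi, RingQuot.liftAlgHom_mkAlgHom_apply]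
  exact FreeAlgebra.lift_ι_apply _ _

theorem rpi_rS {i : ℕ} (h : i + 1 < n) :
    rpi K G n e (rS K G n e i) = so K (⟨sw i (i + 1), sw_mem (by omega) h⟩ : Wr G n) := by
  rw [rS_eq h]; exact rpi_mk K G n e _
theorem rpi_rP {i : ℕ} (h : i < n) : rpi K G n e (rP K G n e i) = 0 := by
  rw [rP_eq h]; exact rpi_mk K G n e _
theorem rpi_rT (g : G) {i : ℕ} (h : i < n) :
    rpi K G n e (rT K G n e g i) = so K (⟨tl g i, tl_mem g h⟩ : Wr G n) := by
  rw [rT_eq g h]; exact rpi_mk K G n e _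

theorem rpi_aug : (groupAug K (Wr G n)).comp (rpi K G n e) = GRaug K G n e := by
  refine AlgHom.ext fun a => ?_
  show groupAug K (Wr G n) (rpi K G n e a) = GRaug K G n e a
  induction a using GR_ind with
  | hc c => simp only [AlgHom.commutes]
  | ha a b h h' => simp only [map_add, h, h']
  | hm a b h h' => simp only [map_mul, h, h']
  | hs i h => rw [rpi_rS K G n e h, aug_so, aug_rS h]
  | hp i h => rw [rpi_rP K G n e h, map_zero, aug_rP h]
  | ht g i h => rw [rpi_rT K G n e g h, aug_so, aug_rT g h]

/-- the rook algebra and the group algebra have the same homology -/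
theorem rpi_iso (he : IsUnit e) (q : ℕ) : HEpi (MM.ofAlg (rpi K G n e) (rpi_aug K G n e)).hom q ∧
    HInj (MM.ofAlg (rpi K G n e) (rpi_aug K G n e)).hom q := by
  obtain ⟨e', he⟩ := he.exists_left_inv
  obtain ⟨ψ, hs, ht⟩ := exists_psi (rook_rels (K := K) (G := G) (n := n) (e := e))
  set z := rZ K G n e e' n with hz
  have hc : ∀ a, Commute a z := rZ_central
  have hzz : z * z = z := rZ_rZ he n le_rfl
  have hzP : ∀ j, j < n → z * rP K G n e j = 0 := fun j h => rZ_rP he n le_rfl h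
  have haz : GRaug K G n e z = 1 := map_rZ _ (fun j h => aug_rP h) n le_rfl
  have hpz : rpi K G n e z = 1 := map_rZ _ (fun j h => rpi_rP K G n e h) n le_rfl
  let Λ : MonoidAlgebra K (Wr G n) →ₐ[K] GRAlg K G n e := MonoidAlgebra.lift K _ (Wr G n) ψ
  have hΛ : ∀ w, Λ (so K w) = ψ w := fun w => by simp [Λ, so]
  have hpψ : ∀ w, rpi K G n e (ψ w) = so K w := fun w => by
    induction w using Wr_ind with
    | h1 => rw [map_one, map_one]; rfl
    | hm a b h h' => rw [map_mul, map_mul, h, h', so_mul]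
    | hs i h => rw [hs i h, rpi_rS K G n e h]
    | ht g i h => rw [ht g i h, rpi_rT K G n e g h]
  have hpΛ : (rpi K G n e).comp Λ = AlgHom.id K _ := by
    apply MonoidAlgebra.algHom_ext
    · intro w
      show rpi K G n e (Λ (so K w)) = so K w
      rw [hΛ, hpψ]
    · exact Subsingleton.elim _ _
  have hpΛ' : ∀ x, rpi K G n e (Λ x) = x := fun x => AlgHom.congr_fun hpΛ x
  have haug : ∀ a, groupAug K (Wr G n) (rpi K G n e a) = GRaug K G n e a := fun a =>
    AlgHom.congr_fun (rpi_aug K G n e) a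
  let Ψ : MM (groupAug K (Wr G n)) (GRaug K G n e) :=
    { f := (LinearMap.mulLeft K z).comp Λ.toLinearMap
      mul := fun a b => by
        show z * Λ (a * b) = z * Λ a * (z * Λ b)
        rw [map_mul, mul_assoc, ← mul_assoc (Λ a) z, (hc (Λ a)).eq, mul_assoc z, ← mul_assoc z z, hzz]
      aug := fun a => by
        show GRaug K G n e (z * Λ a) = _
        rw [map_mul, haz, one_mul, ← haug, hpΛ'] }
  have hΛp : ∀ a, z * Λ (rpi K G n e a) = z * a := fun a => by
    induction a using GR_ind with
    | hc c => simp only [AlgHom.commutes]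
    | ha a b h h' => simp only [map_add, mul_add, h, h']
    | hm a b h h' =>
      rw [map_mul, map_mul, ← mul_assoc, h, ← (hc a).eq, mul_assoc, h', ← mul_assoc, (hc a).eq,
        mul_assoc]
    | hs i h => rw [rpi_rS K G n e h, hΛ, hs i h]
    | hp i h => rw [rpi_rP K G n e h, map_zero, mul_zero, hzP i h]
    | ht g i h => rw [rpi_rT K G n e g h, hΛ, ht g i h]
  set pr := MM.ofAlg (rpi K G n e) (rpi_aug K G n e) with hpr
  have e1 : (pr.comp Ψ).hom = CxHom.id _ := by
    rw [← MM.hom_id]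
    congr 1
    have : (pr.comp Ψ).f = (MM.id (groupAug K (Wr G n))).f := by
      refine LinearMap.ext fun x => ?_
      show rpi K G n e (z * Λ x) = x
      rw [map_mul, hpz, one_mul, hpΛ']
    cases h1 : pr.comp Ψ
    cases h2 : MM.id (groupAug K (Wr G n))
    rw [h1, h2] at this
    congr 1
  have e2 : HEq (Ψ.comp pr).hom (MM.id (GRaug K G n e)).hom q :=
    MM.htpy (Ψ.comp pr) (MM.id _) z haz (fun a => by
      show a * z = z * (z * Λ (rpi K G n e a))
      rw [hΛp, ← mul_assoc, hzz, (hc a).eq]) q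
  rw [MM.hom_comp] at e1 e2
  rw [MM.hom_id] at e2
  exact ⟨HEpi.of_comp (f := Ψ.hom) (by rw [e1]; exact HEpi.id q),
    HInj.of_comp (g := Ψ.hom) (HInj.congr e2.symm (HInj.id q))⟩

theorem square : (rpi K G n e).comp (GRincl K G n e) =
    (wi K G (Nat.sub_le n 1)).comp (rpi K G (n - 1) e) := by
  apply RingQuot.ringQuot_ext'
  apply FreeAlgebra.hom_ext
  funext x
  have h1 : GRincl K G n e (RingQuot.mkAlgHom K (GRRel K G (n - 1) e) (FreeAlgebra.ι K x)) =
      RingQuot.mkAlgHom K (GRRel K G n e) (FreeAlgebra.ι K (GRGenMap G n x)) := by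
    simp [GRincl, RingQuot.liftAlgHom_mkAlgHom_apply, FreeAlgebra.lift_ι_apply]
  show rpi K G n e (GRincl K G n e (RingQuot.mkAlgHom K (GRRel K G (n - 1) e) (FreeAlgebra.ι K x))) =
    wi K G (Nat.sub_le n 1) (rpi K G (n - 1) e (RingQuot.mkAlgHom K (GRRel K G (n - 1) e) (FreeAlgebra.ι K x)))
  rw [h1, rpi_mk, rpi_mk]
  cases x with
  | s i => exact (wi_so K G (Nat.sub_le n 1) (ws G (n - 1) i)).symm
  | p i => exact (map_zero _).symm
  | t g i => exact (wi_so K G (Nat.sub_le n 1) (wt G (n - 1) g i)).symm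

theorem final (he : IsUnit e) (q : ℕ) (h : 2 * q + 2 ≤ n) : Function.Bijective
    (torMap K (GRaug K G (n - 1) e) (GRaug K G n e) (GRincl K G n e) (GRaug_incl K G n e) q) := by
  obtain ⟨a1, a2⟩ := rpi_iso K G n e he q
  obtain ⟨b1, b2⟩ := rpi_iso K G (n - 1) e he q
  obtain ⟨c1, c2⟩ := wi_stability K G q n h
  have sq : (MM.ofAlg (rpi K G n e) (rpi_aug K G n e)).hom.comp
      (MM.ofAlg (GRincl K G n e) (GRaug_incl K G n e)).hom =
      (MM.ofAlg (wi K G (Nat.sub_le n 1)) (wi_aug K G _)).hom.comp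
      (MM.ofAlg (rpi K G (n - 1) e) (rpi_aug K G (n - 1) e)).hom := by
    rw [← MM.hom_comp, ← MM.hom_comp]
    have : ∀ F F' : MM (GRaug K G (n - 1) e) (groupAug K (Wr G n)), F.f = F'.f → F.hom = F'.hom := by
      rintro ⟨f, _, _⟩ ⟨f', _, _⟩ h
      simp only at h
      subst h
      rfl
    apply this
    exact LinearMap.ext fun x => AlgHom.congr_fun (square K G n e) x
  apply torMap_bij
  · exact HEpi.of_comp_inj (by rw [sq]; exact HEpi.comp c1 b1) a2
  · exact HInj.of_comp (by rw [sq]; exact HInj.comp c2 b2)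

end
end GRP
end


/-- **Homological stability for `G`-equivariant rook algebras.**
Let `G` be a group, `k` a commutative `G`-ring, and `ε ∈ k` invertible.  The morphism
`Tor_q^{GR_{n-1}(ε)}(𝟙,𝟙) → Tor_q^{GR_n(ε)}(𝟙,𝟙)` induced by the inclusion
`GR_{n-1}(ε) → GR_n(ε)` is an isomorphism for `n ≥ 2q+2`. -/
theorem equivariant_rook_homological_stability (k G : Type) [CommRing k] [Group G]
    (ρ : G →* RingAut k) (ε : k) (hε : IsUnit ε) (n q : ℕ) (h : 2 * q + 2 ≤ n) :
    Function.Bijective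
      (torMap k (GRaug k G (n - 1) ε) (GRaug k G n ε) (GRincl k G n ε)
        (GRaug_incl k G n ε) q) := by
  exact GRP.final k G n ε hε q h
end
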